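/- For all integers α ≥ 1 and all integers n ≥ 0, d_5(7^{α+2}·n + λ_{α+2})·d_5(λ_α) ≡ d_5(7^α·n + λ_α)·d_5(λ_{α+2}) (mod 7^{⌊α/2⌋+2}), where λ_α = (1 + 7^α)/4 if α is odd and λ_α = (1 + 3·7^α)/4 if α is even. -/

import Mathlib

noncomputable section

/-- `J b = ∏_{k=1}^∞ (1 - q^{b·k})` as a formal power series with integer coefficients. -/
def J (b : ℕ) : PowerSeries ℤ :=
  PowerSeries.mk fun n =>
    PowerSeries.coeff n
      (∏ k ∈ Finset.range (n + 1), (1 - (PowerSeries.X : PowerSeries ℤ) ^ (b * (k + 1))))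

/-- `λ_β = (1 + 7^β)/4` if `β` is odd, `λ_β = (1 + 3·7^β)/4` if `β` is even
(both divisions are exact). -/
def lam (β : ℕ) : ℕ := if β % 2 = 1 then (1 + 7 ^ β) / 4 else (1 + 3 * 7 ^ β) / 4

/-!
Write `U s` for the operator that extracts the coefficients with index `≡ s` modulo `7`. The series
`∑ d₅(7^α n + λ_α) qⁿ` arise from `J₂⁵ / J₁¹⁶` by applying `U 2` and then alternately `U 5` and
`U 1`.

Modulo `7 ^ (l + 1)` the factors `(J₁⁷ / J₁(q⁷)) ^ 7 ^ l` and the corresponding powers of `J₂` are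
`1`, and multiplying by them turns `U s` into `U₇` acting on modular forms for `Γ₀(2)`. There `U₇`
agrees with the Hecke operator `T₇` modulo a high power of `7`, so it maps integral forms to
integral forms of the same weight, and these are polynomials in two generators. Since
`E₆ ≡ 1 (mod 7)`, forms whose weights differ by suitable multiples of powers of `7` can be compared,
and the iterated sections lie in two `7`-adic lattices of quotients of forms by powers of `√E₆`, one
for each parity of `α`.

The operator `U 1` maps the even lattice to the odd one, and `U 5` maps the odd lattice to
`ℤ x₀ + 7 · (even lattice)` for a single series `x₀`. Hence the `2 × 2` minors of the coefficients
gain a factor `7` every two steps. The first section `U 2 (J₂⁵ / J₁¹⁶)` lies in `7` times the odd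
lattice, which accounts for the remaining factor `49`.
-/

/-! ### Modular forms of level two as power series -/

section DiscSeries

open PowerSeries

lemma coeff_mul_mul_pow (x y : ℂ⟦X⟧) (z : ℂ) (n : ℕ) :
    coeff n (x * y) * z ^ n = ∑ p ∈ Finset.HasAntidiagonal.antidiagonal n,
      (coeff p.1 x * z ^ p.1) * (coeff p.2 y * z ^ p.2) := by
  rw [coeff_mul, Finset.sum_mul]
  refine Finset.sum_congr rfl fun p hp => ?_
  rw [← Finset.HasAntidiagonal.mem_antidiagonal.1 hp, pow_add]
  ring

lemma hasSum_coeff_C (c z : ℂ) : HasSum (fun n => coeff n (C c) * z ^ n) c := by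
  simpa using hasSum_single (f := fun n => coeff n (C c) * z ^ n) 0
    fun n hn => by simp [coeff_C, hn]

/-- The algebra of complex power series that converge on the open unit disc. -/
def discSeries : Subalgebra ℂ ℂ⟦X⟧ where
  carrier := {x | ∀ z : ℂ, ‖z‖ < 1 → Summable fun n => coeff n x * z ^ n}
  mul_mem' {x y} hx hy z hz := by
    simpa only [coeff_mul_mul_pow] using
      (summable_norm_sum_mul_antidiagonal_of_summable_norm (hx z hz).norm (hy z hz).norm).of_norm
  add_mem' hx hy z hz := by simpa [add_mul] using (hx z hz).add (hy z hz)
  algebraMap_mem' c z _ := (hasSum_coeff_C c z).summable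

/-- The value at `z` of a power series; it is the junk value `0` where the series diverges. -/
def discEval (x : ℂ⟦X⟧) (z : ℂ) : ℂ := ∑' n, coeff n x * z ^ n

variable {x y : ℂ⟦X⟧} {z : ℂ}

lemma hasSum_discEval (hx : x ∈ discSeries) (hz : ‖z‖ < 1) :
    HasSum (fun n => coeff n x * z ^ n) (discEval x z) :=
  (hx z hz).hasSum

lemma discEval_C (c z : ℂ) : discEval (C c) z = c := (hasSum_coeff_C c z).tsum_eq

lemma discEval_add (hx : x ∈ discSeries) (hy : y ∈ discSeries) (hz : ‖z‖ < 1) :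
    discEval (x + y) z = discEval x z + discEval y z := by
  simpa [discEval, add_mul] using (hx z hz).tsum_add (hy z hz)

lemma discEval_mul (hx : x ∈ discSeries) (hy : y ∈ discSeries) (hz : ‖z‖ < 1) :
    discEval (x * y) z = discEval x z * discEval y z := by
  simp only [discEval, coeff_mul_mul_pow]
  exact (tsum_mul_tsum_eq_tsum_sum_antidiagonal_of_summable_norm
    (hx z hz).norm (hy z hz).norm).symm

/-- Evaluation at a point of the unit disc, as a homomorphism on the convergent series. -/
def discEvalHom (hz : ‖z‖ < 1) : discSeries →ₐ[ℂ] ℂ where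
  toFun x := discEval x z
  map_one' := discEval_C 1 z
  map_mul' x y := discEval_mul x.2 y.2 hz
  map_zero' := by simpa using discEval_C 0 z
  map_add' x y := discEval_add x.2 y.2 hz
  commutes' c := discEval_C c z

lemma discEval_one (z : ℂ) : discEval 1 z = 1 := discEval_C 1 z

lemma discEval_smul (x : ℂ⟦X⟧) (c z : ℂ) : discEval (c • x) z = c * discEval x z := by
  simp [discEval, mul_assoc, tsum_mul_left]

lemma discEval_sub (hx : x ∈ discSeries) (hy : y ∈ discSeries) (hz : ‖z‖ < 1) :
    discEval (x - y) z = discEval x z - discEval y z :=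
  map_sub (discEvalHom hz) ⟨x, hx⟩ ⟨y, hy⟩

lemma discEval_pow (hx : x ∈ discSeries) (k : ℕ) (hz : ‖z‖ < 1) :
    discEval (x ^ k) z = discEval x z ^ k :=
  map_pow (discEvalHom hz) ⟨x, hx⟩ k

lemma discEval_prod {ι : Type*} (s : Finset ι) {f : ι → ℂ⟦X⟧} (hf : ∀ i, f i ∈ discSeries)
    (hz : ‖z‖ < 1) : discEval (∏ i ∈ s, f i) z = ∏ i ∈ s, discEval (f i) z := by
  let g (i : ι) : discSeries := ⟨f i, hf i⟩
  calc discEval (∏ i ∈ s, f i) z = discEvalHom hz (∏ i ∈ s, g i) := by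
        change _ = discEval (∏ i ∈ s, g i : discSeries) z
        simp [g]
    _ = ∏ i ∈ s, discEval (f i) z := map_prod _ _ _

lemma hasSum_coeff_X (z : ℂ) : HasSum (fun n => coeff n (X : ℂ⟦X⟧) * z ^ n) z := by
  simpa using hasSum_single (f := fun n => coeff n (X : ℂ⟦X⟧) * z ^ n) 1
    fun n hn => by simp [coeff_X, hn]

lemma X_mem_discSeries : (X : ℂ⟦X⟧) ∈ discSeries := fun z _ => (hasSum_coeff_X z).summable

lemma discEval_X (z : ℂ) : discEval X z = z := (hasSum_coeff_X z).tsum_eq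

lemma hasSum_expand (hx : x ∈ discSeries) (p : ℕ) (hp : p ≠ 0) (hz : ‖z‖ < 1) :
    HasSum (fun n => coeff n (expand p hp x) * z ^ n) (discEval x (z ^ p)) := by
  have hzp : ‖z ^ p‖ < 1 := by
    rw [norm_pow]
    exact pow_lt_one₀ (norm_nonneg _) hz hp
  have mul_injective : Function.Injective (fun n : ℕ => p * n) := mul_right_injective₀ hp
  rw [← mul_injective.hasSum_iff]
  · convert hasSum_discEval hx hzp using 1
    ext n
    simp [coeff_expand_mul, pow_mul]
  · intro n hn
    have hpn : ¬ p ∣ n := fun ⟨k, hk⟩ => hn ⟨k, hk.symm⟩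
    simp [coeff_expand_of_not_dvd p hp x hpn]

lemma expand_mem_discSeries (hx : x ∈ discSeries) (p : ℕ) (hp : p ≠ 0) :
    expand p hp x ∈ discSeries :=
  fun _ hz => (hasSum_expand hx p hp hz).summable

lemma discEval_expand (hx : x ∈ discSeries) (p : ℕ) (hp : p ≠ 0) (hz : ‖z‖ < 1) :
    discEval (expand p hp x) z = discEval x (z ^ p) :=
  (hasSum_expand hx p hp hz).tsum_eq

lemma hasFPowerSeriesOnBall_discEval (hx : x ∈ discSeries) :
    HasFPowerSeriesOnBall (discEval x)
      (FormalMultilinearSeries.ofScalars ℂ fun n => coeff n x) 0 1 where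
  r_le := by
    refine ENNReal.le_of_forall_nnreal_lt fun r hr => ?_
    apply FormalMultilinearSeries.le_radius_of_summable_norm
    have hr_norm : ‖((r : ℝ) : ℂ)‖ < 1 := by simpa using hr
    simpa using (hx _ hr_norm).norm
  r_pos := by simp
  hasSum {y} hy := by
    have hy_norm : ‖y‖ < 1 := by
      simpa [← Complex.dist_eq, enorm_eq_nnnorm, ← NNReal.coe_lt_coe] using hy
    simpa [mul_comm] using hasSum_discEval hx hy_norm

lemma differentiableOn_discEval (hx : x ∈ discSeries) :
    DifferentiableOn ℂ (discEval x) (Metric.ball 0 1) := by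
  simpa [← Metric.eball_ofReal] using (hasFPowerSeriesOnBall_discEval hx).differentiableOn

lemma differentiableAt_discEval (hx : x ∈ discSeries) (hz : ‖z‖ < 1) :
    DifferentiableAt ℂ (discEval x) z :=
  (differentiableOn_discEval hx).differentiableAt (Metric.isOpen_ball.mem_nhds (by simpa using hz))

lemma iteratedDeriv_discEval_zero (hx : x ∈ discSeries) (n : ℕ) :
    iteratedDeriv n (discEval x) 0 = n.factorial * coeff n x := by
  have hseries := hasFPowerSeriesOnBall_discEval hx
  have hcoeff := congrArg (fun p => p.coeff n)
    (hseries.hasFPowerSeriesAt.eq_formalMultilinearSeries hseries.analyticAt.hasFPowerSeriesAt)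
  simp only [FormalMultilinearSeries.coeff_ofScalars] at hcoeff
  rw [hcoeff, mul_div_cancel₀ _ (Nat.cast_ne_zero.2 n.factorial_ne_zero)]

lemma norm_coeff_mul_pow_le (hx : x ∈ discSeries) {r B : ℝ} (hr : 0 < r) (hr1 : r < 1)
    (hB : ∀ z : ℂ, ‖z‖ = r → ‖discEval x z‖ ≤ B) (n : ℕ) : ‖coeff n x‖ * r ^ n ≤ B := by
  have hcont : DiffContOnCl ℂ (discEval x) (Metric.ball 0 r) := by
    apply DifferentiableOn.diffContOnCl
    rw [closure_ball _ hr.ne']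
    exact (differentiableOn_discEval hx).mono (Metric.closedBall_subset_ball hr1)
  have hcauchy := Complex.norm_iteratedDeriv_le_of_forall_mem_sphere_norm_le n hr hcont
    (C := B) (by simpa using hB)
  rw [iteratedDeriv_discEval_zero hx, norm_mul, Complex.norm_natCast, le_div_iff₀ (pow_pos hr n),
    mul_assoc] at hcauchy
  exact le_of_mul_le_mul_left hcauchy (by exact_mod_cast n.factorial_pos)

lemma eq_of_discEval_eq (hx : x ∈ discSeries) (hy : y ∈ discSeries)
    (h : ∀ z : ℂ, ‖z‖ < 1 → discEval x z = discEval y z) : x = y := by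
  ext n
  have hbound := norm_coeff_mul_pow_le (sub_mem hx hy) (r := 1 / 2) (B := 0) (by norm_num)
    (by norm_num) (fun z hz => by
      have hz1 : ‖z‖ < 1 := by rw [hz]; norm_num
      rw [discEval_sub hx hy hz1, h z hz1, sub_self, norm_zero]) n
  have hzero : ‖coeff n (x - y)‖ ≤ 0 := le_of_mul_le_mul_right (by simpa using hbound)
    (show (0 : ℝ) < (1 / 2) ^ n by positivity)
  simpa [sub_eq_zero] using hzero

lemma exists_discSeries_eq {f : ℂ → ℂ} (hf : DifferentiableOn ℂ f (Metric.ball 0 1)) :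
    ∃ x ∈ discSeries, ∀ z : ℂ, ‖z‖ < 1 → discEval x z = f z := by
  let taylor : ℂ⟦X⟧ := PowerSeries.mk fun n => (n.factorial : ℂ)⁻¹ * iteratedDeriv n f 0
  have htaylor (z : ℂ) (hz : ‖z‖ < 1) : HasSum (fun n => coeff n taylor * z ^ n) (f z) := by
    simpa [taylor, mul_comm, mul_left_comm, mul_assoc] using
      Complex.hasSum_taylorSeries_on_ball (c := 0) (r := 1) (z := z) hf (by simpa using hz)
  exact ⟨taylor, fun z hz => (htaylor z hz).summable, fun z hz => (htaylor z hz).tsum_eq⟩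

lemma mem_discSeries_of_X_mul_mem (hx : X * x ∈ discSeries) : x ∈ discSeries := by
  intro z hz
  rcases eq_or_ne z 0 with rfl | hz0
  · exact summable_of_ne_finset_zero (s := {0}) fun n hn => by
      simp [Finset.notMem_singleton.1 hn]
  · refine (((summable_nat_add_iff 1).2 (hx z hz)).mul_right z⁻¹).congr fun n => ?_
    rw [coeff_succ_X_mul, pow_succ]
    field_simp

lemma mem_discSeries_of_X_pow_mul_mem (n : ℕ) (hx : X ^ n * x ∈ discSeries) : x ∈ discSeries := by
  induction n with
  | zero => simpa using hx
  | succ n ih => exact ih (mem_discSeries_of_X_mul_mem (by rwa [← mul_assoc, ← pow_succ']))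

lemma mem_discSeries_of_mul_eq_one (hx : x ∈ discSeries)
    (hne : ∀ z : ℂ, ‖z‖ < 1 → discEval x z ≠ 0) (hxy : x * y = 1) : y ∈ discSeries := by
  obtain ⟨w, hw, hw_eval⟩ := exists_discSeries_eq (f := fun z => (discEval x z)⁻¹)
    ((differentiableOn_discEval hx).inv fun z hz => hne z (by simpa using hz))
  have hxw : x * w = 1 := eq_of_discEval_eq (mul_mem hx hw) (one_mem _) fun z hz => by
    rw [discEval_mul hx hw hz, hw_eval z hz, discEval_one, mul_inv_cancel₀ (hne z hz)]
  rwa [← left_inv_eq_right_inv (by rwa [mul_comm]) hxy]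

lemma exists_discSeries_eq_deriv (hx : x ∈ discSeries) :
    ∃ y ∈ discSeries, (∀ z : ℂ, ‖z‖ < 1 → discEval y z = deriv (discEval x) z) ∧
      d⁄dX ℂ x = y := by
  obtain ⟨y, hy, hy_eval⟩ :=
    exists_discSeries_eq ((differentiableOn_discEval hx).deriv Metric.isOpen_ball)
  refine ⟨y, hy, hy_eval, ?_⟩
  ext n
  have hderiv : iteratedDeriv n (discEval y) 0 = iteratedDeriv (n + 1) (discEval x) 0 := by
    rw [iteratedDeriv_succ']
    apply Filter.EventuallyEq.iteratedDeriv_eq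
    filter_upwards [Metric.ball_mem_nhds (0 : ℂ) one_pos] with z hz
    exact hy_eval z (by simpa using hz)
  rw [iteratedDeriv_discEval_zero hy, iteratedDeriv_discEval_zero hx, Nat.factorial_succ,
    Nat.cast_mul] at hderiv
  apply mul_left_cancel₀ (Nat.cast_ne_zero.2 n.factorial_ne_zero : (n.factorial : ℂ) ≠ 0)
  rw [hderiv, coeff_derivative]
  push_cast
  ring

lemma derivative_mem_discSeries (hx : x ∈ discSeries) : d⁄dX ℂ x ∈ discSeries := by
  obtain ⟨y, hy, -, rfl⟩ := exists_discSeries_eq_deriv hx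
  exact hy

lemma hasDerivAt_discEval (hx : x ∈ discSeries) (hz : ‖z‖ < 1) :
    HasDerivAt (discEval x) (discEval (d⁄dX ℂ x) z) z := by
  obtain ⟨y, -, hy_eval, rfl⟩ := exists_discSeries_eq_deriv hx
  rw [hy_eval z hz]
  exact (differentiableAt_discEval hx hz).hasDerivAt

end DiscSeries

section EulerProduct

open PowerSeries Filter

/-- An integral power series, viewed as a complex one. -/
def toComplex : ℤ⟦X⟧ →+* ℂ⟦X⟧ := PowerSeries.map (Int.castRingHom ℂ)

lemma coeff_toComplex (n : ℕ) (x : ℤ⟦X⟧) : coeff n (toComplex x) = ((coeff n x : ℤ) : ℂ) := by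
  simp [toComplex]

lemma toComplex_injective : Function.Injective toComplex :=
  PowerSeries.map_injective _ (RingHom.injective_int _)

lemma toComplex_X : toComplex X = X := by simp [toComplex]

lemma toComplex_zsmul (c : ℤ) (x : ℤ⟦X⟧) : toComplex (c • x) = (c : ℂ) • toComplex x := by
  ext n
  rw [coeff_toComplex, coeff_smul, coeff_toComplex, map_zsmul, smul_eq_mul, smul_eq_mul,
    Int.cast_mul]

lemma toComplex_expand (p : ℕ) (hp : p ≠ 0) (x : ℤ⟦X⟧) :
    toComplex (expand p hp x) = expand p hp (toComplex x) :=
  map_expand _ _ _ _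

lemma toComplex_derivative (x : ℤ⟦X⟧) : toComplex (d⁄dX ℤ x) = d⁄dX ℂ (toComplex x) := by
  ext n
  simp [coeff_toComplex, coeff_derivative]

lemma coeff_prod_one_sub_X_pow {b n N : ℕ} (hb : b ≠ 0) (hN : n + 1 ≤ N) :
    coeff n (∏ k ∈ Finset.range N, (1 - (X : ℤ⟦X⟧) ^ (b * (k + 1)))) = coeff n (J b) := by
  induction N, hN using Nat.le_induction with
  | base => simp [J]
  | succ N hN ih =>
    have hexp : n < b * (N + 1) := by nlinarith [Nat.pos_of_ne_zero hb]
    rw [Finset.prod_range_succ, mul_sub, mul_one, map_sub, ih, coeff_mul_X_pow',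
      if_neg hexp.not_ge, sub_zero]

lemma J_eq_expand (b : ℕ) (hb : b ≠ 0) : J b = expand b hb (J 1) := by
  ext n
  have hprod : ∏ k ∈ Finset.range (n + 1), (1 - (X : ℤ⟦X⟧) ^ (b * (k + 1))) =
      expand b hb (∏ k ∈ Finset.range (n + 1), (1 - X ^ (1 * (k + 1)))) := by
    simp [map_prod, pow_mul]
  rw [← coeff_prod_one_sub_X_pow hb le_rfl, hprod, coeff_expand, coeff_expand]
  split_ifs
  · exact coeff_prod_one_sub_X_pow one_ne_zero (Nat.succ_le_succ (Nat.div_le_self n b))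
  · rfl

lemma constantCoeff_J {b : ℕ} (hb : b ≠ 0) : constantCoeff (J b) = 1 := by
  rw [← coeff_zero_eq_constantCoeff_apply, J, coeff_mk]
  simp [hb]

lemma coeff_eq_of_tendstoUniformlyOn_sphere {x : ℂ⟦X⟧} {P : ℕ → ℂ⟦X⟧} {r : ℝ} {n : ℕ} {c : ℂ}
    (hx : x ∈ discSeries) (hP : ∀ N, P N ∈ discSeries) (hr : 0 < r) (hr1 : r < 1)
    (hlim : TendstoUniformlyOn (fun N => discEval (P N)) (discEval x) atTop (Metric.sphere 0 r))
    (hc : ∀ᶠ N in atTop, coeff n (P N) = c) : c = coeff n x := by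
  rw [Metric.tendstoUniformlyOn_iff] at hlim
  have hsmall (ε : ℝ) (hε : 0 < ε) : ‖c - coeff n x‖ * r ^ n ≤ 0 + ε := by
    obtain ⟨N, hNlim, hNc⟩ := ((hlim ε hε).and hc).exists
    have hcauchy := norm_coeff_mul_pow_le (sub_mem (hP N) hx) (B := ε) hr hr1 (fun z hz => by
      rw [discEval_sub (hP N) hx (hz.trans_lt hr1), ← dist_eq_norm, dist_comm]
      exact (hNlim z (by simpa using hz)).le) n
    rwa [map_sub, hNc, ← zero_add ε] at hcauchy
  have hzero : ‖c - coeff n x‖ ≤ 0 :=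
    le_of_mul_le_mul_right (by simpa using le_of_forall_pos_le_add hsmall) (pow_pos hr n)
  exact sub_eq_zero.1 (norm_le_zero_iff.1 hzero)

lemma tendstoUniformlyOn_prod_one_sub_pow {r : ℝ} (hr : r < 1) :
    TendstoUniformlyOn (fun N (z : ℂ) => ∏ k ∈ Finset.range N, (1 - z ^ (k + 1)))
      (fun z => ∏' n, (1 - z ^ (n + 1))) atTop (Metric.sphere 0 r) := by
  have hlim := (tendstoLocallyUniformlyOn_iff_forall_isCompact Metric.isOpen_ball).1
    ModularForm.multipliableLocallyUniformlyOn_one_sub_pow.hasProdLocallyUniformlyOn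
    (Metric.sphere (0 : ℂ) r) (Metric.sphere_subset_ball hr) (isCompact_sphere _ _)
  rw [Metric.tendstoUniformlyOn_iff] at hlim ⊢
  exact fun ε hε => tendsto_finset_range.eventually (hlim ε hε)

lemma toComplex_J_one_eq_of_discEval {x : ℂ⟦X⟧} (hx : x ∈ discSeries)
    (hx_eval : ∀ z : ℂ, ‖z‖ < 1 → discEval x z = ∏' n, (1 - z ^ (n + 1))) :
    toComplex (J 1) = x := by
  let P (N : ℕ) : ℂ⟦X⟧ := ∏ k ∈ Finset.range N, (1 - X ^ (k + 1))
  have hfactor (k : ℕ) : (1 - X ^ (k + 1) : ℂ⟦X⟧) ∈ discSeries :=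
    sub_mem (one_mem _) (pow_mem X_mem_discSeries _)
  have hP_eval (N : ℕ) (z : ℂ) (hz : ‖z‖ < 1) :
      discEval (P N) z = ∏ k ∈ Finset.range N, (1 - z ^ (k + 1)) := by
    rw [discEval_prod _ hfactor hz]
    refine Finset.prod_congr rfl fun k _ => ?_
    rw [discEval_sub (one_mem _) (pow_mem X_mem_discSeries _) hz, discEval_one,
      discEval_pow X_mem_discSeries _ hz, discEval_X]
  have hsphere {z : ℂ} (hz : z ∈ Metric.sphere (0 : ℂ) (1 / 2)) : ‖z‖ < 1 := by
    rw [mem_sphere_zero_iff_norm.1 hz]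
    norm_num
  have hlim : TendstoUniformlyOn (fun N => discEval (P N)) (discEval x) atTop
      (Metric.sphere 0 (1 / 2)) :=
    ((tendstoUniformlyOn_prod_one_sub_pow (by norm_num)).congr
      (.of_forall fun N z hz => (hP_eval N z (hsphere hz)).symm)).congr_right
      fun z hz => (hx_eval z (hsphere hz)).symm
  ext n
  refine coeff_eq_of_tendstoUniformlyOn_sphere hx (fun N => prod_mem fun k _ => hfactor k)
    (by norm_num) (by norm_num) hlim ?_
  filter_upwards [eventually_ge_atTop (n + 1)] with N hN
  rw [coeff_toComplex, ← coeff_prod_one_sub_X_pow one_ne_zero hN, ← coeff_toComplex]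
  simp [map_prod, toComplex_X]

lemma toComplex_J_one_mem_and_discEval : toComplex (J 1) ∈ discSeries ∧
    ∀ z : ℂ, ‖z‖ < 1 → discEval (toComplex (J 1)) z = ∏' n, (1 - z ^ (n + 1)) := by
  obtain ⟨x, hx, hx_eval⟩ := exists_discSeries_eq ModularForm.differentiableOn_tprod_one_sub_pow
  rw [toComplex_J_one_eq_of_discEval hx hx_eval]
  exact ⟨hx, hx_eval⟩

variable {b : ℕ} {z : ℂ}

lemma norm_pow_lt_one (hb : b ≠ 0) (hz : ‖z‖ < 1) : ‖z ^ b‖ < 1 := by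
  rw [norm_pow]
  exact pow_lt_one₀ (norm_nonneg _) hz hb

lemma toComplex_J_mem (hb : b ≠ 0) : toComplex (J b) ∈ discSeries := by
  rw [J_eq_expand b hb, toComplex_expand]
  exact expand_mem_discSeries toComplex_J_one_mem_and_discEval.1 b hb

lemma discEval_J (hb : b ≠ 0) (hz : ‖z‖ < 1) :
    discEval (toComplex (J b)) z = ∏' n, (1 - (z ^ b) ^ (n + 1)) := by
  rw [J_eq_expand b hb, toComplex_expand,
    discEval_expand toComplex_J_one_mem_and_discEval.1 b hb hz,
    toComplex_J_one_mem_and_discEval.2 _ (norm_pow_lt_one hb hz)]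

lemma tprod_one_sub_pow_ne_zero (hz : ‖z‖ < 1) : ∏' n : ℕ, (1 - z ^ (n + 1)) ≠ 0 := by
  have hfactor (n : ℕ) : 1 + -z ^ (n + 1) ≠ 0 := fun h => by
    have hlt := norm_pow_lt_one n.succ_ne_zero hz
    rw [show z ^ (n + 1) = 1 by linear_combination -h, norm_one] at hlt
    exact lt_irrefl _ hlt
  have hsum : Summable fun n : ℕ => ‖-z ^ (n + 1)‖ := by
    simpa using (summable_nat_add_iff 1).2 (summable_geometric_of_lt_one (norm_nonneg z) hz)
  simpa [sub_eq_add_neg] using tprod_one_add_ne_zero_of_summable hfactor hsum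

lemma discEval_J_ne_zero (hb : b ≠ 0) (hz : ‖z‖ < 1) : discEval (toComplex (J b)) z ≠ 0 := by
  rw [discEval_J hb hz]
  exact tprod_one_sub_pow_ne_zero (norm_pow_lt_one hb hz)

/-- The inverse `1 / J_b` of the Euler product, for `b ≠ 0`. -/
def invJ (b : ℕ) : ℤ⟦X⟧ := invOfUnit (J b) 1

lemma J_mul_invJ (hb : b ≠ 0) : J b * invJ b = 1 :=
  mul_invOfUnit _ _ (by simpa using constantCoeff_J hb)

lemma constantCoeff_invJ (hb : b ≠ 0) : constantCoeff (invJ b) = 1 := by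
  simpa [constantCoeff_J hb] using congrArg constantCoeff (J_mul_invJ hb)

lemma toComplex_J_mul_invJ (hb : b ≠ 0) : toComplex (J b) * toComplex (invJ b) = 1 := by
  rw [← map_mul, J_mul_invJ hb, map_one]

lemma toComplex_invJ_mem (hb : b ≠ 0) : toComplex (invJ b) ∈ discSeries :=
  mem_discSeries_of_mul_eq_one (toComplex_J_mem hb) (fun _ => discEval_J_ne_zero hb)
    (toComplex_J_mul_invJ hb)

lemma discEval_invJ (hb : b ≠ 0) (hz : ‖z‖ < 1) :
    discEval (toComplex (invJ b)) z = (discEval (toComplex (J b)) z)⁻¹ := by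
  refine eq_inv_of_mul_eq_one_right ?_
  rw [← discEval_mul (toComplex_J_mem hb) (toComplex_invJ_mem hb) hz, toComplex_J_mul_invJ hb,
    discEval_one]

end EulerProduct

section LevelTwoForms

open PowerSeries

variable {z : ℂ}

/-- The `q`-expansion of `η(2τ)^16 / η(τ)^8`, a form of weight 4 on `Γ₀(2)`. -/
def formD : ℤ⟦X⟧ := X * (J 2 ^ 16 * invJ 1 ^ 8)

/-- The `q`-expansion of `η(τ)^16 / η(2τ)^8`, the image of `formD` under the Fricke involution up
to a constant. -/
def formG : ℤ⟦X⟧ := J 1 ^ 16 * invJ 2 ^ 8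

/-- The `q`-expansion of `2 E₂(2τ) - E₂(τ)`, a form of weight 2 on `Γ₀(2)`, written as the
logarithmic derivative of `q (J_2 / J_1)^24`. -/
def formE : ℤ⟦X⟧ := 1 + 24 * (X * (d⁄dX ℤ (J 2) * invJ 2 - d⁄dX ℤ (J 1) * invJ 1))

lemma toComplex_etaQuotient_mem {a b : ℕ} (ha : a ≠ 0) (hb : b ≠ 0) (k l : ℕ) :
    toComplex (J a ^ k * invJ b ^ l) ∈ discSeries := by
  rw [map_mul, map_pow, map_pow]
  exact mul_mem (pow_mem (toComplex_J_mem ha) _) (pow_mem (toComplex_invJ_mem hb) _)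

lemma discEval_etaQuotient {a b : ℕ} (ha : a ≠ 0) (hb : b ≠ 0) (k l : ℕ) (hz : ‖z‖ < 1) :
    discEval (toComplex (J a ^ k * invJ b ^ l)) z =
      discEval (toComplex (J a)) z ^ k / discEval (toComplex (J b)) z ^ l := by
  rw [map_mul, map_pow, map_pow, discEval_mul (pow_mem (toComplex_J_mem ha) _)
    (pow_mem (toComplex_invJ_mem hb) _) hz, discEval_pow (toComplex_J_mem ha) _ hz,
    discEval_pow (toComplex_invJ_mem hb) _ hz, discEval_invJ hb hz, inv_pow, div_eq_mul_inv]

lemma toComplex_formD_mem : toComplex formD ∈ discSeries := by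
  rw [formD, map_mul, toComplex_X]
  exact mul_mem X_mem_discSeries (toComplex_etaQuotient_mem two_ne_zero one_ne_zero _ _)

lemma toComplex_formG_mem : toComplex formG ∈ discSeries :=
  toComplex_etaQuotient_mem one_ne_zero two_ne_zero _ _

lemma discEval_formD (hz : ‖z‖ < 1) : discEval (toComplex formD) z =
    z * (discEval (toComplex (J 2)) z ^ 16 / discEval (toComplex (J 1)) z ^ 8) := by
  rw [formD, map_mul, toComplex_X, discEval_mul X_mem_discSeries
    (toComplex_etaQuotient_mem two_ne_zero one_ne_zero _ _) hz, discEval_X,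
    discEval_etaQuotient two_ne_zero one_ne_zero _ _ hz]

lemma discEval_formG (hz : ‖z‖ < 1) : discEval (toComplex formG) z =
    discEval (toComplex (J 1)) z ^ 16 / discEval (toComplex (J 2)) z ^ 8 :=
  discEval_etaQuotient one_ne_zero two_ne_zero _ _ hz

lemma toComplex_formE : toComplex formE = 1 + (24 : ℂ) • (X *
    (d⁄dX ℂ (toComplex (J 2)) * toComplex (invJ 2) -
      d⁄dX ℂ (toComplex (J 1)) * toComplex (invJ 1))) := by
  have hcast : toComplex 24 = C (24 : ℂ) := by rw [map_ofNat, ← map_ofNat C 24]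
  simp only [formE, map_add, map_mul, map_sub, toComplex_X, toComplex_derivative, map_one, hcast,
    smul_eq_C_mul]

lemma toComplex_logDeriv_mem {b : ℕ} (hb : b ≠ 0) :
    d⁄dX ℂ (toComplex (J b)) * toComplex (invJ b) ∈ discSeries :=
  mul_mem (derivative_mem_discSeries (toComplex_J_mem hb)) (toComplex_invJ_mem hb)

lemma discEval_logDeriv {b : ℕ} (hb : b ≠ 0) (hz : ‖z‖ < 1) :
    discEval (d⁄dX ℂ (toComplex (J b)) * toComplex (invJ b)) z =
      logDeriv (discEval (toComplex (J b))) z := by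
  rw [discEval_mul (derivative_mem_discSeries (toComplex_J_mem hb)) (toComplex_invJ_mem hb) hz,
    discEval_invJ hb hz, logDeriv_apply, (hasDerivAt_discEval (toComplex_J_mem hb) hz).deriv,
    div_eq_mul_inv]

lemma toComplex_formE_mem : toComplex formE ∈ discSeries := by
  rw [toComplex_formE]
  exact add_mem (one_mem _) (discSeries.smul_mem (mul_mem X_mem_discSeries
    (sub_mem (toComplex_logDeriv_mem two_ne_zero) (toComplex_logDeriv_mem one_ne_zero))) _)

lemma discEval_formE (hz : ‖z‖ < 1) : discEval (toComplex formE) z = 1 + 24 *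
    (z * (logDeriv (discEval (toComplex (J 2))) z - logDeriv (discEval (toComplex (J 1))) z)) := by
  have hsub := sub_mem (toComplex_logDeriv_mem two_ne_zero) (toComplex_logDeriv_mem one_ne_zero)
  have hmul := mul_mem X_mem_discSeries hsub
  rw [toComplex_formE, discEval_add (one_mem _) (discSeries.smul_mem hmul _) hz, discEval_one,
    discEval_smul, discEval_mul X_mem_discSeries hsub hz, discEval_X,
    discEval_sub (toComplex_logDeriv_mem two_ne_zero) (toComplex_logDeriv_mem one_ne_zero) hz,
    discEval_logDeriv two_ne_zero hz, discEval_logDeriv one_ne_zero hz]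

lemma constantCoeff_formE : constantCoeff formE = 1 := by simp [formE]

end LevelTwoForms

section Fricke

open PowerSeries ModularForm

/-- The nome `q = exp(2πiτ)`. -/
def nome (τ : ℂ) : ℂ := Complex.exp (2 * Real.pi * Complex.I * τ)

/-- The Fricke involution `τ ↦ -1 / (2τ)` of level 2. -/
def fricke (τ : ℂ) : ℂ := -1 / (2 * τ)

variable {τ : ℂ}

lemma norm_nome (τ : ℂ) : ‖nome τ‖ = Real.exp (-2 * Real.pi * τ.im) := by
  simp [nome, Complex.norm_exp]

lemma norm_nome_lt_one (hτ : 0 < τ.im) : ‖nome τ‖ < 1 := by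
  rw [norm_nome, Real.exp_lt_one_iff]
  nlinarith [mul_pos Real.pi_pos hτ]

lemma nome_add_intCast (τ : ℂ) (n : ℤ) : nome (τ + n) = nome τ := by
  rw [nome, nome, mul_add, Complex.exp_add, mul_comm _ (n : ℂ), Complex.exp_int_mul_two_pi_mul_I,
    mul_one]

lemma nome_natCast_mul (n : ℕ) (τ : ℂ) : nome (n * τ) = nome τ ^ n := by
  rw [nome, nome, ← Complex.exp_nat_mul, mul_left_comm]

lemma nome_ne_zero (τ : ℂ) : nome τ ≠ 0 := Complex.exp_ne_zero _

lemma exists_nome_eq {z : ℂ} (hz0 : z ≠ 0) (hz : ‖z‖ < 1) : ∃ τ : ℂ, 0 < τ.im ∧ nome τ = z := by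
  have hnome : nome (Complex.log z / (2 * Real.pi * Complex.I)) = z := by
    rw [nome, mul_div_cancel₀ _ Complex.two_pi_I_ne_zero, Complex.exp_log hz0]
  refine ⟨_, ?_, hnome⟩
  rw [← hnome, norm_nome, Real.exp_lt_one_iff] at hz
  by_contra! him
  nlinarith [Real.pi_pos]

lemma hasDerivAt_nome (τ : ℂ) : HasDerivAt nome (2 * Real.pi * Complex.I * nome τ) τ := by
  refine ((hasDerivAt_id τ).const_mul (2 * Real.pi * Complex.I)).cexp.congr_deriv ?_
  simp [nome, mul_comm]

lemma ne_zero_of_im_pos (hτ : 0 < τ.im) : τ ≠ 0 := by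
  rintro rfl
  simp at hτ

lemma im_fricke (τ : ℂ) : (fricke τ).im = τ.im / (2 * Complex.normSq τ) := by
  rw [fricke, neg_div, Complex.neg_im, one_div, Complex.inv_im]
  simp only [Complex.mul_im, Complex.re_ofNat, Complex.im_ofNat, zero_mul, add_zero, map_mul,
    Complex.normSq_ofNat, neg_div, neg_neg]
  field_simp

lemma im_fricke_pos (hτ : 0 < τ.im) : 0 < (fricke τ).im := by
  rw [im_fricke]
  have hnorm := Complex.normSq_pos.2 (ne_zero_of_im_pos hτ)
  positivity

lemma fricke_fricke (hτ : 0 < τ.im) : fricke (fricke τ) = τ := by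
  have hτ0 := ne_zero_of_im_pos hτ
  rw [fricke, fricke]
  field_simp

lemma hasDerivAt_fricke (hτ : 0 < τ.im) : HasDerivAt fricke (1 / (2 * τ ^ 2)) τ := by
  have hτ0 := ne_zero_of_im_pos hτ
  have hderiv := (hasDerivAt_const τ (-1 : ℂ)).div ((hasDerivAt_id τ).const_mul 2)
    (mul_ne_zero two_ne_zero hτ0)
  refine hderiv.congr_deriv ?_
  simp only [id]
  field_simp
  ring

lemma qParam_pow_eq_nome (τ : ℂ) : Function.Periodic.qParam 24 τ ^ 24 = nome τ := by
  rw [Function.Periodic.qParam, ← Complex.exp_nat_mul, nome]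
  congr 1
  push_cast
  ring

lemma qParam_two_mul (τ : ℂ) :
    Function.Periodic.qParam 24 (2 * τ) = Function.Periodic.qParam 24 τ ^ 2 := by
  rw [Function.Periodic.qParam, Function.Periodic.qParam, ← Complex.exp_nat_mul]
  congr 1
  push_cast
  ring

lemma eta_natCast_mul {b : ℕ} (hb : b ≠ 0) (hτ : 0 < τ.im) :
    eta (b * τ) = Function.Periodic.qParam 24 (b * τ) * discEval (toComplex (J b)) (nome τ) := by
  rw [eta, discEval_J hb (norm_nome_lt_one hτ), ← nome_natCast_mul]
  simp_rw [eta_q_eq_pow]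
  rfl

lemma eta_eq_discEval (hτ : 0 < τ.im) :
    eta τ = Function.Periodic.qParam 24 τ * discEval (toComplex (J 1)) (nome τ) := by
  simpa using eta_natCast_mul one_ne_zero hτ

lemma eta_two_mul_eq_discEval (hτ : 0 < τ.im) : eta (2 * τ) =
    Function.Periodic.qParam 24 τ ^ 2 * discEval (toComplex (J 2)) (nome τ) := by
  rw [← qParam_two_mul]
  simpa using eta_natCast_mul two_ne_zero hτ

lemma discEval_formD_nome (hτ : 0 < τ.im) :
    discEval (toComplex formD) (nome τ) = eta (2 * τ) ^ 16 / eta τ ^ 8 := by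
  have hq : Function.Periodic.qParam 24 τ ≠ 0 := Complex.exp_ne_zero _
  rw [discEval_formD (norm_nome_lt_one hτ), eta_eq_discEval hτ, eta_two_mul_eq_discEval hτ,
    ← qParam_pow_eq_nome]
  field_simp

lemma discEval_formG_nome (hτ : 0 < τ.im) :
    discEval (toComplex formG) (nome τ) = eta τ ^ 16 / eta (2 * τ) ^ 8 := by
  have hJ := discEval_J_ne_zero two_ne_zero (norm_nome_lt_one hτ)
  have hq : Function.Periodic.qParam 24 τ ≠ 0 := Complex.exp_ne_zero _
  rw [discEval_formG (norm_nome_lt_one hτ), eta_eq_discEval hτ, eta_two_mul_eq_discEval hτ]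
  field_simp

lemma eta_ne_zero_of_im_pos (hτ : 0 < τ.im) : eta τ ≠ 0 :=
  eta_ne_zero (by simpa [UpperHalfPlane.upperHalfPlaneSet] using hτ)

lemma discEval_formD_nome_ne_zero (hτ : 0 < τ.im) :
    discEval (toComplex formD) (nome τ) ≠ 0 := by
  rw [discEval_formD_nome hτ]
  exact div_ne_zero (pow_ne_zero _ (eta_ne_zero_of_im_pos (by simpa using hτ)))
    (pow_ne_zero _ (eta_ne_zero_of_im_pos hτ))

lemma discEval_formG_nome_ne_zero (hτ : 0 < τ.im) :
    discEval (toComplex formG) (nome τ) ≠ 0 := by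
  rw [discEval_formG_nome hτ]
  exact div_ne_zero (pow_ne_zero _ (eta_ne_zero_of_im_pos hτ))
    (pow_ne_zero _ (eta_ne_zero_of_im_pos (by simpa using hτ)))

lemma sqrt_pow_eight (z : ℂ) : z.sqrt ^ 8 = z ^ 4 := by
  have hsq : z.sqrt ^ 2 = z := by
    simp [Complex.sqrt]
  rw [show 8 = 2 * 4 from rfl, pow_mul, hsq]

lemma eta_neg_one_div_pow_eight (hτ : 0 < τ.im) : eta (-1 / τ) ^ 8 = τ ^ 4 * eta τ ^ 8 := by
  have heta := eta_comp_eq_csqrt_I_inv (x := τ) hτ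
  simp only [Function.comp, Pi.smul_apply, Pi.mul_apply, smul_eq_mul] at heta
  rw [heta, mul_pow, mul_pow, inv_pow, sqrt_pow_eight, sqrt_pow_eight]
  simp

lemma eta_fricke_pow_eight (hτ : 0 < τ.im) :
    eta (fricke τ) ^ 8 = 16 * τ ^ 4 * eta (2 * τ) ^ 8 := by
  rw [fricke, eta_neg_one_div_pow_eight (by simpa using hτ)]
  ring

lemma eta_two_mul_fricke_pow_eight (hτ : 0 < τ.im) :
    eta (2 * fricke τ) ^ 8 = τ ^ 4 * eta τ ^ 8 := by
  have hτ0 := ne_zero_of_im_pos hτ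
  rw [← eta_neg_one_div_pow_eight hτ, fricke]
  congr 2
  field_simp

lemma discEval_formD_fricke (hτ : 0 < τ.im) : discEval (toComplex formD) (nome (fricke τ)) =
    τ ^ 4 / 16 * discEval (toComplex formG) (nome τ) := by
  have hτ0 := ne_zero_of_im_pos hτ
  rw [discEval_formD_nome (im_fricke_pos hτ), discEval_formG_nome hτ, eta_fricke_pow_eight hτ,
    show 16 = 8 * 2 from rfl, pow_mul, eta_two_mul_fricke_pow_eight hτ]
  field_simp

lemma discEval_formG_fricke (hτ : 0 < τ.im) : discEval (toComplex formG) (nome (fricke τ)) =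
    256 * τ ^ 4 * discEval (toComplex formD) (nome τ) := by
  have hτ0 := ne_zero_of_im_pos hτ
  have heta := eta_ne_zero_of_im_pos hτ
  rw [discEval_formG_nome (im_fricke_pos hτ), discEval_formD_nome hτ,
    eta_two_mul_fricke_pow_eight hτ, show 16 = 8 * 2 from rfl, pow_mul, eta_fricke_pow_eight hτ]
  field_simp
  ring

/-- The function `q (J_2 / J_1)^24 = η(2τ)^24 / η(τ)^24` of `q`, a Hauptmodul for `Γ₀(2)`. -/
def hauptmodul (z : ℂ) : ℂ :=
  z * (discEval (toComplex (J 2)) z / discEval (toComplex (J 1)) z) ^ 24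

lemma differentiableAt_hauptmodul {z : ℂ} (hz : ‖z‖ < 1) : DifferentiableAt ℂ hauptmodul z :=
  differentiableAt_id.mul (((differentiableAt_discEval (toComplex_J_mem two_ne_zero) hz).div
    (differentiableAt_discEval (toComplex_J_mem one_ne_zero) hz)
    (discEval_J_ne_zero one_ne_zero hz)).pow 24)

lemma mul_logDeriv_hauptmodul {z : ℂ} (hz0 : z ≠ 0) (hz : ‖z‖ < 1) :
    z * logDeriv hauptmodul z = discEval (toComplex formE) z := by
  have hdiff1 := differentiableAt_discEval (toComplex_J_mem one_ne_zero) hz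
  have hdiff2 := differentiableAt_discEval (toComplex_J_mem two_ne_zero) hz
  have hne1 := discEval_J_ne_zero one_ne_zero hz
  have hne2 := discEval_J_ne_zero two_ne_zero hz
  have hquot := hdiff2.fun_div hdiff1 hne1
  have hmul : logDeriv hauptmodul z = _ := logDeriv_mul (f := fun z => z) z hz0
    (pow_ne_zero 24 (div_ne_zero hne2 hne1)) differentiableAt_id (hquot.pow 24)
  rw [hmul, logDeriv_id', logDeriv_fun_pow hquot, logDeriv_div z hne2 hne1 hdiff2 hdiff1,
    discEval_formE hz]
  push_cast
  field_simp

lemma hauptmodul_nome (hτ : 0 < τ.im) : hauptmodul (nome τ) =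
    discEval (toComplex formD) (nome τ) / discEval (toComplex formG) (nome τ) := by
  have hne1 := discEval_J_ne_zero one_ne_zero (norm_nome_lt_one hτ)
  have hne2 := discEval_J_ne_zero two_ne_zero (norm_nome_lt_one hτ)
  rw [discEval_formD (norm_nome_lt_one hτ), discEval_formG (norm_nome_lt_one hτ), hauptmodul]
  field_simp

lemma hauptmodul_fricke (hτ : 0 < τ.im) :
    hauptmodul (nome (fricke τ)) = (2 ^ 12)⁻¹ * (hauptmodul (nome τ))⁻¹ := by
  have hτ0 := ne_zero_of_im_pos hτ
  have hD := discEval_formD_nome_ne_zero hτ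
  have hG := discEval_formG_nome_ne_zero hτ
  rw [hauptmodul_nome hτ, hauptmodul_nome (im_fricke_pos hτ), discEval_formD_fricke hτ,
    discEval_formG_fricke hτ]
  field_simp
  norm_num

lemma differentiableAt_hauptmodul_nome (hτ : 0 < τ.im) :
    DifferentiableAt ℂ (hauptmodul ∘ nome) τ :=
  (differentiableAt_hauptmodul (norm_nome_lt_one hτ)).comp τ (hasDerivAt_nome τ).differentiableAt

lemma logDeriv_hauptmodul_nome (hτ : 0 < τ.im) : logDeriv (hauptmodul ∘ nome) τ =
    2 * Real.pi * Complex.I * discEval (toComplex formE) (nome τ) := by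
  rw [logDeriv_comp (differentiableAt_hauptmodul (norm_nome_lt_one hτ))
    (hasDerivAt_nome τ).differentiableAt, (hasDerivAt_nome τ).deriv,
    ← mul_logDeriv_hauptmodul (nome_ne_zero τ) (norm_nome_lt_one hτ)]
  ring

-- Both sides come from the logarithmic derivative of `hauptmodul_fricke`.
lemma discEval_formE_fricke (hτ : 0 < τ.im) : discEval (toComplex formE) (nome (fricke τ)) =
    -2 * τ ^ 2 * discEval (toComplex formE) (nome τ) := by
  have hτ0 := ne_zero_of_im_pos hτ
  have hchain : logDeriv ((hauptmodul ∘ nome) ∘ fricke) τ =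
      2 * Real.pi * Complex.I * discEval (toComplex formE) (nome (fricke τ)) *
        (1 / (2 * τ ^ 2)) := by
    rw [logDeriv_comp (differentiableAt_hauptmodul_nome (im_fricke_pos hτ))
      (hasDerivAt_fricke hτ).differentiableAt, (hasDerivAt_fricke hτ).deriv,
      logDeriv_hauptmodul_nome (im_fricke_pos hτ)]
  have hlocal : (hauptmodul ∘ nome) ∘ fricke =ᶠ[nhds τ]
      fun t => (2 ^ 12)⁻¹ * ((hauptmodul ∘ nome) t)⁻¹ := by
    filter_upwards [(isOpen_lt continuous_const Complex.continuous_im).mem_nhds hτ] with t ht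
    exact hauptmodul_fricke ht
  have hinv : logDeriv (fun t => (2 ^ 12 : ℂ)⁻¹ * ((hauptmodul ∘ nome) t)⁻¹) τ =
      -logDeriv (hauptmodul ∘ nome) τ := by
    rw [logDeriv_const_mul _ _ (by norm_num)]
    simpa using logDeriv_fun_zpow (differentiableAt_hauptmodul_nome hτ) (-1)
  rw [logDeriv_apply, hlocal.deriv_eq, hlocal.eq_of_nhds, ← logDeriv_apply, hinv,
    logDeriv_hauptmodul_nome hτ] at hchain
  have hcancel : -discEval (toComplex formE) (nome τ) =
      discEval (toComplex formE) (nome (fricke τ)) * (1 / (2 * τ ^ 2)) :=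
    mul_left_cancel₀ Complex.two_pi_I_ne_zero (by linear_combination hchain)
  field_simp at hcancel
  linear_combination -hcancel

end Fricke

section FrickePairs

open PowerSeries

variable {k l : ℤ} {x y x' y' : ℂ⟦X⟧}

/-- The `q`-expansions `x` and `y` of two functions on the upper half plane that correspond under
the Fricke involution in weight `k`: `x(-1/(2τ)) = τ ^ k * y(τ)`. As both functions are invariant
under `τ ↦ τ + 1`, this makes `x` a modular form of weight `k` on `Γ₀(2)`. -/
structure IsFrickePair (k : ℤ) (x y : ℂ⟦X⟧) : Prop where
  left_mem : x ∈ discSeries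
  right_mem : y ∈ discSeries
  discEval_fricke {τ : ℂ} (hτ : 0 < τ.im) :
    discEval x (nome (fricke τ)) = τ ^ k * discEval y (nome τ)

namespace IsFrickePair

lemma add (h : IsFrickePair k x y) (h' : IsFrickePair k x' y') :
    IsFrickePair k (x + x') (y + y') where
  left_mem := add_mem h.left_mem h'.left_mem
  right_mem := add_mem h.right_mem h'.right_mem
  discEval_fricke hτ := by
    rw [discEval_add h.left_mem h'.left_mem (norm_nome_lt_one (im_fricke_pos hτ)),
      discEval_add h.right_mem h'.right_mem (norm_nome_lt_one hτ), h.discEval_fricke hτ,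
      h'.discEval_fricke hτ, mul_add]

lemma smul (h : IsFrickePair k x y) (c : ℂ) : IsFrickePair k (c • x) (c • y) where
  left_mem := discSeries.smul_mem h.left_mem c
  right_mem := discSeries.smul_mem h.right_mem c
  discEval_fricke hτ := by
    rw [discEval_smul, discEval_smul, h.discEval_fricke hτ, mul_left_comm]

lemma sub (h : IsFrickePair k x y) (h' : IsFrickePair k x' y') :
    IsFrickePair k (x - x') (y - y') := by
  simpa [sub_eq_add_neg] using h.add (h'.smul (-1))

lemma mul (h : IsFrickePair k x y) (h' : IsFrickePair l x' y') :
    IsFrickePair (k + l) (x * x') (y * y') where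
  left_mem := mul_mem h.left_mem h'.left_mem
  right_mem := mul_mem h.right_mem h'.right_mem
  discEval_fricke hτ := by
    rw [discEval_mul h.left_mem h'.left_mem (norm_nome_lt_one (im_fricke_pos hτ)),
      discEval_mul h.right_mem h'.right_mem (norm_nome_lt_one hτ), h.discEval_fricke hτ,
      h'.discEval_fricke hτ, zpow_add₀ (ne_zero_of_im_pos hτ), mul_mul_mul_comm]

lemma one : IsFrickePair 0 1 1 where
  left_mem := one_mem _
  right_mem := one_mem _
  discEval_fricke _ := by simp [discEval_one]

lemma zero (k : ℤ) : IsFrickePair k 0 0 where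
  left_mem := zero_mem _
  right_mem := zero_mem _
  discEval_fricke _ := by simp [discEval]

lemma pow (h : IsFrickePair k x y) (n : ℕ) : IsFrickePair (n * k) (x ^ n) (y ^ n) := by
  induction n with
  | zero => simpa using one
  | succ n ih =>
    rw [pow_succ, pow_succ, Nat.cast_succ, add_one_mul]
    exact ih.mul h

end IsFrickePair

lemma isFrickePair_formD :
    IsFrickePair 4 (toComplex formD) ((1 / 16 : ℂ) • toComplex formG) where
  left_mem := toComplex_formD_mem
  right_mem := discSeries.smul_mem toComplex_formG_mem _
  discEval_fricke hτ := by
    rw [discEval_formD_fricke hτ, discEval_smul]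
    norm_cast
    ring

lemma isFrickePair_formG : IsFrickePair 4 (toComplex formG) ((256 : ℂ) • toComplex formD) where
  left_mem := toComplex_formG_mem
  right_mem := discSeries.smul_mem toComplex_formD_mem _
  discEval_fricke hτ := by
    rw [discEval_formG_fricke hτ, discEval_smul]
    norm_cast
    ring

lemma isFrickePair_formE : IsFrickePair 2 (toComplex formE) ((-2 : ℂ) • toComplex formE) where
  left_mem := toComplex_formE_mem
  right_mem := discSeries.smul_mem toComplex_formE_mem _
  discEval_fricke hτ := by
    rw [discEval_formE_fricke hτ, discEval_smul]
    norm_cast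
    ring

end FrickePairs

section NegativeWeight

open PowerSeries Filter

variable {k : ℤ} {x y : ℂ⟦X⟧} {τ : ℂ}

/-- The Petersson norm of the form `x` and of its Fricke partner `y`, normalised so that the sum is
invariant under `τ ↦ -1 / (2τ)`. -/
def peterssonSum (k : ℤ) (x y : ℂ⟦X⟧) (τ : ℂ) : ℝ :=
  ‖discEval x (nome τ)‖ ^ 2 * τ.im ^ k + 2 ^ (-k) * (‖discEval y (nome τ)‖ ^ 2 * τ.im ^ k)

lemma peterssonSum_nonneg (hτ : 0 < τ.im) : 0 ≤ peterssonSum k x y τ := by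
  unfold peterssonSum
  positivity

lemma peterssonSum_add_intCast (τ : ℂ) (n : ℤ) :
    peterssonSum k x y (τ + n) = peterssonSum k x y τ := by
  simp [peterssonSum, nome_add_intCast]

lemma IsFrickePair.norm_sq_mul_im_zpow (h : IsFrickePair k x y) (hτ : 0 < τ.im) :
    ‖discEval x (nome (fricke τ))‖ ^ 2 * (fricke τ).im ^ k =
      2 ^ (-k) * (‖discEval y (nome τ)‖ ^ 2 * τ.im ^ k) := by
  have hnorm : ‖τ‖ ^ k ≠ 0 := zpow_ne_zero _ (norm_ne_zero_iff.2 (ne_zero_of_im_pos hτ))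
  have htwo : (2 : ℝ) ^ k ≠ 0 := zpow_ne_zero _ two_ne_zero
  have hcomm : (‖τ‖ ^ 2) ^ k = (‖τ‖ ^ k) ^ 2 := by
    rw [← zpow_natCast, ← zpow_natCast, ← zpow_mul, ← zpow_mul, mul_comm]
  rw [h.discEval_fricke hτ, norm_mul, norm_zpow, im_fricke, Complex.normSq_eq_norm_sq, div_zpow,
    mul_zpow, zpow_neg, hcomm]
  field_simp

lemma IsFrickePair.peterssonSum_fricke (h : IsFrickePair k x y) (hτ : 0 < τ.im) :
    peterssonSum k x y (fricke τ) = peterssonSum k x y τ := by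
  have hfricke := h.norm_sq_mul_im_zpow (im_fricke_pos hτ)
  rw [fricke_fricke hτ] at hfricke
  rw [peterssonSum, h.norm_sq_mul_im_zpow hτ, ← hfricke, add_comm, peterssonSum]

lemma exists_norm_discEval_le (hx : x ∈ discSeries) {r : ℝ} (hr : r < 1) :
    ∃ B : ℝ, ∀ z : ℂ, ‖z‖ ≤ r → ‖discEval x z‖ ≤ B := by
  obtain ⟨B, hB⟩ := (isCompact_closedBall (0 : ℂ) r).exists_bound_of_continuousOn
    ((differentiableOn_discEval hx).continuousOn.mono (Metric.closedBall_subset_ball hr))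
  exact ⟨B, fun z hz => hB z (by simpa using hz)⟩

lemma zpow_le_zpow_left_of_neg (hk : k < 0) {a b : ℝ} (ha : 0 < a) (hab : a ≤ b) :
    b ^ k ≤ a ^ k := by
  obtain ⟨m, rfl⟩ : ∃ m : ℕ, k = -m := ⟨(-k).toNat, by omega⟩
  rw [zpow_neg, zpow_neg, zpow_natCast, zpow_natCast]
  gcongr

lemma exists_peterssonSum_le_of_le_im (hk : k < 0) (hx : x ∈ discSeries) (hy : y ∈ discSeries)
    {a : ℝ} (ha : 0 < a) : ∃ B : ℝ, ∀ τ : ℂ, a ≤ τ.im → peterssonSum k x y τ ≤ B := by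
  have hr : Real.exp (-2 * Real.pi * a) < 1 := by
    rw [Real.exp_lt_one_iff]
    nlinarith [mul_pos Real.pi_pos ha]
  obtain ⟨B, hB⟩ := exists_norm_discEval_le hx hr
  obtain ⟨B', hB'⟩ := exists_norm_discEval_le hy hr
  refine ⟨B ^ 2 * a ^ k + 2 ^ (-k) * (B' ^ 2 * a ^ k), fun τ hτ => ?_⟩
  have hq : ‖nome τ‖ ≤ Real.exp (-2 * Real.pi * a) := by
    rw [norm_nome]
    exact Real.exp_le_exp.2 (by nlinarith [Real.pi_pos])
  have him : 0 < τ.im ^ k := zpow_pos (ha.trans_le hτ) _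
  have hle : τ.im ^ k ≤ a ^ k := zpow_le_zpow_left_of_neg hk ha hτ
  have hBq := hB _ hq
  have hBq' := hB' _ hq
  unfold peterssonSum
  gcongr

lemma exists_intCast_add_re_sq_le (τ : ℂ) : ∃ n : ℤ, (τ + n).re ^ 2 ≤ 1 / 4 := by
  refine ⟨-round τ.re, ?_⟩
  have hround := abs_le.1 (abs_sub_round τ.re)
  rw [Complex.add_re, Complex.intCast_re, Int.cast_neg]
  nlinarith

-- Below height `2/5`, an integer translation followed by the Fricke involution raises the imaginary
-- part by a factor of at least `50/41`.
lemma IsFrickePair.peterssonSum_le_of_le_im (h : IsFrickePair k x y) {B : ℝ}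
    (hB : ∀ τ : ℂ, 2 / 5 ≤ τ.im → peterssonSum k x y τ ≤ B) (n : ℕ) (τ : ℂ)
    (hτ : 2 / 5 * (41 / 50) ^ n ≤ τ.im) : peterssonSum k x y τ ≤ B := by
  induction n generalizing τ with
  | zero => exact hB τ (by simpa using hτ)
  | succ n ih =>
    by_cases hlarge : 2 / 5 ≤ τ.im
    · exact hB τ hlarge
    push Not at hlarge
    have hpos : 0 < τ.im := lt_of_lt_of_le (by positivity) hτ
    obtain ⟨m, hm⟩ := exists_intCast_add_re_sq_le τ
    have him : (τ + m).im = τ.im := by simp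
    have hpos' : 0 < (τ + m).im := by rwa [him]
    rw [← peterssonSum_add_intCast τ m, ← h.peterssonSum_fricke hpos']
    apply ih
    have hnorm : Complex.normSq (τ + m) ≤ 41 / 100 := by
      rw [Complex.normSq_apply, him]
      nlinarith
    have hnorm0 : 0 < Complex.normSq (τ + m) := Complex.normSq_pos.2 (ne_zero_of_im_pos hpos')
    rw [im_fricke, him, le_div_iff₀ (by positivity)]
    rw [pow_succ] at hτ
    nlinarith

lemma IsFrickePair.exists_peterssonSum_le (hk : k < 0) (h : IsFrickePair k x y) :
    ∃ B : ℝ, ∀ τ : ℂ, 0 < τ.im → peterssonSum k x y τ ≤ B := by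
  obtain ⟨B, hB⟩ := exists_peterssonSum_le_of_le_im hk h.left_mem h.right_mem
    (show (0 : ℝ) < 2 / 5 by norm_num)
  refine ⟨B, fun τ hτ => ?_⟩
  obtain ⟨n, hn⟩ := exists_pow_lt_of_lt_one (show (0 : ℝ) < τ.im / (2 / 5) by positivity)
    (show (41 / 50 : ℝ) < 1 by norm_num)
  rw [lt_div_iff₀ (by norm_num)] at hn
  exact h.peterssonSum_le_of_le_im hB n τ (by linarith)

lemma norm_coeff_sq_le_of_peterssonSum_le (hx : x ∈ discSeries) {B : ℝ}
    (hB : ∀ τ : ℂ, 0 < τ.im → peterssonSum k x y τ ≤ B) {t : ℝ} (ht : 0 < t) (n : ℕ) :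
    (‖coeff n x‖ * Real.exp (-2 * Real.pi * t) ^ n) ^ 2 ≤ B * t ^ (-k) := by
  have hB0 : 0 ≤ B := (peterssonSum_nonneg (by simp)).trans (hB Complex.I (by simp))
  have hr : Real.exp (-2 * Real.pi * t) < 1 := by
    rw [Real.exp_lt_one_iff]
    nlinarith [mul_pos Real.pi_pos ht]
  have hsphere (z : ℂ) (hz : ‖z‖ = Real.exp (-2 * Real.pi * t)) :
      ‖discEval x z‖ ≤ Real.sqrt (B * t ^ (-k)) := by
    have hz0 : z ≠ 0 := norm_pos_iff.1 (hz ▸ Real.exp_pos _)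
    obtain ⟨τ, hτ, rfl⟩ := exists_nome_eq hz0 (hz ▸ hr)
    rw [norm_nome] at hz
    obtain rfl : τ.im = t := mul_left_cancel₀ (mul_ne_zero (by norm_num) Real.pi_pos.ne')
      (Real.exp_injective hz)
    have hpartner : 0 ≤ (2 : ℝ) ^ (-k) * (‖discEval y (nome τ)‖ ^ 2 * τ.im ^ k) := by positivity
    apply Real.le_sqrt_of_sq_le
    rw [zpow_neg, ← div_eq_mul_inv, le_div_iff₀ (zpow_pos hτ _)]
    exact (le_add_of_nonneg_right hpartner).trans (hB τ hτ)
  calc _ ≤ Real.sqrt (B * t ^ (-k)) ^ 2 := by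
        gcongr
        exact norm_coeff_mul_pow_le hx (Real.exp_pos _) hr hsphere n
    _ = _ := Real.sq_sqrt (by positivity)

lemma IsFrickePair.eq_zero_of_neg_weight (hk : k < 0) (h : IsFrickePair k x y) : x = 0 := by
  obtain ⟨B, hB⟩ := h.exists_peterssonSum_le hk
  obtain ⟨m, rfl⟩ : ∃ m : ℕ, k = -m := ⟨(-k).toNat, by omega⟩
  have hm : m ≠ 0 := by omega
  ext n
  have hcoeff : Continuous fun t : ℝ => (‖coeff n x‖ * Real.exp (-2 * Real.pi * t) ^ n) ^ 2 := by
    fun_prop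
  have hpow : Continuous fun t : ℝ => B * t ^ m := by fun_prop
  have hle := le_of_tendsto_of_tendsto
    ((hcoeff.tendsto 0).mono_left nhdsWithin_le_nhds)
    ((hpow.tendsto 0).mono_left (nhdsWithin_le_nhds (s := Set.Ioi 0))) (by
      filter_upwards [self_mem_nhdsWithin] with t ht
      simpa using norm_coeff_sq_le_of_peterssonSum_le h.left_mem hB ht n)
  have hzero : ‖coeff n x‖ ^ 2 ≤ 0 := by simpa [hm] using hle
  simpa using hzero

end NegativeWeight

section IntegralForms

open PowerSeries

lemma formD_mul_etaQuotient : formD * (J 1 ^ 8 * invJ 2 ^ 16) = X := by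
  calc formD * (J 1 ^ 8 * invJ 2 ^ 16)
      = X * ((J 2 * invJ 2) ^ 16 * (J 1 * invJ 1) ^ 8) := by rw [formD]; ring
    _ = X := by simp [J_mul_invJ]

lemma formG_mul_etaQuotient : formG * (J 2 ^ 8 * invJ 1 ^ 16) = 1 := by
  calc formG * (J 2 ^ 8 * invJ 1 ^ 16) = (J 2 * invJ 2) ^ 8 * (J 1 * invJ 1) ^ 16 := by
        rw [formG]; ring
    _ = 1 := by simp [J_mul_invJ]

lemma X_dvd_formD : X ∣ formD := Dvd.intro _ rfl

lemma IsFrickePair.of_mul {k l : ℤ} {u v x y : ℂ⟦X⟧} (huv : IsFrickePair k u v)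
    (hu : ∀ τ : ℂ, 0 < τ.im → discEval u (nome τ) ≠ 0) (hx : x ∈ discSeries)
    (hy : y ∈ discSeries) (h : IsFrickePair (k + l) (u * x) (v * y)) : IsFrickePair l x y where
  left_mem := hx
  right_mem := hy
  discEval_fricke {τ} hτ := by
    have hprod := h.discEval_fricke hτ
    rw [discEval_mul huv.left_mem hx (norm_nome_lt_one (im_fricke_pos hτ)),
      discEval_mul huv.right_mem hy (norm_nome_lt_one hτ),
      zpow_add₀ (ne_zero_of_im_pos hτ)] at hprod
    apply mul_left_cancel₀ (hu _ (im_fricke_pos hτ))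
    rw [hprod, huv.discEval_fricke hτ]
    ring

lemma isFrickePair_formD_pow_mul_formG_pow (a b : ℕ) :
    IsFrickePair (4 * a + 4 * b) (toComplex formD ^ a * toComplex formG ^ b)
      (((1 / 16 : ℂ) ^ a * 256 ^ b) • (toComplex formG ^ a * toComplex formD ^ b)) := by
  have hpair := (isFrickePair_formD.pow a).mul (isFrickePair_formG.pow b)
  rwa [smul_pow, smul_pow, smul_mul_smul_comm, mul_comm (a : ℤ), mul_comm (b : ℤ)] at hpair

lemma discEval_formD_pow_mul_formG_pow_ne_zero (a b : ℕ) {τ : ℂ} (hτ : 0 < τ.im) :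
    discEval (toComplex formD ^ a * toComplex formG ^ b) (nome τ) ≠ 0 := by
  have hq := norm_nome_lt_one hτ
  rw [discEval_mul (pow_mem toComplex_formD_mem _) (pow_mem toComplex_formG_mem _) hq,
    discEval_pow toComplex_formD_mem _ hq, discEval_pow toComplex_formG_mem _ hq]
  exact mul_ne_zero (pow_ne_zero _ (discEval_formD_nome_ne_zero hτ))
    (pow_ne_zero _ (discEval_formG_nome_ne_zero hτ))

lemma eq_formD_pow_mul_formG_pow_mul (a b : ℕ) (x : ℤ⟦X⟧) :
    X ^ a * x = formD ^ a * formG ^ b *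
      (x * (J 1 ^ 8 * invJ 2 ^ 16) ^ a * (J 2 ^ 8 * invJ 1 ^ 16) ^ b) := by
  calc X ^ a * x = (formD * (J 1 ^ 8 * invJ 2 ^ 16)) ^ a *
        (formG * (J 2 ^ 8 * invJ 1 ^ 16)) ^ b * x := by
        rw [formD_mul_etaQuotient, formG_mul_etaQuotient, one_pow, mul_one]
    _ = _ := by ring

lemma IsFrickePair.exists_of_formD_pow_mul_formG_pow_mul {k : ℤ} {x y : ℂ⟦X⟧} {a b : ℕ}
    (hx : x ∈ discSeries)
    (h : IsFrickePair k (toComplex formD ^ a * toComplex formG ^ b * x) (X ^ b * y)) :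
    ∃ y', IsFrickePair (k - (4 * a + 4 * b)) x y' := by
  set rD := toComplex (J 1 ^ 8 * invJ 2 ^ 16) with hrD
  set rG := toComplex (J 2 ^ 8 * invJ 1 ^ 16) with hrG
  have hD : toComplex formD * rD = X := by rw [hrD, ← map_mul, formD_mul_etaQuotient, toComplex_X]
  have hG : toComplex formG * rG = 1 := by rw [hrG, ← map_mul, formG_mul_etaQuotient, map_one]
  have hy_mem : y ∈ discSeries := mem_discSeries_of_X_pow_mul_mem b h.right_mem
  have hrD_mem : rD ∈ discSeries := toComplex_etaQuotient_mem one_ne_zero two_ne_zero _ _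
  have hrG_mem : rG ∈ discSeries := toComplex_etaQuotient_mem two_ne_zero one_ne_zero _ _
  have hscalar : ((1 / 16 : ℂ) ^ a * 256 ^ b) * (16 ^ a * (1 / 256) ^ b) = 1 := by
    rw [mul_mul_mul_comm, ← mul_pow, ← mul_pow]
    norm_num
  refine ⟨((16 : ℂ) ^ a * (1 / 256) ^ b) • (y * rG ^ a * rD ^ b), ?_⟩
  refine (isFrickePair_formD_pow_mul_formG_pow a b).of_mul
    (fun τ => discEval_formD_pow_mul_formG_pow_ne_zero a b) hx (discSeries.smul_mem
      (mul_mem (mul_mem hy_mem (pow_mem hrG_mem _)) (pow_mem hrD_mem _)) _) ?_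
  convert h using 1
  · ring
  · rw [smul_mul_smul_comm, hscalar, one_smul]
    calc _ = (toComplex formD * rD) ^ b * ((toComplex formG * rG) ^ a * y) := by ring
      _ = _ := by rw [hD, hG, one_pow, one_mul]

-- A form vanishing to order `a` at one cusp and `b` at the other is divisible by `D ^ a * G ^ b`,
-- because `D` and `G` have no zeros on the upper half plane.
lemma IsFrickePair.exists_eq_formD_pow_mul_formG_pow_mul {k : ℤ} {x : ℤ⟦X⟧} {y : ℂ⟦X⟧}
    (h : IsFrickePair k (toComplex x) y) {a b : ℕ} (hx : X ^ a ∣ x) (hy : X ^ b ∣ y) :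
    ∃ x' y', x = formD ^ a * formG ^ b * x' ∧
      IsFrickePair (k - (4 * a + 4 * b)) (toComplex x') y' := by
  obtain ⟨u, rfl⟩ := hx
  obtain ⟨v, rfl⟩ := hy
  have hu_mem : toComplex u ∈ discSeries :=
    mem_discSeries_of_X_pow_mul_mem a (by simpa only [map_mul, map_pow, toComplex_X] using
      h.left_mem)
  have hx'_mem : toComplex (u * (J 1 ^ 8 * invJ 2 ^ 16) ^ a * (J 2 ^ 8 * invJ 1 ^ 16) ^ b) ∈
      discSeries := by
    rw [map_mul, map_mul, map_pow, map_pow]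
    exact mul_mem (mul_mem hu_mem
      (pow_mem (toComplex_etaQuotient_mem one_ne_zero two_ne_zero _ _) _))
      (pow_mem (toComplex_etaQuotient_mem two_ne_zero one_ne_zero _ _) _)
  rw [eq_formD_pow_mul_formG_pow_mul a b u, map_mul, map_mul, map_pow, map_pow] at h
  obtain ⟨y', hy'⟩ := h.exists_of_formD_pow_mul_formG_pow_mul hx'_mem
  exact ⟨_, y', eq_formD_pow_mul_formG_pow_mul a b u, hy'⟩

/-- The integral modular forms of weight `2 * m` on `Γ₀(2)`, as the span of the monomials in `E`
and `D`; by `mem_integralForms_of_isFrickePair` these are all of them. -/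
def integralForms (m : ℕ) : Submodule ℤ ℤ⟦X⟧ :=
  Submodule.span ℤ {x | ∃ a b : ℕ, a + 2 * b = m ∧ x = formE ^ a * formD ^ b}

variable {m n : ℕ} {x y : ℤ⟦X⟧}

lemma monomial_mem_integralForms {a b : ℕ} (h : a + 2 * b = m) :
    formE ^ a * formD ^ b ∈ integralForms m :=
  Submodule.subset_span ⟨a, b, h, rfl⟩

lemma mul_mem_integralForms (hx : x ∈ integralForms m) (hy : y ∈ integralForms n) :
    x * y ∈ integralForms (m + n) := by
  induction hx, hy using Submodule.span_induction₂ with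
  | mem_mem x y hx hy =>
    obtain ⟨a, b, rfl, rfl⟩ := hx
    obtain ⟨a', b', rfl, rfl⟩ := hy
    rw [show formE ^ a * formD ^ b * (formE ^ a' * formD ^ b') =
      formE ^ (a + a') * formD ^ (b + b') by ring]
    exact monomial_mem_integralForms (by ring)
  | zero_left y _ => simp
  | zero_right x _ => simp
  | add_left x y z _ _ _ hx hy => rw [add_mul]; exact add_mem hx hy
  | add_right x y z _ _ _ hx hy => rw [mul_add]; exact add_mem hx hy
  | smul_left r x y _ _ h => rw [smul_mul_assoc]; exact Submodule.smul_mem _ _ h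
  | smul_right r x y _ _ h => rw [mul_smul_comm]; exact Submodule.smul_mem _ _ h

lemma one_mem_integralForms : 1 ∈ integralForms 0 := by
  simpa using monomial_mem_integralForms (a := 0) (b := 0) rfl

lemma pow_mem_integralForms (hx : x ∈ integralForms m) (n : ℕ) :
    x ^ n ∈ integralForms (n * m) := by
  induction n with
  | zero => simpa using one_mem_integralForms
  | succ n ih =>
    rw [pow_succ, add_mul, one_mul]
    exact mul_mem_integralForms ih hx

lemma formE_pow_mem_integralForms (m : ℕ) : formE ^ m ∈ integralForms m := by
  simpa using monomial_mem_integralForms (a := m) (b := 0) rfl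

lemma formD_mem_integralForms : formD ∈ integralForms 2 := by
  simpa using monomial_mem_integralForms (a := 0) (b := 1) rfl

lemma exists_isFrickePair_of_mem_integralForms (hx : x ∈ integralForms m) :
    ∃ y, IsFrickePair (2 * m) (toComplex x) y := by
  induction hx using Submodule.span_induction with
  | mem x hx =>
    obtain ⟨a, b, rfl, rfl⟩ := hx
    have hpair := (isFrickePair_formE.pow a).mul (isFrickePair_formD.pow b)
    rw [← map_pow, ← map_pow, ← map_mul,
      show (a * 2 + b * 4 : ℤ) = 2 * ((a + 2 * b : ℕ) : ℤ) by push_cast; ring] at hpair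
    exact ⟨_, hpair⟩
  | zero => exact ⟨0, by simpa using IsFrickePair.zero _⟩
  | add x x' _ _ hx hx' =>
    obtain ⟨y, hy⟩ := hx
    obtain ⟨y', hy'⟩ := hx'
    exact ⟨y + y', by simpa only [map_add] using hy.add hy'⟩
  | smul c x _ hx =>
    obtain ⟨y, hy⟩ := hx
    exact ⟨(c : ℂ) • y, by simpa only [toComplex_zsmul] using hy.smul c⟩

-- Subtracting a multiple of `E ^ m` makes the constant term vanish; dividing by `D` then lowers the
-- weight by 4, and forms of negative weight are zero.
theorem mem_integralForms_of_isFrickePair {x : ℤ⟦X⟧} {y : ℂ⟦X⟧}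
    (h : IsFrickePair (2 * m) (toComplex x) y) : x ∈ integralForms m := by
  induction m using Nat.strong_induction_on generalizing x y with
  | _ m ih =>
    set c : ℤ := constantCoeff x
    obtain ⟨yE, hyE⟩ := exists_isFrickePair_of_mem_integralForms (formE_pow_mem_integralForms m)
    have hsub : IsFrickePair (2 * m) (toComplex (x - c • formE ^ m)) (y - (c : ℂ) • yE) := by
      rw [map_sub, toComplex_zsmul]
      exact h.sub (hyE.smul _)
    have hX : X ^ 1 ∣ x - c • formE ^ m := by
      rw [pow_one, X_dvd_iff, map_sub, zsmul_eq_mul, map_mul, map_pow, constantCoeff_formE]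
      simp [c]
    obtain ⟨x', y', hx', hy'⟩ := hsub.exists_eq_formD_pow_mul_formG_pow_mul hX
      (b := 0) (by simp)
    rw [← sub_add_cancel x (c • formE ^ m)]
    refine add_mem ?_ (Submodule.smul_mem _ _ (formE_pow_mem_integralForms m))
    rw [hx', pow_one, pow_zero, mul_one]
    rcases lt_or_ge m 2 with hm | hm
    · have hzero := hy'.eq_zero_of_neg_weight (by push_cast; omega)
      rw [toComplex_injective (hzero.trans (map_zero _).symm), mul_zero]
      exact zero_mem _
    · obtain ⟨m, rfl⟩ := Nat.exists_eq_add_of_le hm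
      refine mul_mem_integralForms formD_mem_integralForms (ih m (by omega) (y := y') ?_)
      convert hy' using 1
      push_cast
      ring

end IntegralForms

/-! ### Dissections and the Hecke operator -/

section Dissection

open PowerSeries

/-- The `s`-th section of `x` modulo `p`, with coefficients `x_{p n + s}`. For `s = 0` it is the
operator `U_p`. -/
def dissect {R : Type*} [CommRing R] (p s : ℕ) : R⟦X⟧ →ₗ[R] R⟦X⟧ where
  toFun x := mk fun n => coeff (p * n + s) x
  map_add' x y := by ext; simp
  map_smul' c x := by ext; simp

variable {R : Type*} [CommRing R]

@[simp]
lemma coeff_dissect (p s n : ℕ) (x : R⟦X⟧) : coeff n (dissect p s x) = coeff (p * n + s) x := by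
  simp [dissect]

lemma toComplex_dissect (p s : ℕ) (x : ℤ⟦X⟧) :
    toComplex (dissect p s x) = dissect p s (toComplex x) := by
  ext n
  simp only [coeff_toComplex, coeff_dissect]

lemma X_pow_dvd_dissect {p a a' : ℕ} {x : R⟦X⟧} (h : X ^ a ∣ x) (ha : p * a' < a + p) :
    X ^ a' ∣ dissect p 0 x := by
  rw [X_pow_dvd_iff] at h ⊢
  intro m hm
  rw [coeff_dissect]
  exact h _ (by nlinarith)

lemma X_pow_dvd_expand {p a a' : ℕ} (hp : p ≠ 0) {x : R⟦X⟧} (h : X ^ a ∣ x) (ha : a' ≤ p * a) :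
    X ^ a' ∣ expand p hp x := by
  obtain ⟨y, rfl⟩ := h
  rw [map_mul, map_pow, expand_X, ← pow_mul]
  exact (pow_dvd_pow _ ha).mul_right _

lemma dissect_zero_mem_discSeries {p : ℕ} (hp : p ≠ 0) {x : ℂ⟦X⟧} (hx : x ∈ discSeries) :
    dissect p 0 x ∈ discSeries := by
  intro z hz
  obtain ⟨w, rfl⟩ := IsAlgClosed.exists_pow_nat_eq z (Nat.pos_of_ne_zero hp)
  have hw : ‖w‖ < 1 := by
    rw [norm_pow] at hz
    exact (pow_lt_one_iff_of_nonneg (norm_nonneg _) hp).1 hz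
  refine ((hx w hw).comp_injective (mul_right_injective₀ hp)).congr fun n => ?_
  rw [coeff_dissect, ← pow_mul]
  rfl

variable {p : ℕ} {τ : ℂ}

lemma sum_nome_one_div_pow (hp : p ≠ 0) (n : ℕ) :
    ∑ j ∈ Finset.range p, nome (1 / p) ^ (j * n) = if p ∣ n then (p : ℂ) else 0 := by
  have hroot : IsPrimitiveRoot (nome (1 / p)) p := by
    rw [nome, mul_one_div]
    exact Complex.isPrimitiveRoot_exp p hp
  simp_rw [mul_comm _ n, pow_mul]
  split_ifs with hn
  · rw [(hroot.pow_eq_one_iff_dvd n).2 hn]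
    simp
  · have hne : nome (1 / p) ^ n ≠ 1 := mt (hroot.pow_eq_one_iff_dvd n).1 hn
    refine (mul_eq_zero.1 ?_).resolve_left (sub_ne_zero.2 hne.symm)
    rw [mul_neg_geom_sum, ← pow_mul, mul_comm n, pow_mul, hroot.pow_eq_one, one_pow, sub_self]

lemma im_add_intCast_div_pos (hp : p ≠ 0) (hτ : 0 < τ.im) (j : ℤ) : 0 < ((τ + j) / p).im := by
  rw [Complex.div_natCast_im, Complex.add_im, Complex.intCast_im, add_zero]
  positivity

lemma sum_discEval_nome_add_div (hp : p ≠ 0) {x : ℂ⟦X⟧} (hx : x ∈ discSeries)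
    (hτ : 0 < τ.im) :
    ∑ j ∈ Finset.range p, discEval x (nome ((τ + (j : ℤ)) / p)) =
      p * discEval (dissect p 0 x) (nome τ) := by
  have hnome (j : ℕ) : nome ((τ + (j : ℤ)) / p) = nome (τ / p) * nome (1 / p) ^ j := by
    rw [← nome_natCast_mul, nome, nome, nome, ← Complex.exp_add]
    congr 1
    push_cast
    ring
  have hterm (n : ℕ) : ∑ j ∈ Finset.range p, coeff n x * nome ((τ + (j : ℤ)) / p) ^ n =
      coeff n x * nome (τ / p) ^ n * if p ∣ n then (p : ℂ) else 0 := by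
    rw [← sum_nome_one_div_pow hp, Finset.mul_sum]
    refine Finset.sum_congr rfl fun j _ => ?_
    rw [hnome, mul_pow, ← pow_mul]
    ring
  have hleft : HasSum (fun n => ∑ j ∈ Finset.range p, coeff n x * nome ((τ + (j : ℤ)) / p) ^ n)
      (∑ j ∈ Finset.range p, discEval x (nome ((τ + (j : ℤ)) / p))) :=
    hasSum_sum fun j _ => hasSum_discEval hx (norm_nome_lt_one (im_add_intCast_div_pos hp hτ j))
  have hright := (hasSum_discEval (dissect_zero_mem_discSeries hp hx)
    (norm_nome_lt_one hτ)).mul_left (p : ℂ)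
  simp_rw [hterm] at hleft
  rw [← (mul_right_injective₀ hp).hasSum_iff] at hleft
  · refine hleft.unique (hright.congr_fun fun n => ?_)
    have hpow : nome τ = nome (τ / p) ^ p := by
      rw [← nome_natCast_mul, mul_div_cancel₀ _ (Nat.cast_ne_zero.2 hp)]
    simp only [Function.comp, dvd_mul_right, if_true, coeff_dissect, add_zero]
    rw [hpow, ← pow_mul]
    ring
  · intro n hn
    rw [if_neg fun ⟨m, hm⟩ => hn ⟨m, hm.symm⟩, mul_zero]

end Dissection

section Hecke

open PowerSeries

variable {m : ℤ} {x y : ℂ⟦X⟧} {τ : ℂ}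

lemma IsFrickePair.discEval_div_one_sub (h : IsFrickePair (2 * m) x y) (n : ℤ) {σ : ℂ}
    (hσ : 0 < σ.im) (hne : 1 - 2 * n * σ ≠ 0) (him : 0 < (σ / (1 - 2 * n * σ)).im) :
    discEval y (nome (σ / (1 - 2 * n * σ))) = (1 - 2 * n * σ) ^ (2 * m) * discEval y (nome σ) := by
  have hσ0 := ne_zero_of_im_pos hσ
  have hfricke : fricke (σ / (1 - 2 * n * σ)) = fricke σ + n := by
    rw [fricke, fricke]
    field_simp
    ring
  have htransform := h.discEval_fricke him
  rw [hfricke, nome_add_intCast, h.discEval_fricke hσ, div_zpow] at htransform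
  have hσpow := zpow_ne_zero (2 * m) hσ0
  have hpow := zpow_ne_zero (2 * m) hne
  field_simp at htransform
  linear_combination -htransform

lemma fricke_add_div_seven {s j j' : ℂ} (hs : s ^ 2 = 1) (hj : 7 * s - 2 * j * j' = 1)
    (hτ : τ ≠ 0) :
    (fricke τ + j) / 7 = -(s * (1 - 2 * (s * j) * ((τ + j') / 7))) / (2 * τ) := by
  rw [fricke]
  field_simp
  linear_combination hj - 2 * j * (τ + j') * hs

-- The coset representatives of the Hecke operator are permuted by the Fricke involution:
-- `(1, j; 0, 7) W = W γ (1, j'; 0, 7)` up to scalars, where `2 j j' ≡ -1 (mod 7)` and `γ ∈ Γ₀(2)`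
-- is the product of a translation and a lower triangular matrix.
lemma IsFrickePair.discEval_fricke_add_div_seven (h : IsFrickePair (2 * m) x y) {j j' s : ℤ}
    (hs : s ^ 2 = 1) (hj : 7 * s - 2 * j * j' = 1) (hτ : 0 < τ.im) :
    discEval x (nome ((fricke τ + j) / 7)) = τ ^ (2 * m) * discEval y (nome ((τ + j') / 7)) := by
  set σ := (τ + j') / 7 with hσ_def
  set w := (fricke τ + j) / 7 with hw_def
  have hσ : 0 < σ.im := im_add_intCast_div_pos (p := 7) (by norm_num) hτ j'
  have hw : 0 < w.im := im_add_intCast_div_pos (p := 7) (by norm_num) (im_fricke_pos hτ) j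
  have hτ0 := ne_zero_of_im_pos hτ
  have hsC : (s : ℂ) ^ 2 = 1 := by exact_mod_cast hs
  have hjC : 7 * (s : ℂ) - 2 * j * j' = 1 := by exact_mod_cast hj
  have hs0 : (s : ℂ) ≠ 0 := fun h0 => by simp [h0] at hsC
  set c := 1 - 2 * ((s * j : ℤ) : ℂ) * σ with hc
  have hw_eq : w = -(s * c) / (2 * τ) := by
    rw [hw_def, fricke_add_div_seven hsC hjC hτ0, hc, Int.cast_mul]
  have hc0 : c ≠ 0 := fun h0 => ne_zero_of_im_pos hw (by rw [hw_eq, h0]; simp)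
  have hfricke : fricke w = s * τ / c := by
    rw [hw_eq, fricke]
    field_simp
    linear_combination -hsC
  have hfricke' : fricke w = σ / c + ((-(s * j') : ℤ) : ℂ) := by
    rw [hfricke, div_add' _ _ _ hc0, hc, hσ_def]
    congr 1
    push_cast
    linear_combination ((τ + j') / 7) * (hjC + 2 * j * j' * -hsC)
  have him : 0 < (σ / c).im := by
    simpa only [hfricke', Complex.add_im, Complex.intCast_im, add_zero] using im_fricke_pos hw
  calc discEval x (nome w) = fricke w ^ (2 * m) * discEval y (nome (fricke w)) := by
        rw [← h.discEval_fricke (im_fricke_pos hw), fricke_fricke hw]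
    _ = (s * τ / c) ^ (2 * m) * (c ^ (2 * m) * discEval y (nome σ)) := by
        rw [← h.discEval_div_one_sub (s * j) hσ hc0 him, ← nome_add_intCast (σ / c) (-(s * j')),
          ← hfricke', hfricke]
    _ = τ ^ (2 * m) * discEval y (nome σ) := by
        rw [← mul_assoc, ← mul_zpow, div_mul_cancel₀ _ hc0, mul_zpow, zpow_mul (s : ℂ)]
        simp [hsC]

lemma discEval_nome_add_seven_div (z : ℂ⟦X⟧) (τ : ℂ) (a : ℤ) :
    discEval z (nome ((τ + (a + 7 : ℤ)) / 7)) = discEval z (nome ((τ + a) / 7)) := by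
  rw [← nome_add_intCast ((τ + a) / 7) 1]
  congr 2
  push_cast
  ring

lemma IsFrickePair.discEval_dissect_seven_fricke (h : IsFrickePair (2 * m) x y) (hτ : 0 < τ.im) :
    7 * discEval (dissect 7 0 x) (nome (fricke τ)) - discEval x (nome (fricke τ / 7)) =
      τ ^ (2 * m) * (7 * discEval (dissect 7 0 y) (nome τ) - discEval y (nome (τ / 7))) := by
  have hx := sum_discEval_nome_add_div (p := 7) (by norm_num) h.left_mem (im_fricke_pos hτ)
  have hy := sum_discEval_nome_add_div (p := 7) (by norm_num) h.right_mem hτ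
  have h1 := h.discEval_fricke_add_div_seven (j := 1) (j' := 3) (s := 1) rfl rfl hτ
  have h2 := h.discEval_fricke_add_div_seven (j := 2) (j' := -2) (s := -1) rfl rfl hτ
  have h3 := h.discEval_fricke_add_div_seven (j := 3) (j' := 1) (s := 1) rfl rfl hτ
  have h4 := h.discEval_fricke_add_div_seven (j := -3) (j' := -1) (s := 1) rfl rfl hτ
  have h5 := h.discEval_fricke_add_div_seven (j := -2) (j' := 2) (s := -1) rfl rfl hτ
  have h6 := h.discEval_fricke_add_div_seven (j := -1) (j' := -3) (s := 1) rfl rfl hτ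
  rw [← discEval_nome_add_seven_div y] at h2
  rw [← discEval_nome_add_seven_div x] at h5
  rw [← discEval_nome_add_seven_div x, ← discEval_nome_add_seven_div y] at h4 h6
  simp only [Finset.sum_range_succ, Finset.sum_range_zero, zero_add] at hx hy
  norm_num at hx hy h1 h2 h3 h4 h5 h6
  rw [h1, h2, h3, h4, h5, h6] at hx
  linear_combination τ ^ (2 * m) * hy - hx

theorem IsFrickePair.hecke_seven {m : ℕ} (hm : m ≠ 0) (h : IsFrickePair (2 * m) x y) :
    IsFrickePair (2 * m) (dissect 7 0 x + (7 : ℂ) ^ (2 * m - 1) • expand 7 (by norm_num) x)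
      (dissect 7 0 y + (7 : ℂ) ^ (2 * m - 1) • expand 7 (by norm_num) y) := by
  have hUx := dissect_zero_mem_discSeries (p := 7) (by norm_num) h.left_mem
  have hUy := dissect_zero_mem_discSeries (p := 7) (by norm_num) h.right_mem
  have hVx := expand_mem_discSeries h.left_mem 7 (by norm_num)
  have hVy := expand_mem_discSeries h.right_mem 7 (by norm_num)
  refine ⟨add_mem hUx (discSeries.smul_mem hVx _), add_mem hUy (discSeries.smul_mem hVy _),
    fun {τ} hτ => ?_⟩
  have hq := norm_nome_lt_one hτ
  have hq' := norm_nome_lt_one (im_fricke_pos hτ)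
  have hmul := h.discEval_fricke (τ := (7 : ℕ) * τ) (by simpa using hτ)
  have hdiv := h.discEval_fricke (τ := τ / (7 : ℕ)) (by simpa using hτ)
  have hfricke_mul : fricke ((7 : ℕ) * τ) = fricke τ / 7 := by
    rw [fricke, fricke]
    field_simp
    norm_num
  have hfricke_div : fricke (τ / (7 : ℕ)) = (7 : ℕ) * fricke τ := by
    rw [fricke, fricke]
    field_simp
  have hpow : (7 : ℂ) ^ (2 * (m : ℤ)) = 7 * 7 ^ (2 * m - 1) := by
    rw [← pow_succ', Nat.sub_add_cancel (by omega)]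
    norm_cast
  rw [hfricke_mul, nome_natCast_mul, mul_zpow, Nat.cast_ofNat, hpow] at hmul
  rw [hfricke_div, nome_natCast_mul, div_zpow, Nat.cast_ofNat, hpow] at hdiv
  have hU := h.discEval_dissect_seven_fricke hτ
  rw [discEval_add hUx (discSeries.smul_mem hVx _) hq',
    discEval_add hUy (discSeries.smul_mem hVy _) hq, discEval_smul, discEval_smul,
    discEval_expand h.left_mem _ _ hq', discEval_expand h.right_mem _ _ hq, hdiv]
  field_simp
  linear_combination hU + hmul

lemma toComplex_hecke_seven (x : ℤ⟦X⟧) (n : ℕ) :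
    toComplex (dissect 7 0 x + 7 ^ n * expand 7 (by norm_num) x) =
      dissect 7 0 (toComplex x) + (7 : ℂ) ^ n • expand 7 (by norm_num) (toComplex x) := by
  rw [map_add, toComplex_dissect, map_mul, toComplex_expand, smul_eq_C_mul, map_pow, map_pow,
    map_ofNat, map_ofNat]

lemma exists_isFrickePair_formD_pow_mul_formG_pow_mul {m : ℕ} {G : ℤ⟦X⟧}
    (hG : G ∈ integralForms m) (a b : ℕ) :
    ∃ y, IsFrickePair (2 * (m + 2 * a + 2 * b : ℕ))
      (toComplex (formD ^ a * formG ^ b * G)) y ∧ X ^ b ∣ y := by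
  obtain ⟨y, hy⟩ := exists_isFrickePair_of_mem_integralForms hG
  have hpair := (isFrickePair_formD_pow_mul_formG_pow a b).mul hy
  rw [← map_pow, ← map_pow, ← map_mul, ← map_mul, show (4 * a + 4 * b + 2 * m : ℤ) =
    2 * (m + 2 * a + 2 * b : ℕ) by push_cast; ring] at hpair
  refine ⟨_, hpair, ?_⟩
  have hX : X ∣ toComplex formD := toComplex_X ▸ map_dvd toComplex X_dvd_formD
  rw [smul_eq_C_mul]
  exact (((pow_dvd_pow_of_dvd hX b).mul_left _).mul_left _).mul_right _

-- `U₇` is the Hecke operator `T₇` up to a high power of `7`, and `T₇` preserves the weight.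
theorem exists_dissect_seven_eq {m a b m' a' b' : ℕ} {G : ℤ⟦X⟧} (hG : G ∈ integralForms m)
    (ha : 7 * a' ≤ a + 6) (hb : 7 * b' ≤ b + 6) (hpos : m + 2 * a + 2 * b ≠ 0)
    (hweight : m + 2 * a + 2 * b = m' + 2 * a' + 2 * b') :
    ∃ G' ∈ integralForms m', ∃ r, dissect 7 0 (formD ^ a * formG ^ b * G) =
      formD ^ a' * formG ^ b' * G' + 7 ^ (2 * (m + 2 * a + 2 * b) - 1) * r := by
  obtain ⟨y, hy, hXy⟩ := exists_isFrickePair_formD_pow_mul_formG_pow_mul hG a b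
  have hX : X ^ a ∣ formD ^ a * formG ^ b * G :=
    ((pow_dvd_pow_of_dvd X_dvd_formD a).mul_right _).mul_right _
  have hecke := hy.hecke_seven hpos
  rw [← toComplex_hecke_seven, smul_eq_C_mul] at hecke
  obtain ⟨G', y', hG', hy'⟩ := hecke.exists_eq_formD_pow_mul_formG_pow_mul (a := a') (b := b')
    (dvd_add (X_pow_dvd_dissect hX (by omega)) ((X_pow_dvd_expand _ hX (by omega)).mul_left _))
    (dvd_add (X_pow_dvd_dissect hXy (by omega)) ((X_pow_dvd_expand _ hXy (by omega)).mul_left _))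
  refine ⟨G', mem_integralForms_of_isFrickePair (y := y') ?_,
    -expand 7 (by norm_num) (formD ^ a * formG ^ b * G), ?_⟩
  · rwa [hweight, show 2 * ((m' + 2 * a' + 2 * b' : ℕ) : ℤ) - (4 * a' + 4 * b') = 2 * m' by
      push_cast; ring] at hy'
  · rw [← hG']
    ring

end Hecke

section Congruence

open PowerSeries

/-- The ideal of integral power series all of whose coefficients are divisible by `7`. -/
def sevenIdeal : Ideal ℤ⟦X⟧ := Ideal.span {7}

lemma smodEq_sevenIdeal_pow_iff_dvd {k : ℕ} {x y : ℤ⟦X⟧} :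
    x ≡ y [SMOD sevenIdeal ^ k] ↔ 7 ^ k ∣ x - y := by
  rw [SModEq.sub_mem, sevenIdeal, Ideal.span_singleton_pow, Ideal.mem_span_singleton]

lemma intCast_dvd_iff_forall_coeff {c : ℤ} {x : ℤ⟦X⟧} : (c : ℤ⟦X⟧) ∣ x ↔ ∀ n, c ∣ coeff n x := by
  rw [← eq_intCast (C : ℤ →+* ℤ⟦X⟧)]
  constructor
  · rintro ⟨y, rfl⟩ n
    rw [coeff_C_mul]
    exact dvd_mul_right _ _
  · intro h
    choose y hy using h
    exact ⟨mk y, by ext n; rw [coeff_C_mul, coeff_mk, hy]⟩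

lemma smodEq_sevenIdeal_pow_iff {k : ℕ} {x y : ℤ⟦X⟧} :
    x ≡ y [SMOD sevenIdeal ^ k] ↔ ∀ n, (7 : ℤ) ^ k ∣ coeff n x - coeff n y := by
  simp_rw [smodEq_sevenIdeal_pow_iff_dvd, ← map_sub]
  rw [← intCast_dvd_iff_forall_coeff]
  norm_cast

lemma seven_mem_sevenIdeal : ((7 : ℕ) : ℤ⟦X⟧) ∈ sevenIdeal := Ideal.mem_span_singleton_self _

lemma seven_pow_smul_smodEq_iff {k i : ℕ} {x y : ℤ⟦X⟧} :
    (7 : ℤ) ^ i • x ≡ (7 : ℤ) ^ i • y [SMOD sevenIdeal ^ (k + i)] ↔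
      x ≡ y [SMOD sevenIdeal ^ k] := by
  simp_rw [smodEq_sevenIdeal_pow_iff, map_zsmul, ← zsmul_sub, smul_eq_mul, add_comm k, pow_add]
  exact forall_congr' fun n => mul_dvd_mul_iff_left (by positivity)

variable {x y : ℤ⟦X⟧} {k l : ℕ}

lemma smodEq_sevenIdeal_mono (hl : l ≤ k) (h : x ≡ y [SMOD sevenIdeal ^ k]) :
    x ≡ y [SMOD sevenIdeal ^ l] := h.mono (Ideal.pow_le_pow_right hl)

lemma dissect_smodEq (h : x ≡ y [SMOD sevenIdeal ^ k]) (p s : ℕ) :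
    dissect p s x ≡ dissect p s y [SMOD sevenIdeal ^ k] := by
  rw [smodEq_sevenIdeal_pow_iff] at h ⊢
  simp only [coeff_dissect, h, implies_true]

lemma pow_smodEq_of_seven_pow_dvd {e : ℕ} (h : x ≡ y [SMOD sevenIdeal]) (he : 7 ^ l ∣ e) :
    x ^ e ≡ y ^ e [SMOD sevenIdeal ^ (l + 1)] := by
  obtain ⟨t, rfl⟩ := he
  simpa only [pow_mul] using (h.pow_pow_add_one seven_mem_sevenIdeal l).pow t

lemma smodEq_sevenIdeal_iff_map_eq :
    x ≡ y [SMOD sevenIdeal] ↔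
      map (Int.castRingHom (ZMod 7)) x = map (Int.castRingHom (ZMod 7)) y := by
  rw [← pow_one sevenIdeal, smodEq_sevenIdeal_pow_iff, PowerSeries.ext_iff]
  refine forall_congr' fun n => ?_
  rw [coeff_map, coeff_map, eq_intCast, eq_intCast, eq_comm, ZMod.intCast_eq_intCast_iff_dvd_sub]
  norm_num

lemma pow_seven_smodEq_expand (x : ℤ⟦X⟧) :
    x ^ 7 ≡ expand 7 (by norm_num) x [SMOD sevenIdeal] := by
  have : Fact (Nat.Prime 7) := ⟨by norm_num⟩
  rw [smodEq_sevenIdeal_iff_map_eq, map_pow, map_expand]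
  set z := map (Int.castRingHom (ZMod 7)) x
  have hfrob := MvPowerSeries.map_frobenius_expand (p := 7) (hp := by norm_num) (f := z)
  rw [← hfrob, ZMod.frobenius_zmod]
  exact DFunLike.congr_fun MvPowerSeries.map_id _

variable {R : Type*} [CommRing R]

lemma dissect_mul_expand {p s : ℕ} (hs : s < p) (hp : p ≠ 0) (x z : R⟦X⟧) :
    dissect p s (x * expand p hp z) = dissect p s x * z := by
  ext n
  rw [coeff_dissect, coeff_mul, coeff_mul]
  symm
  refine Finset.sum_of_injOn (fun ij => (p * ij.1 + s, p * ij.2)) ?_ ?_ ?_ ?_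
  · rintro ⟨i, j⟩ - ⟨i', j'⟩ - h
    simpa [hp] using h
  · rintro ⟨i, j⟩ hij
    simp only [Finset.mem_coe, Finset.HasAntidiagonal.mem_antidiagonal] at hij ⊢
    rw [← hij]
    ring
  · rintro ⟨i, j⟩ hij hnot
    rw [Finset.HasAntidiagonal.mem_antidiagonal] at hij
    rw [coeff_expand_of_not_dvd, mul_zero]
    rintro ⟨j', rfl⟩
    have hj' : j' ≤ n := by
      by_contra! hlt
      nlinarith
    refine hnot ⟨(n - j', j'), by simp [hj'], ?_⟩
    obtain ⟨i', rfl⟩ := Nat.exists_eq_add_of_le' hj'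
    simp only [Prod.mk.injEq, and_true, Nat.add_sub_cancel]
    linarith
  · rintro ⟨i, j⟩ -
    rw [coeff_dissect, coeff_expand_mul]

lemma dissect_zero_X_pow_mul {p a a' s : ℕ} (h : p * a' = a + s) (hs : s < p) (x : R⟦X⟧) :
    dissect p 0 (X ^ a * x) = X ^ a' * dissect p s x := by
  ext n
  rw [coeff_dissect, add_zero, coeff_X_pow_mul', coeff_X_pow_mul']
  rcases le_or_gt a' n with hn | hn
  · obtain ⟨i, rfl⟩ := Nat.exists_eq_add_of_le hn
    have hle : p * (a' + i) = a + (p * i + s) := by linarith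
    rw [if_pos hn, if_pos (hle ▸ Nat.le_add_right _ _), coeff_dissect, hle, Nat.add_sub_cancel_left,
      Nat.add_sub_cancel_left]
  · have hlt : p * n < a := by nlinarith
    rw [if_neg hn.not_ge, if_neg hlt.not_ge]

end Congruence

section Sturm

open PowerSeries

variable {m : ℕ} {x : ℤ⟦X⟧}

lemma exists_eq_smul_formE_pow_of_lt_two (hm : m < 2) (hx : x ∈ integralForms m) :
    ∃ c : ℤ, x = c • formE ^ m := by
  suffices integralForms m ≤ ℤ ∙ formE ^ m by
    obtain ⟨c, hc⟩ := Submodule.mem_span_singleton.1 (this hx)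
    exact ⟨c, hc.symm⟩
  refine Submodule.span_le.2 ?_
  rintro _ ⟨a, b, hab, rfl⟩
  obtain ⟨rfl, rfl⟩ : b = 0 ∧ a = m := by omega
  simp

lemma exists_eq_smul_formE_pow_add_formD_mul (hx : x ∈ integralForms (m + 2)) :
    ∃ c : ℤ, ∃ x' ∈ integralForms m, x = c • formE ^ (m + 2) + formD * x' := by
  suffices integralForms (m + 2) ≤
      (ℤ ∙ formE ^ (m + 2)) ⊔ (integralForms m).map (LinearMap.mulLeft ℤ formD) by
    obtain ⟨y, hy, z, hz, rfl⟩ := Submodule.mem_sup.1 (this hx)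
    obtain ⟨c, rfl⟩ := Submodule.mem_span_singleton.1 hy
    obtain ⟨x', hx', rfl⟩ := hz
    exact ⟨c, x', hx', rfl⟩
  refine Submodule.span_le.2 ?_
  rintro _ ⟨a, b | b, hab, rfl⟩
  · obtain rfl : a = m + 2 := by omega
    exact Submodule.mem_sup_left (by simp)
  · refine Submodule.mem_sup_right
      ⟨_, monomial_mem_integralForms (a := a) (b := b) (by omega), ?_⟩
    rw [LinearMap.mulLeft_apply]
    ring

lemma dvd_coeff_mul_of_forall_le {N : ℤ} {n : ℕ} (h : ∀ i ≤ n, N ∣ coeff i x) (y : ℤ⟦X⟧) :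
    ∀ i ≤ n, N ∣ coeff i (x * y) := by
  intro i hi
  rw [coeff_mul]
  refine Finset.dvd_sum fun ij hij => (h _ ?_).mul_right _
  exact (Finset.HasAntidiagonal.antidiagonal.fst_le hij).trans hi

lemma dvd_coeff_of_dvd_coeff_formD_mul {N : ℤ} {n : ℕ}
    (h : ∀ i ≤ n + 1, N ∣ coeff i (formD * x)) : ∀ i ≤ n, N ∣ coeff i x := by
  have hshift : ∀ i ≤ n, N ∣ coeff i (J 2 ^ 16 * invJ 1 ^ 8 * x) := fun i hi => by
    have hi' := h (i + 1) (by omega)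
    rwa [formD, mul_assoc, coeff_succ_X_mul] at hi'
  have hx : x = J 2 ^ 16 * invJ 1 ^ 8 * x * (J 1 ^ 8 * invJ 2 ^ 16) := by
    calc x = (J 2 * invJ 2) ^ 16 * (J 1 * invJ 1) ^ 8 * x := by
          rw [J_mul_invJ two_ne_zero, J_mul_invJ one_ne_zero, one_pow, one_pow, one_mul, one_mul]
      _ = _ := by ring
  rw [hx]
  exact dvd_coeff_mul_of_forall_le hshift _

lemma constantCoeff_formE_pow (n : ℕ) : constantCoeff (formE ^ n) = 1 := by
  rw [map_pow, constantCoeff_formE, one_pow]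

lemma constantCoeff_formD : constantCoeff formD = 0 := by simp [formD]

-- The constant term determines the coefficient of `E ^ m`; dividing the rest by `D = q + ⋯`
-- lowers the weight.
theorem exists_eq_smul_of_forall_dvd_coeff {N : ℤ} (hx : x ∈ integralForms m)
    (h : ∀ i ≤ m / 2, N ∣ coeff i x) : ∃ y ∈ integralForms m, x = N • y := by
  have hsmul {m : ℕ} {c : ℤ} (hc : N ∣ c) :
      ∃ y ∈ integralForms m, c • formE ^ m = N • y := by
    obtain ⟨d, rfl⟩ := hc
    exact ⟨d • formE ^ m, Submodule.smul_mem _ _ (formE_pow_mem_integralForms m), mul_smul _ _ _⟩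
  have hconst := h 0 (Nat.zero_le _)
  rw [coeff_zero_eq_constantCoeff_apply] at hconst
  induction m using Nat.strong_induction_on generalizing x with
  | _ m ih =>
    rcases lt_or_ge m 2 with hm | hm
    · obtain ⟨c, rfl⟩ := exists_eq_smul_formE_pow_of_lt_two hm hx
      rw [map_zsmul, constantCoeff_formE_pow, smul_eq_mul, mul_one] at hconst
      exact hsmul hconst
    · obtain ⟨m, rfl⟩ := Nat.exists_eq_add_of_le' hm
      obtain ⟨c, x', hx', rfl⟩ := exists_eq_smul_formE_pow_add_formD_mul hx
      rw [map_add, map_zsmul, constantCoeff_formE_pow, map_mul, constantCoeff_formD, zero_mul,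
        add_zero, smul_eq_mul, mul_one] at hconst
      have hx'_dvd : ∀ i ≤ m / 2, N ∣ coeff i x' := by
        refine dvd_coeff_of_dvd_coeff_formD_mul fun i hi => ?_
        have hi := h i (by omega)
        rw [map_add, map_zsmul, smul_eq_mul] at hi
        exact (dvd_add_right (hconst.mul_right _)).1 hi
      obtain ⟨y, hy, hcy⟩ := hsmul (m := m + 2) hconst
      obtain ⟨y', hy', rfl⟩ := ih m (by omega) hx' hx'_dvd
        (by simpa using hx'_dvd 0 (Nat.zero_le _))
      refine ⟨y + formD * y', add_mem hy ?_, by rw [hcy, smul_add, mul_smul_comm]⟩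
      exact add_comm 2 m ▸ mul_mem_integralForms formD_mem_integralForms hy'

theorem smodEq_of_forall_dvd_coeff_sub {k : ℕ} {y : ℤ⟦X⟧} (hx : x ∈ integralForms m)
    (hy : y ∈ integralForms m) (h : ∀ i ≤ m / 2, (7 : ℤ) ^ k ∣ coeff i x - coeff i y) :
    x ≡ y [SMOD sevenIdeal ^ k] := by
  obtain ⟨z, -, hz⟩ := exists_eq_smul_of_forall_dvd_coeff (N := 7 ^ k) (sub_mem hx hy)
    fun i hi => by simpa only [map_sub] using h i hi
  refine smodEq_sevenIdeal_pow_iff_dvd.2 ⟨z, ?_⟩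
  rw [hz, zsmul_eq_mul]
  norm_cast

lemma mem_integralForms_of_smul_mem {N : ℤ} (hN : N ≠ 0) (hx : N • x ∈ integralForms m) :
    x ∈ integralForms m := by
  obtain ⟨y, hy, hxy⟩ := exists_eq_smul_of_forall_dvd_coeff hx fun i _ => by
    rw [map_zsmul]
    exact dvd_mul_right _ _
  convert hy
  ext n
  exact mul_left_cancel₀ hN (by simpa only [map_zsmul, smul_eq_mul] using congrArg (coeff n) hxy)

end Sturm

section EisensteinSix

open PowerSeries
open scoped UpperHalfPlane

/-- The `q`-expansion `1 - 504 ∑ σ₅(n) qⁿ` of the Eisenstein series of weight 6. -/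
def eisensteinSix : ℤ⟦X⟧ :=
  mk fun n => if n = 0 then 1 else -504 * (ArithmeticFunction.sigma 5 n : ℤ)

lemma toComplex_eisensteinSix :
    toComplex eisensteinSix = UpperHalfPlane.qExpansion 1 ModularForm.E₆ := by
  ext n
  rw [coeff_toComplex, eisensteinSix, coeff_mk, EisensteinSeries.E_qExpansion_coeff _ ⟨3, rfl⟩]
  split_ifs with hn
  · simp
  · rw [show bernoulli 6 = 1 / 42 by decide +kernel]
    push_cast
    norm_num

lemma hasSum_eisensteinSix (τ : ℍ) :
    HasSum (fun n => coeff n (toComplex eisensteinSix) * nome τ ^ n) (ModularForm.E₆ τ) := by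
  have hsum := ModularForm.hasSum_qExpansion ModularForm.E₆ one_pos (by simp) τ
  rw [← toComplex_eisensteinSix] at hsum
  have hparam : Function.Periodic.qParam 1 (τ : ℂ) = nome τ := by
    rw [Function.Periodic.qParam, nome]
    simp
  rwa [hparam] at hsum

lemma toComplex_eisensteinSix_mem : toComplex eisensteinSix ∈ discSeries := by
  intro z hz
  rcases eq_or_ne z 0 with rfl | hz0
  · refine summable_of_ne_finset_zero (s := {0}) fun n hn => ?_
    rw [zero_pow (by simpa using hn), mul_zero]
  · obtain ⟨τ, hτ, rfl⟩ := exists_nome_eq hz0 hz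
    exact (hasSum_eisensteinSix ⟨τ, hτ⟩).summable

lemma discEval_eisensteinSix {τ : ℂ} (hτ : 0 < τ.im) :
    discEval (toComplex eisensteinSix) (nome τ) = ModularForm.E₆ ⟨τ, hτ⟩ :=
  (hasSum_eisensteinSix ⟨τ, hτ⟩).tsum_eq

lemma E₆_S_smul (τ : ℍ) : ModularForm.E₆ (ModularGroup.S • τ) = (τ : ℂ) ^ 6 * ModularForm.E₆ τ := by
  have hinv : SlashAction.map (6 : ℤ) ModularGroup.S (ModularForm.E₆ : ℍ → ℂ) =
      (ModularForm.E₆ : ℍ → ℂ) :=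
    SlashInvariantFormClass.slash_action_eq ModularForm.E₆
      (Matrix.SpecialLinearGroup.mapGL ℝ ModularGroup.S) ⟨_, rfl⟩
  rw [(ModularForm.slash_action_eq'_iff 6 ModularForm.E₆ ModularGroup.S τ).1 (by rw [hinv])]
  simp [ModularGroup.S]

lemma isFrickePair_eisensteinSix :
    IsFrickePair 6 (toComplex eisensteinSix)
      ((64 : ℂ) • expand 2 two_ne_zero (toComplex eisensteinSix)) := by
  refine ⟨toComplex_eisensteinSix_mem,
    discSeries.smul_mem (expand_mem_discSeries toComplex_eisensteinSix_mem _ _) _,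
    fun {τ} hτ => ?_⟩
  have h2τ : 0 < (((2 : ℕ) : ℂ) * τ).im := by simpa using hτ
  have hS : ModularGroup.S • (⟨(2 : ℕ) * τ, h2τ⟩ : ℍ) = ⟨fricke τ, im_fricke_pos hτ⟩ := by
    rw [UpperHalfPlane.modular_S_smul]
    ext
    simp only [fricke]
    rw [← one_div, div_neg, neg_div]
    norm_num
  rw [discEval_smul, discEval_expand toComplex_eisensteinSix_mem _ _ (norm_nome_lt_one hτ),
    ← nome_natCast_mul, discEval_eisensteinSix h2τ, discEval_eisensteinSix (im_fricke_pos hτ), ← hS,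
    E₆_S_smul, UpperHalfPlane.coe_mk]
  push_cast
  norm_cast
  ring

lemma eisensteinSix_mem_integralForms : eisensteinSix ∈ integralForms 3 :=
  mem_integralForms_of_isFrickePair isFrickePair_eisensteinSix

lemma eisensteinSix_smodEq_one : eisensteinSix ≡ 1 [SMOD sevenIdeal] := by
  rw [← pow_one sevenIdeal, smodEq_sevenIdeal_pow_iff]
  intro n
  rw [eisensteinSix, coeff_mk, coeff_one]
  split_ifs with hn
  · simp
  · exact ⟨-72 * (ArithmeticFunction.sigma 5 n : ℤ), by ring⟩

lemma coeff_one_J_one : coeff 1 (J 1) = -1 := by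
  rw [J, coeff_mk]
  simp [Finset.prod_range_succ, coeff_one_mul, coeff_one, coeff_X_pow]

lemma coeff_one_J_two : coeff 1 (J 2) = 0 := by
  rw [J, coeff_mk]
  simp [Finset.prod_range_succ, coeff_one_mul, coeff_one, coeff_X_pow]

lemma coeff_one_formE : coeff 1 formE = 24 := by
  have h24 : (24 : ℤ⟦X⟧) = C 24 := rfl
  rw [formE, map_add, h24, coeff_C_mul, coeff_one_mul]
  have hderiv (x : ℤ⟦X⟧) : constantCoeff (d⁄dX ℤ x) = coeff 1 x := by
    simp [← coeff_zero_eq_constantCoeff_apply, coeff_derivative, -coeff_zero_eq_constantCoeff]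
  simp [coeff_one, constantCoeff_invJ, hderiv, coeff_one_J_one, coeff_one_J_two]

lemma coeff_one_formD : coeff 1 formD = 1 := by
  rw [formD, coeff_one_mul]
  simp [constantCoeff_J, constantCoeff_invJ]

/-- The form of weight 4 whose product with `formE` is the Eisenstein series of weight 6. It
inverts `formE` modulo `7`. -/
def formF : ℤ⟦X⟧ := formE ^ 2 - 576 * formD

theorem formE_mul_formF : formE * formF = eisensteinSix := by
  obtain ⟨c, x, hx, h⟩ := exists_eq_smul_formE_pow_add_formD_mul eisensteinSix_mem_integralForms
  obtain ⟨d, rfl⟩ := exists_eq_smul_formE_pow_of_lt_two one_lt_two hx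
  obtain rfl : c = 1 := by
    have h0 := congrArg (coeff 0) h
    simp only [eisensteinSix, coeff_mk] at h0
    simpa [constantCoeff_formE, constantCoeff_formD] using h0.symm
  obtain rfl : d = -576 := by
    have h1 := congrArg (coeff 1) h
    simp only [eisensteinSix, coeff_mk] at h1
    simp [coeff_one_mul, coeff_one_pow, constantCoeff_formE, constantCoeff_formD, coeff_one_formE,
      coeff_one_formD] at h1
    omega
  rw [h, formF]
  simp
  ring

lemma constantCoeff_eisensteinSix : constantCoeff eisensteinSix = 1 := by
  rw [← coeff_zero_eq_constantCoeff_apply, eisensteinSix, coeff_mk, if_pos rfl]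

lemma exists_sq_eq_one_add_four_X_mul (z : ℤ⟦X⟧) :
    ∃ w : ℤ⟦X⟧, constantCoeff w = 0 ∧ (1 + 2 * w) ^ 2 = 1 + 4 * (X * z) := by
  have : HenselianRing ℤ⟦X⟧ (Ideal.span {X}) := IsAdicComplete.henselianRing _ _
  obtain ⟨w, hroot, hw⟩ := HenselianRing.is_henselian (I := Ideal.span {(X : ℤ⟦X⟧)})
    (Polynomial.X ^ 2 + (Polynomial.X + Polynomial.C (-(X * z))))
    (Polynomial.monic_X_pow_add ((Polynomial.degree_X_add_C _).trans_lt (by norm_num))) 0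
    (by simp [Ideal.mem_span_singleton]) (by simp)
  refine ⟨w, ?_, ?_⟩
  · rwa [sub_zero, Ideal.mem_span_singleton, X_dvd_iff] at hw
  · simp only [Polynomial.IsRoot, Polynomial.eval_add, Polynomial.eval_pow, Polynomial.eval_X,
      Polynomial.eval_C] at hroot
    linear_combination 4 * hroot

lemma smodEq_one_of_sq_smodEq_one {x : ℤ⟦X⟧} (hx : constantCoeff x = 1)
    (h : x ^ 2 ≡ 1 [SMOD sevenIdeal]) : x ≡ 1 [SMOD sevenIdeal] := by
  have : Fact (Nat.Prime 7) := ⟨by norm_num⟩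
  rw [smodEq_sevenIdeal_iff_map_eq, map_pow, map_one] at h
  rw [smodEq_sevenIdeal_iff_map_eq, map_one]
  refine (sq_eq_sq_iff_eq_or_eq_neg.1 (h.trans (one_pow 2).symm)).resolve_right fun hneg => ?_
  have hconst := congrArg constantCoeff hneg
  simp only [map_neg, map_one, ← coeff_zero_eq_constantCoeff_apply, coeff_map] at hconst
  rw [coeff_zero_eq_constantCoeff_apply, hx, map_one] at hconst
  have : Fact (2 < 7) := ⟨by norm_num⟩
  exact ZMod.neg_one_ne_one hconst.symm

lemma exists_sq_eq_eisensteinSix :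
    ∃ x : ℤ⟦X⟧, x ^ 2 = eisensteinSix ∧ x ≡ 1 [SMOD sevenIdeal] := by
  obtain ⟨w, hw, hsq⟩ := exists_sq_eq_one_add_four_X_mul
    (mk fun n => -126 * (ArithmeticFunction.sigma 5 (n + 1) : ℤ))
  have heq : (1 + 2 * w) ^ 2 = eisensteinSix := by
    have h4 : (4 : ℤ⟦X⟧) = C 4 := rfl
    rw [hsq, h4]
    ext (_ | n)
    · simp [constantCoeff_eisensteinSix]
    · rw [map_add, coeff_C_mul, coeff_succ_X_mul, eisensteinSix, coeff_mk, coeff_mk, coeff_one]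
      simp
      ring
  refine ⟨1 + 2 * w, heq, smodEq_one_of_sq_smodEq_one ?_ (heq ▸ eisensteinSix_smodEq_one)⟩
  simp [hw]

/-- The square root of the Eisenstein series of weight 6 that is congruent to `1` modulo `7`. -/
def sqrtEisensteinSix : ℤ⟦X⟧ := exists_sq_eq_eisensteinSix.choose

lemma sqrtEisensteinSix_sq : sqrtEisensteinSix ^ 2 = eisensteinSix :=
  exists_sq_eq_eisensteinSix.choose_spec.1

lemma sqrtEisensteinSix_smodEq_one : sqrtEisensteinSix ≡ 1 [SMOD sevenIdeal] :=
  exists_sq_eq_eisensteinSix.choose_spec.2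

end EisensteinSix

section Transfer

open PowerSeries

/-- The unit part `J₂¹⁶ / J₁⁸` of `formD`. -/
def unitD : ℤ⟦X⟧ := J 2 ^ 16 * invJ 1 ^ 8

lemma formD_eq_X_mul_unitD : formD = X * unitD := rfl

variable {G : ℤ⟦X⟧} {l e₁ e₂ a b a' b' s m m' : ℕ}

lemma unitD_pow_mul_formG_pow {u v : ℕ} (hu : u + 8 * a = 16 * b) (hv : v + 8 * b = 16 * a) :
    unitD ^ a * formG ^ b = J 1 ^ u * J 2 ^ v := by
  calc unitD ^ a * formG ^ b
      = J 2 ^ (16 * a) * invJ 1 ^ (8 * a) * (J 1 ^ (16 * b) * invJ 2 ^ (8 * b)) := by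
        rw [unitD, formG]
        simp only [mul_pow, ← pow_mul]
    _ = J 1 ^ u * J 2 ^ v * ((J 1 * invJ 1) ^ (8 * a) * (J 2 * invJ 2) ^ (8 * b)) := by
        rw [← hu, ← hv]
        ring
    _ = J 1 ^ u * J 2 ^ v := by
        rw [J_mul_invJ one_ne_zero, J_mul_invJ two_ne_zero, one_pow, one_pow, mul_one, mul_one]

lemma exists_dissect_unitD_formG_smodEq (hG : G ∈ integralForms m)
    (hpos : m + 2 * a + 2 * b ≠ 0) (ha : 7 * a' = a + s) (hs : s < 7) (hb : 7 * b' ≤ b + 6)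
    (hweight : m + 2 * a + 2 * b = m' + 2 * a' + 2 * b') :
    ∃ G' ∈ integralForms m', dissect 7 s (unitD ^ a * formG ^ b * G) ≡
      unitD ^ a' * formG ^ b' * G' [SMOD sevenIdeal ^ (2 * (m + 2 * a + 2 * b) - 1)] := by
  obtain ⟨G', hG', r, hr⟩ := exists_dissect_seven_eq hG (a' := a') (by omega) hb hpos hweight
  refine ⟨G', hG', ?_⟩
  simp only [formD_eq_X_mul_unitD, mul_pow, mul_assoc] at hr
  rw [dissect_zero_X_pow_mul ha hs, ← sub_eq_iff_eq_add', ← mul_sub] at hr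
  rw [smodEq_sevenIdeal_pow_iff]
  intro n
  have hcoeff := congrArg (coeff (n + a')) hr
  have h7 : (7 : ℤ⟦X⟧) = C 7 := rfl
  rw [coeff_X_pow_mul, h7, ← map_pow, coeff_C_mul] at hcoeff
  simp only [mul_assoc, ← map_sub, hcoeff, dvd_mul_right]

lemma J_pow_mul_expand_invJ_pow_smodEq_one {i e : ℕ} (hi : i ≠ 0) (he : 7 ^ l ∣ e) :
    J i ^ (7 * e) * expand 7 (by norm_num) (invJ i ^ e) ≡ 1 [SMOD sevenIdeal ^ (l + 1)] := by
  have hfrob := (pow_smodEq_of_seven_pow_dvd (pow_seven_smodEq_expand (J i)) he).mul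
    (SModEq.refl (expand 7 (by norm_num) (invJ i ^ e)))
  rwa [← pow_mul, ← map_pow, ← map_mul, ← mul_pow, J_mul_invJ hi, one_pow, map_one] at hfrob

-- Multiplying by seventh powers of `J₁` and `J₂`, which pass through the dissection by the
-- Frobenius congruence, turns `P` into a holomorphic eta quotient to which Hecke theory applies.
theorem exists_dissect_mul_smodEq {P P' : ℤ⟦X⟧}
    (hP : P * J 1 ^ (7 * e₁) * J 2 ^ (7 * e₂) = unitD ^ a * formG ^ b)
    (hP' : P' * J 1 ^ e₁ * J 2 ^ e₂ = unitD ^ a' * formG ^ b')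
    (he₁ : 7 ^ l ∣ e₁) (he₂ : 7 ^ l ∣ e₂) (ha : 7 * a' = a + s) (hs : s < 7)
    (hb : 7 * b' ≤ b + 6) (hG : G ∈ integralForms m)
    (hweight : m + 2 * a + 2 * b = m' + 2 * a' + 2 * b')
    (hl : l + 2 ≤ 2 * (m + 2 * a + 2 * b)) :
    ∃ G' ∈ integralForms m',
      dissect 7 s (P * G) ≡ P' * G' [SMOD sevenIdeal ^ (l + 1)] := by
  obtain ⟨G', hG', hdissect⟩ :=
    exists_dissect_unitD_formG_smodEq (s := s) hG (by omega) ha hs hb hweight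
  refine ⟨G', hG', ?_⟩
  set I := invJ 1 ^ e₁ * invJ 2 ^ e₂
  have hsource : unitD ^ a * formG ^ b * G * expand 7 (by norm_num) I ≡ P * G
      [SMOD sevenIdeal ^ (l + 1)] := by
    calc unitD ^ a * formG ^ b * G * expand 7 (by norm_num) I
        = P * G * (J 1 ^ (7 * e₁) * expand 7 (by norm_num) (invJ 1 ^ e₁) *
            (J 2 ^ (7 * e₂) * expand 7 (by norm_num) (invJ 2 ^ e₂))) := by
          rw [← hP, map_mul]
          ring
      _ ≡ P * G * (1 * 1) [SMOD sevenIdeal ^ (l + 1)] :=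
          SModEq.rfl.mul ((J_pow_mul_expand_invJ_pow_smodEq_one one_ne_zero he₁).mul
            (J_pow_mul_expand_invJ_pow_smodEq_one two_ne_zero he₂))
      _ = P * G := by rw [mul_one, mul_one]
  have htarget : unitD ^ a' * formG ^ b' * G' * I = P' * G' := by
    calc unitD ^ a' * formG ^ b' * G' * I
        = P' * G' * ((J 1 * invJ 1) ^ e₁ * (J 2 * invJ 2) ^ e₂) := by
          rw [← hP']
          ring
      _ = P' * G' := by
          rw [J_mul_invJ one_ne_zero, J_mul_invJ two_ne_zero, one_pow, one_pow, mul_one, mul_one]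
  have h := dissect_smodEq hsource.symm 7 s
  rw [dissect_mul_expand hs] at h
  rw [← htarget]
  exact h.trans ((smodEq_sevenIdeal_mono (by omega) hdissect).mul SModEq.rfl)

lemma exists_dissect_five_smodEq (hG : G ∈ integralForms m) (he₁ : 7 ^ l ∣ e₁) (he₂ : 7 ^ l ∣ e₂)
    (ha : 24 * a = 7 * (e₁ + 2 * e₂) + 6) (hb : 24 * b = 7 * (2 * e₁ + e₂) + 3)
    (ha' : 7 * a' = a + 5) (hb' : 7 * b' = b + 6)
    (hweight : m + 2 * a + 2 * b = m' + 2 * a' + 2 * b')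
    (hl : l + 2 ≤ 2 * (m + 2 * a + 2 * b)) :
    ∃ G' ∈ integralForms m',
      dissect 7 5 (J 2 ^ 3 * G) ≡ J 1 ^ 8 * J 2 ^ 5 * G' [SMOD sevenIdeal ^ (l + 1)] := by
  refine exists_dissect_mul_smodEq ?_ ?_ he₁ he₂ ha' (by norm_num) hb'.le hG hweight hl
  · rw [unitD_pow_mul_formG_pow (u := 7 * e₁) (v := 7 * e₂ + 3) (by omega) (by omega)]
    ring
  · rw [unitD_pow_mul_formG_pow (u := e₁ + 8) (v := e₂ + 5) (by omega) (by omega)]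
    ring

lemma exists_dissect_one_smodEq (hG : G ∈ integralForms m) (he₁ : 7 ^ l ∣ e₁) (he₂ : 7 ^ l ∣ e₂)
    (ha : 24 * a = 7 * (e₁ + 2 * e₂) + 18) (hb : 24 * b = 7 * (2 * e₁ + e₂) + 21)
    (ha' : 7 * a' = a + 1) (hb' : 7 * b' = b)
    (hweight : m + 2 * a + 2 * b = m' + 2 * a' + 2 * b')
    (hl : l + 2 ≤ 2 * (m + 2 * a + 2 * b)) :
    ∃ G' ∈ integralForms m',
      dissect 7 1 (J 1 ^ 8 * J 2 ^ 5 * G) ≡ J 2 ^ 3 * G' [SMOD sevenIdeal ^ (l + 1)] := by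
  refine exists_dissect_mul_smodEq ?_ ?_ he₁ he₂ ha' (by norm_num) (by omega) hG hweight hl
  · rw [unitD_pow_mul_formG_pow (u := 7 * e₁ + 8) (v := 7 * e₂ + 5) (by omega) (by omega)]
    ring
  · rw [unitD_pow_mul_formG_pow (u := e₁) (v := e₂ + 3) (by omega) (by omega)]
    ring

lemma exists_dissect_two_smodEq (h3 : 3 ≤ e₁) (he₁ : 7 ^ l ∣ e₁) (he₂ : 7 ^ l ∣ e₂)
    (ha : 24 * a + 6 = 7 * (e₁ + 2 * e₂)) (hb : 24 * b + 27 = 7 * (2 * e₁ + e₂))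
    (ha' : 7 * a' = a + 2) (hb' : 7 * b' = b + 2) (hweight : 2 * a + 2 * b = m' + 2 * a' + 2 * b')
    (hl : l + 2 ≤ 2 * (2 * a + 2 * b)) :
    ∃ G' ∈ integralForms m',
      dissect 7 2 (invJ 1 ^ 16 * J 2 ^ 5) ≡ J 2 ^ 3 * G' [SMOD sevenIdeal ^ (l + 1)] := by
  rw [← mul_one (invJ 1 ^ 16 * J 2 ^ 5)]
  refine exists_dissect_mul_smodEq (m := 0) (b := b) (b' := b') ?_ ?_ he₁ he₂ ha'
    (by norm_num) (by omega) one_mem_integralForms (by omega) (by omega)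
  · obtain ⟨u, hu⟩ : ∃ u, 7 * e₁ = u + 16 := ⟨7 * e₁ - 16, by omega⟩
    calc invJ 1 ^ 16 * J 2 ^ 5 * J 1 ^ (7 * e₁) * J 2 ^ (7 * e₂)
        = J 1 ^ u * J 2 ^ (7 * e₂ + 5) * (J 1 * invJ 1) ^ 16 := by
          rw [hu]
          ring
      _ = unitD ^ a * formG ^ b := by
          rw [J_mul_invJ one_ne_zero, one_pow, mul_one,
            unitD_pow_mul_formG_pow (u := u) (v := 7 * e₂ + 5) (by omega) (by omega)]
  · rw [unitD_pow_mul_formG_pow (u := e₁) (v := e₂ + 3) (by omega) (by omega)]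
    ring

end Transfer

/-! ### Truncated power series modulo 343 packed into one natural number -/

section PackedDigits

open Finset

/-- Evaluates `n` to a literal before passing it on: the kernel can only select a branch of the
recursor once it knows the value of `n`. Mathematically `forceNat n f = f n`. -/
def forceNat {α : Type} (n : ℕ) (f : ℕ → α) : α := Nat.rec (f 0) (fun m _ => f (m + 1)) n

lemma forceNat_eq {α : Type} (n : ℕ) (f : ℕ → α) : forceNat n f = f n := by cases n <;> rfl

/-- The weight `(2 ^ 64) ^ k` of the `k`-th digit of a packed sequence. -/
@[irreducible]
def digitWeight (k : ℕ) : ℕ := 2 ^ (64 * k)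

lemma digitWeight_eq (k : ℕ) : digitWeight k = (2 ^ 64) ^ k := by rw [digitWeight, pow_mul]

lemma digitWeight_add (k l : ℕ) : digitWeight (k + l) = digitWeight k * digitWeight l := by
  simp only [digitWeight_eq, pow_add]

lemma digitWeight_pos (k : ℕ) : 0 < digitWeight k := by rw [digitWeight_eq]; positivity

lemma digitWeight_zero : digitWeight 0 = 1 := by rw [digitWeight_eq, pow_zero]

lemma digitWeight_one : digitWeight 1 = 2 ^ 64 := by rw [digitWeight_eq, pow_one]

/-- The natural number whose first `n` digits in radix `2 ^ 64` are `a 0, …, a (n - 1)`. -/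
def packDigits (a : ℕ → ℕ) (n : ℕ) : ℕ := ∑ i ∈ range n, a i * digitWeight i

lemma packDigits_add (a : ℕ → ℕ) (n m : ℕ) :
    packDigits a (n + m) = packDigits a n + digitWeight n * packDigits (fun i => a (n + i)) m := by
  rw [packDigits, sum_range_add, packDigits, packDigits, mul_sum]
  congr 1
  exact sum_congr rfl fun i _ => by rw [digitWeight_add]; ring

lemma packDigits_succ' (a : ℕ → ℕ) (n : ℕ) :
    packDigits a (n + 1) = a 0 + digitWeight 1 * packDigits (fun i => a (i + 1)) n := by
  simpa [packDigits, digitWeight_zero, add_comm] using packDigits_add a 1 n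

lemma packDigits_lt {a : ℕ → ℕ} {n : ℕ} (h : ∀ i < n, a i < 2 ^ 64) :
    packDigits a n < digitWeight n := by
  induction n with
  | zero => simp [packDigits, digitWeight_zero]
  | succ n ih =>
    have hlow := ih fun i hi => h i (by omega)
    have htop := h n (by omega)
    rw [packDigits] at hlow
    rw [packDigits, sum_range_succ, digitWeight_add, digitWeight_one]
    nlinarith [digitWeight_pos n]

lemma packDigits_div {a : ℕ → ℕ} {n : ℕ} (m : ℕ) (h : ∀ i < n, a i < 2 ^ 64) :
    packDigits a (n + m) / digitWeight n = packDigits (fun i => a (n + i)) m := by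
  rw [packDigits_add, Nat.add_mul_div_left _ _ (digitWeight_pos n),
    Nat.div_eq_of_lt (packDigits_lt h), zero_add]

/-- The `i`-th digit of `N` in radix `2 ^ 64`. -/
def digit (N i : ℕ) : ℕ := N / digitWeight i % 2 ^ 64

lemma digit_packDigits {a : ℕ → ℕ} {n i : ℕ} (hi : i < n) (h : ∀ i < n, a i < 2 ^ 64) :
    digit (packDigits a n) i = a i := by
  obtain ⟨m, rfl⟩ : ∃ m, n = i + (m + 1) := ⟨n - i - 1, by omega⟩
  rw [digit, packDigits_div _ fun j hj => h j (by omega), packDigits_succ', digitWeight_one,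
    Nat.add_mul_mod_self_left, Nat.mod_eq_of_lt (h _ (by omega)), add_zero]

lemma packDigits_land {a b : ℕ → ℕ} {n : ℕ} (ha : ∀ i < n, a i < 2 ^ 64)
    (hb : ∀ i < n, b i < 2 ^ 64) :
    packDigits a n &&& packDigits b n = packDigits (fun i => a i &&& b i) n := by
  induction n generalizing a b with
  | zero => simp [packDigits]
  | succ n ih =>
    have hland := ih (fun i hi => ha (i + 1) (by omega)) fun i hi => hb (i + 1) (by omega)
    simp only [packDigits_succ', digitWeight_one, ← hland]
    rw [add_comm (a 0), add_comm (b 0), add_comm (a 0 &&& b 0)]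
    refine Nat.eq_of_testBit_eq fun i => ?_
    have ha0 := ha 0 (by omega)
    have hb0 := hb 0 (by omega)
    simp only [Nat.testBit_land, Nat.testBit_two_pow_mul_add _ ha0,
      Nat.testBit_two_pow_mul_add _ hb0, Nat.testBit_two_pow_mul_add _ (Nat.and_lt_two_pow _ hb0)]
    split_ifs <;> rfl

lemma packDigits_const (c n : ℕ) :
    packDigits (fun _ => c) n = c * ((digitWeight n - 1) / (2 ^ 64 - 1)) := by
  rw [digitWeight_eq, ← Nat.geomSum_eq (by norm_num), packDigits, mul_sum]
  simp only [digitWeight_eq]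

/-- Reduces all `n` digits `a i < 2 ^ 32` of `N` simultaneously modulo 343, up to an error of one:
the new digits are `a i - 343 * q i`, where the quotient `q i = ⌊a i * c / 2 ^ 40⌋` with
`c = ⌊2 ^ 40 / 343⌋ = 3205573258` is read off after masking the low 40 bits of each `a i * c`. -/
def reduceDigits (n N : ℕ) : ℕ :=
  forceNat N fun N => forceNat (N * 3205573258) fun P => N - 343 *
    ((P - (P &&& (2 ^ 40 - 1) * ((digitWeight n - 1) / (2 ^ 64 - 1)))) / 2 ^ 40)

lemma reduceDigits_packDigits {a : ℕ → ℕ} {n : ℕ} (ha : ∀ i < n, a i < 2 ^ 32) :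
    reduceDigits n (packDigits a n) =
      packDigits (fun i => a i - 343 * (a i * 3205573258 / 2 ^ 40)) n := by
  have hscaled : packDigits a n * 3205573258 = packDigits (fun i => a i * 3205573258) n := by
    simp only [packDigits, sum_mul, mul_right_comm]
  have hland : packDigits (fun i => a i * 3205573258) n &&& packDigits (fun _ => 2 ^ 40 - 1) n =
      packDigits (fun i => a i * 3205573258 % 2 ^ 40) n := by
    rw [packDigits_land (fun i hi => by have := ha i hi; omega) fun _ _ => by norm_num]
    simp only [Nat.and_two_pow_sub_one_eq_mod]
  have hsplit : packDigits (fun i => a i * 3205573258) n =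
      2 ^ 40 * packDigits (fun i => a i * 3205573258 / 2 ^ 40) n +
        packDigits (fun i => a i * 3205573258 % 2 ^ 40) n := by
    simp only [packDigits, mul_sum, ← sum_add_distrib, ← mul_assoc, ← add_mul, Nat.div_add_mod]
  have hquot : packDigits a n =
      packDigits (fun i => a i - 343 * (a i * 3205573258 / 2 ^ 40)) n +
        343 * packDigits (fun i => a i * 3205573258 / 2 ^ 40) n := by
    simp only [packDigits, mul_sum, ← sum_add_distrib, ← mul_assoc, ← add_mul]
    exact sum_congr rfl fun i _ => by rw [Nat.sub_add_cancel (by omega)]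
  simp only [reduceDigits, forceNat_eq, ← packDigits_const]
  rw [hscaled, hland, hsplit, Nat.add_sub_cancel, Nat.mul_div_cancel_left _ (by norm_num)]
  omega

lemma packDigits_mul_modEq (a b : ℕ → ℕ) (n : ℕ) :
    packDigits a n * packDigits b n ≡
      packDigits (fun k => ∑ p ∈ antidiagonal k, a p.1 * b p.2) n [MOD digitWeight n] := by
  induction n generalizing a with
  | zero => simpa [packDigits] using Nat.ModEq.refl _
  | succ n ih =>
    have htrunc : packDigits b (n + 1) ≡ packDigits b n [MOD digitWeight n] := by
      rw [packDigits_add, Nat.ModEq, Nat.add_mul_mod_self_left]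
    have htail := ((Nat.ModEq.mul_left _ htrunc).trans (ih fun i => a (i + 1))).mul_left'
      (digitWeight 1)
    rw [← digitWeight_add, add_comm 1 n] at htail
    have hconv : packDigits (fun k => ∑ p ∈ antidiagonal k, a p.1 * b p.2) (n + 1) =
        a 0 * packDigits b (n + 1) + digitWeight 1 *
          packDigits (fun k => ∑ p ∈ antidiagonal k, a (p.1 + 1) * b p.2) n := by
      simp only [packDigits_succ', Nat.antidiagonal_zero, sum_singleton, Nat.sum_antidiagonal_succ]
      simp only [packDigits, add_mul, sum_add_distrib, mul_add, mul_sum]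
      ring_nf
    rw [hconv, packDigits_succ' a, add_mul, mul_assoc]
    exact htail.add_left _

end PackedDigits

section PackedSeries

open PowerSeries Finset

variable {K b c N M : ℕ} {x y : ℤ⟦X⟧}

/-- `N` packs residues modulo 343, all of them at most `b`, of the coefficients of `x` in degrees
below `2 ^ K`. -/
def IsPacked (K b N : ℕ) (x : ℤ⟦X⟧) : Prop :=
  ∃ a : ℕ → ℕ, N = packDigits a (2 ^ K) ∧
    ∀ i < 2 ^ K, a i ≤ b ∧ (a i : ℤ) ≡ coeff i x [ZMOD 343]

namespace IsPacked

lemma mono (h : IsPacked K b N x) (hbc : b ≤ c) : IsPacked K c N x :=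
  let ⟨a, hN, ha⟩ := h
  ⟨a, hN, fun i hi => ⟨(ha i hi).1.trans hbc, (ha i hi).2⟩⟩

lemma congr (h : IsPacked K b N x) (hxy : ∀ i < 2 ^ K, coeff i x ≡ coeff i y [ZMOD 343]) :
    IsPacked K b N y :=
  let ⟨a, hN, ha⟩ := h
  ⟨a, hN, fun i hi => ⟨(ha i hi).1, (ha i hi).2.trans (hxy i hi)⟩⟩

lemma add (hx : IsPacked K b N x) (hy : IsPacked K c M y) :
    IsPacked K (b + c) (N + M) (x + y) := by
  obtain ⟨a, rfl, ha⟩ := hx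
  obtain ⟨a', rfl, ha'⟩ := hy
  refine ⟨fun i => a i + a' i, ?_, fun i hi => ⟨add_le_add (ha i hi).1 (ha' i hi).1, ?_⟩⟩
  · simp only [packDigits, add_mul, sum_add_distrib]
  · rw [map_add, Nat.cast_add]
    exact (ha i hi).2.add (ha' i hi).2

lemma nat_smul (k : ℕ) (h : IsPacked K b N x) : IsPacked K (k * b) (k * N) (k • x) := by
  obtain ⟨a, rfl, ha⟩ := h
  refine ⟨fun i => k * a i, ?_, fun i hi => ⟨Nat.mul_le_mul_left _ (ha i hi).1, ?_⟩⟩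
  · simp only [packDigits, mul_sum, mul_assoc]
  · rw [map_nsmul, nsmul_eq_mul, Nat.cast_mul]
    exact (ha i hi).2.mul_left _

lemma zero (K : ℕ) : IsPacked K 0 0 0 :=
  ⟨0, by simp [packDigits], fun i _ => by simp⟩

lemma X_pow (K e : ℕ) : IsPacked K 1 (digitWeight e % digitWeight (2 ^ K)) (X ^ e) := by
  by_cases he : e < 2 ^ K
  · refine ⟨fun i => if i = e then 1 else 0, ?_, fun i _ => ?_⟩
    · rw [Nat.mod_eq_of_lt]
      · simp [packDigits, he]
      · simpa only [digitWeight_eq] using Nat.pow_lt_pow_right (by norm_num) he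
    · simp only [coeff_X_pow]
      split_ifs <;> simp
  · obtain ⟨m, rfl⟩ := Nat.exists_eq_add_of_le (not_lt.1 he)
    rw [digitWeight_add, Nat.mul_mod_right]
    refine ((zero K).mono zero_le_one).congr fun i hi => ?_
    rw [coeff_X_pow, if_neg (by omega), map_zero]

lemma one (K : ℕ) : IsPacked K 1 1 1 := by
  have hlt : 1 < digitWeight (2 ^ K) := by
    rw [digitWeight_eq]; exact Nat.one_lt_pow (by positivity) (by norm_num)
  simpa [digitWeight_zero, Nat.mod_eq_of_lt hlt] using X_pow K 0

lemma digit_modEq (h : IsPacked K b N x) (hb : b < 2 ^ 64) {i : ℕ} (hi : i < 2 ^ K) :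
    (digit N i : ℤ) ≡ coeff i x [ZMOD 343] := by
  obtain ⟨a, rfl, ha⟩ := h
  rw [digit_packDigits hi fun j hj => (ha j hj).1.trans_lt hb]
  exact (ha i hi).2

lemma reduce (h : IsPacked K b N x) (hb : b < 2 ^ 32) :
    IsPacked K 344 (reduceDigits (2 ^ K) N) x := by
  obtain ⟨a, rfl, ha⟩ := h
  have ha' : ∀ i < 2 ^ K, a i < 2 ^ 32 := fun i hi => (ha i hi).1.trans_lt hb
  refine ⟨_, reduceDigits_packDigits ha', fun i hi => ⟨?_, ?_⟩⟩
  · have := ha' i hi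
    omega
  · refine Int.ModEq.trans (Int.modEq_iff_dvd.2 ?_) (ha i hi).2
    omega

end IsPacked

/-- Packed form of the product of two packed series. -/
def packedMul (K N M : ℕ) : ℕ := reduceDigits (2 ^ K) (N * M % digitWeight (2 ^ K))

-- The bound `K ≤ 12` keeps the unreduced digits of a product below `2 ^ 12 * 344 ^ 2 < 2 ^ 32`.
lemma IsPacked.mul (hK : K ≤ 12) (hx : IsPacked K 344 N x) (hy : IsPacked K 344 M y) :
    IsPacked K 344 (packedMul K N M) (x * y) := by
  obtain ⟨a, rfl, ha⟩ := hx
  obtain ⟨a', rfl, ha'⟩ := hy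
  have hdigit : ∀ k < 2 ^ K, ∑ p ∈ antidiagonal k, a p.1 * a' p.2 ≤ 2 ^ 12 * 344 ^ 2 :=
    fun k hk => by
      have hk' : k < 2 ^ 12 := hk.trans_le (Nat.pow_le_pow_right (by norm_num) hK)
      calc ∑ p ∈ antidiagonal k, a p.1 * a' p.2 ≤ ∑ _p ∈ antidiagonal k, 344 ^ 2 :=
            sum_le_sum fun p hp => by
              have := mem_antidiagonal.1 hp
              exact Nat.mul_le_mul (ha _ (by omega)).1 (ha' _ (by omega)).1
        _ = (k + 1) * 344 ^ 2 := by rw [sum_const, Nat.card_antidiagonal, smul_eq_mul]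
        _ ≤ 2 ^ 12 * 344 ^ 2 := by omega
  have hprod : IsPacked K (2 ^ 12 * 344 ^ 2)
      (packDigits (fun k => ∑ p ∈ antidiagonal k, a p.1 * a' p.2) (2 ^ K)) (x * y) := by
    refine ⟨_, rfl, fun i hi => ⟨hdigit i hi, ?_⟩⟩
    rw [coeff_mul]
    push_cast
    refine Int.ModEq.sum fun p hp => ?_
    have := mem_antidiagonal.1 hp
    exact (ha _ (by omega)).2.mul (ha' _ (by omega)).2
  rw [packedMul, packDigits_mul_modEq a a' (2 ^ K),
    Nat.mod_eq_of_lt (packDigits_lt fun k hk => (hdigit k hk).trans_lt (by norm_num))]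
  exact hprod.reduce (by norm_num)

/-- Packed form of a power of a packed series. -/
def packedPow (K N : ℕ) : ℕ → ℕ
  | 0 => 1
  | j + 1 => forceNat (packedPow K N j) fun r => packedMul K r N

lemma IsPacked.pow (hK : K ≤ 12) (h : IsPacked K 344 N x) (j : ℕ) :
    IsPacked K 344 (packedPow K N j) (x ^ j) := by
  induction j with
  | zero => simpa [packedPow] using (IsPacked.one K).mono (by norm_num : 1 ≤ 344)
  | succ j ih =>
    rw [packedPow, forceNat_eq, pow_succ]
    exact ih.mul hK h

/-- The `j`-th Newton approximation `r ↦ 2 * r - x * r ^ 2` to the inverse of a series, with `-1`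
replaced by `342` so that it makes sense for packed series. -/
def newtonInv (x : ℤ⟦X⟧) : ℕ → ℤ⟦X⟧
  | 0 => 1
  | j + 1 => 2 • newtonInv x j + 342 • (newtonInv x j * (x * newtonInv x j))

lemma exists_one_sub_mul_newtonInv (hx : constantCoeff x = 1) (j : ℕ) :
    ∃ u v, 1 - x * newtonInv x j = X ^ 2 ^ j * u + 343 * v := by
  induction j with
  | zero =>
    obtain ⟨u, hu⟩ := X_dvd_iff.2 (show constantCoeff (1 - x) = 0 by simp [hx])
    exact ⟨u, 0, by simp [newtonInv, hu]⟩
  | succ j ih =>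
    obtain ⟨u, v, h⟩ := ih
    refine ⟨u ^ 2, 2 * X ^ 2 ^ j * u * v + 343 * v ^ 2 - (x * newtonInv x j) ^ 2, ?_⟩
    have hsq : (1 - x * newtonInv x j) ^ 2 = (X ^ 2 ^ j * u + 343 * v) ^ 2 := by rw [h]
    rw [newtonInv, pow_succ 2 j, pow_mul, nsmul_eq_mul, nsmul_eq_mul]
    push_cast
    linear_combination hsq

lemma coeff_newtonInv_modEq (hx : constantCoeff x = 1) (hxy : x * y = 1) {i j : ℕ}
    (hi : i < 2 ^ j) : coeff i (newtonInv x j) ≡ coeff i y [ZMOD 343] := by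
  obtain ⟨u, v, h⟩ := exists_one_sub_mul_newtonInv hx j
  have hdiff : y - newtonInv x j = X ^ 2 ^ j * (y * u) + C 343 * (y * v) := by
    rw [show (C 343 : ℤ⟦X⟧) = 343 from rfl]
    linear_combination y * h + newtonInv x j * hxy
  refine Int.modEq_of_dvd ?_
  rw [← map_sub, hdiff, map_add, coeff_X_pow_mul', if_neg (by omega), zero_add, coeff_C_mul]
  exact dvd_mul_right _ _

/-- Packed form of `newtonInv`. -/
def packedInv (K N : ℕ) : ℕ → ℕ
  | 0 => 1
  | j + 1 => forceNat (packedInv K N j) fun r => forceNat (packedMul K N r) fun z =>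
      forceNat (packedMul K r z) fun w => reduceDigits (2 ^ K) (2 * r + 342 * w)

lemma IsPacked.packedInv_newtonInv (hK : K ≤ 12) (h : IsPacked K 344 N x) (j : ℕ) :
    IsPacked K 344 (packedInv K N j) (newtonInv x j) := by
  induction j with
  | zero => exact (IsPacked.one K).mono (by norm_num)
  | succ j ih =>
    simp only [packedInv, forceNat_eq, newtonInv]
    exact ((ih.nat_smul 2).add ((ih.mul hK (h.mul hK ih)).nat_smul 342)).reduce (by norm_num)

lemma IsPacked.inv (hK : K ≤ 12) (h : IsPacked K 344 N x) (hx : constantCoeff x = 1)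
    (hxy : x * y = 1) : IsPacked K 344 (packedInv K N K) y :=
  (h.packedInv_newtonInv hK K).congr fun _ hi => coeff_newtonInv_modEq hx hxy hi

end PackedSeries

section Pentagonal

open PowerSeries Finset

lemma J_one_eq_pentagonalSeries : J 1 = pentagonalSeries ℤ := by
  ext n
  obtain ⟨N, hN, hnN⟩ := ((Filter.tendsto_finset_range.eventually
    (coeff_prod_one_sub_X_pow_eventually_eq ℤ n)).and
      (Filter.eventually_ge_atTop (n + 1))).exists
  rw [← hN, ← coeff_prod_one_sub_X_pow one_ne_zero hnN]
  simp

/-- The first `T` terms of Euler's pentagonal number series for `J b`, to which the Euler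
derivative `X * d/dX` has been applied `e` times. -/
def pentagonalSum (e b T : ℕ) : ℤ⟦X⟧ :=
  ∑ k ∈ range T, (-1) ^ k *
    ((b * pentagonal (-(k : ℤ))) ^ e • X ^ (b * pentagonal (-(k : ℤ))) -
      (b * pentagonal ((k : ℤ) + 1)) ^ e • X ^ (b * pentagonal ((k : ℤ) + 1)))

lemma coeff_pentagonalSum (e b T i : ℕ) :
    coeff i (pentagonalSum e b T) = i ^ e * coeff i (pentagonalSum 0 b T) := by
  have hmonomial (m : ℕ) : coeff i (m ^ e • X ^ m : ℤ⟦X⟧) = i ^ e * coeff i (X ^ m : ℤ⟦X⟧) := by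
    rw [map_nsmul, nsmul_eq_mul, coeff_X_pow]
    split_ifs with h <;> simp [h]
  simp only [pentagonalSum, map_sum, mul_sum, pow_zero, one_smul]
  refine sum_congr rfl fun k _ => ?_
  rw [show ((-1) ^ k : ℤ⟦X⟧) = C ((-1) ^ k) by simp, coeff_C_mul, coeff_C_mul, map_sub, map_sub,
    hmonomial, hmonomial]
  ring

lemma sq_le_pentagonal_neg (k : ℕ) : k ^ 2 ≤ pentagonal (-(k : ℤ)) := by
  zify
  nlinarith [two_mul_natCast_pentagonal_neg k, sq_nonneg (k : ℤ)]

lemma coeff_J_one_eq_coeff_pentagonalSum {T i : ℕ} (hi : i < T ^ 2) :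
    coeff i (J 1) = coeff i (pentagonalSum 0 1 T) := by
  let : TopologicalSpace ℤ := ⊥
  have : DiscreteTopology ℤ := ⟨rfl⟩
  let := WithPiTopology.instTopologicalSpace (R := ℤ)
  have hsum := (WithPiTopology.hasSum_pow_pentagonal_sub_pentagonalSeries ℤ).map
    (coeff (R := ℤ) i) (WithPiTopology.continuous_coeff ℤ i)
  have hfin := hasSum_sum_of_ne_finset_zero (s := range T) (L := .unconditional ℕ)
    (f := coeff i ∘ fun k : ℕ =>
      ((-1) ^ k * (X ^ pentagonal (-(k : ℤ)) - X ^ pentagonal ((k : ℤ) + 1)) : ℤ⟦X⟧)) <| by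
    intro k hk
    have hTk : T ^ 2 ≤ k ^ 2 := Nat.pow_le_pow_left (by simpa using hk) 2
    have hneg := sq_le_pentagonal_neg k
    have hsucc := pentagonal_neg_lt_pentagonal_add_one (Int.natCast_nonneg k)
    rw [Function.comp_apply, show ((-1) ^ k : ℤ⟦X⟧) = C ((-1) ^ k) by simp, coeff_C_mul, map_sub,
      coeff_X_pow, coeff_X_pow, if_neg (by omega), if_neg (by omega), sub_zero, mul_zero]
  rw [J_one_eq_pentagonalSeries, hsum.unique hfin, pentagonalSum, map_sum]
  simp only [one_mul, pow_zero, one_smul, Function.comp_apply]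

lemma coeff_J_eq_coeff_pentagonalSum {b T i : ℕ} (hb : b ≠ 0) (hi : i < T ^ 2) :
    coeff i (J b) = coeff i (pentagonalSum 0 b T) := by
  have hexpand : pentagonalSum 0 b T = expand b hb (pentagonalSum 0 1 T) := by
    simp only [pentagonalSum, map_sum, map_mul, map_pow, map_neg, map_one, map_sub, expand_X,
      ← pow_mul, one_mul, pow_zero, one_smul]
  rw [J_eq_expand b hb, hexpand, coeff_expand, coeff_expand]
  split_ifs
  · exact coeff_J_one_eq_coeff_pentagonalSum ((Nat.div_le_self _ _).trans_lt hi)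
  · rfl

/-- Packed form of `m ^ e • X ^ m`. -/
def packedMonomial (K e m : ℕ) : ℕ := m ^ e % 343 * (digitWeight m % digitWeight (2 ^ K))

lemma isPacked_packedMonomial (K e m : ℕ) :
    IsPacked K 342 (packedMonomial K e m) (m ^ e • X ^ m) := by
  refine (((IsPacked.X_pow K m).nat_smul (m ^ e % 343)).mono (by omega)).congr fun i _ => ?_
  rw [map_nsmul, map_nsmul, nsmul_eq_mul, nsmul_eq_mul, Int.natCast_mod]
  exact (Int.mod_modEq _ _).mul_right _

/-- Packed form of `pentagonalSum e b T`, with unreduced digits. -/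
def packedPentagonalSum (K e b : ℕ) : ℕ → ℕ
  | 0 => 0
  | k + 1 => forceNat (packedPentagonalSum K e b k) fun r => r + 342 ^ k % 343 *
      (packedMonomial K e (b * pentagonal (-(k : ℤ))) +
        342 * packedMonomial K e (b * pentagonal ((k : ℤ) + 1)))

lemma isPacked_packedPentagonalSum (K e b T : ℕ) :
    IsPacked K (T * (342 * (342 + 342 * 342))) (packedPentagonalSum K e b T)
      (pentagonalSum e b T) := by
  induction T with
  | zero => simpa [pentagonalSum, packedPentagonalSum] using IsPacked.zero K
  | succ k ih =>
    rw [packedPentagonalSum, forceNat_eq, pentagonalSum, sum_range_succ, ← pentagonalSum, add_mul,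
      one_mul]
    refine ih.add (((((isPacked_packedMonomial K e _).add
      ((isPacked_packedMonomial K e _).nat_smul 342)).nat_smul
        (342 ^ k % 343)).mono ?_).congr fun i _ => ?_)
    · exact Nat.mul_le_mul_right _ (Nat.le_of_lt_succ (Nat.mod_lt _ (by norm_num)))
    · have h342 : (342 : ℤ) ≡ -1 [ZMOD 343] := by decide
      have hsign : ((342 ^ k % 343 : ℕ) : ℤ) ≡ (-1) ^ k [ZMOD 343] := by
        push_cast
        exact (Int.mod_modEq _ _).trans (h342.pow k)
      rw [show ((-1) ^ k : ℤ⟦X⟧) = C ((-1) ^ k) by simp, coeff_C_mul, map_nsmul, map_add,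
        map_nsmul _ 342, map_sub, nsmul_eq_mul, nsmul_eq_mul, sub_eq_add_neg]
      exact hsign.mul (Int.ModEq.rfl.add (neg_one_mul (_ : ℤ) ▸ h342.mul_right _))

/-- Packed form of the `e`-fold Euler derivative of `J b`. -/
def packedJ (K e b : ℕ) : ℕ :=
  reduceDigits (2 ^ K) (packedPentagonalSum K e b (2 ^ ((K + 1) / 2)))

lemma isPacked_packedJ {K e b : ℕ} (hK : K ≤ 12) (hb : b ≠ 0) {x : ℤ⟦X⟧}
    (hx : ∀ i, coeff i x = i ^ e * coeff i (J b)) : IsPacked K 344 (packedJ K e b) x := by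
  refine ((isPacked_packedPentagonalSum K e b _).congr fun i hi => ?_).reduce ?_
  · have hi' : i < (2 ^ ((K + 1) / 2)) ^ 2 := by
      rw [← pow_mul]; exact hi.trans_le (Nat.pow_le_pow_right (by norm_num) (by omega))
    rw [coeff_pentagonalSum, hx, coeff_J_eq_coeff_pentagonalSum hb hi']
  · have hT : 2 ^ ((K + 1) / 2) ≤ 2 ^ 6 := Nat.pow_le_pow_right (by norm_num) (by omega)
    omega

end Pentagonal

section SeriesExpr

open PowerSeries

/-- Formal expressions for the power series whose coefficients modulo 343 are computed by the
kernel. -/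
inductive SeriesExpr
  | const (c : ℕ)
  | X
  | J (b : ℕ) (hb : b ≠ 0)
  | invJ (b : ℕ) (hb : b ≠ 0)
  | thetaJ (b : ℕ) (hb : b ≠ 0)
  | add (e f : SeriesExpr)
  | sub (e f : SeriesExpr)
  | mul (e f : SeriesExpr)
  | pow (e : SeriesExpr) (n : ℕ)

namespace SeriesExpr

instance : Add SeriesExpr := ⟨add⟩
instance : Sub SeriesExpr := ⟨sub⟩
instance : Mul SeriesExpr := ⟨mul⟩
instance : Pow SeriesExpr ℕ := ⟨pow⟩
instance (n : ℕ) : OfNat SeriesExpr n := ⟨const n⟩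

/-- The power series denoted by an expression; `theta` stands for the Euler derivative
`X * d/dX`. -/
def toSeries : SeriesExpr → ℤ⟦X⟧
  | const c => c
  | X => PowerSeries.X
  | J b _ => _root_.J b
  | invJ b _ => _root_.invJ b
  | thetaJ b _ => PowerSeries.X * d⁄dX ℤ (_root_.J b)
  | add e f => e.toSeries + f.toSeries
  | sub e f => e.toSeries - f.toSeries
  | mul e f => e.toSeries * f.toSeries
  | pow e n => e.toSeries ^ n

@[simp] lemma toSeries_ofNat (n : ℕ) :
    toSeries (no_index (OfNat.ofNat n)) = ((OfNat.ofNat n : ℕ) : ℤ⟦X⟧) := rfl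
@[simp] lemma toSeries_const (c : ℕ) : (const c).toSeries = c := rfl

@[simp] lemma toSeries_X : X.toSeries = PowerSeries.X := rfl
@[simp] lemma toSeries_invJ {b : ℕ} (hb : b ≠ 0) : (invJ b hb).toSeries = _root_.invJ b := rfl
@[simp] lemma toSeries_thetaJ {b : ℕ} (hb : b ≠ 0) :
    (thetaJ b hb).toSeries = PowerSeries.X * d⁄dX ℤ (_root_.J b) := rfl
@[simp] lemma toSeries_add (e f : SeriesExpr) : (e + f).toSeries = e.toSeries + f.toSeries := rfl
@[simp] lemma toSeries_sub (e f : SeriesExpr) : (e - f).toSeries = e.toSeries - f.toSeries := rfl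
@[simp] lemma toSeries_mul (e f : SeriesExpr) : (e * f).toSeries = e.toSeries * f.toSeries := rfl
@[simp] lemma toSeries_pow (e : SeriesExpr) (n : ℕ) : (e ^ n).toSeries = e.toSeries ^ n := rfl

/-- The coefficients modulo 343 of the denoted series in degrees below `2 ^ K`, packed. -/
def pack (K : ℕ) : SeriesExpr → ℕ
  | const c => c % 343
  | X => digitWeight 1 % digitWeight (2 ^ K)
  | J b _ => packedJ K 0 b
  | invJ b _ => forceNat (packedJ K 0 b) fun N => packedInv K N K
  | thetaJ b _ => packedJ K 1 b
  | add e f => forceNat (e.pack K) fun N => forceNat (f.pack K) fun M =>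
      reduceDigits (2 ^ K) (N + M)
  | sub e f => forceNat (e.pack K) fun N => forceNat (f.pack K) fun M =>
      reduceDigits (2 ^ K) (N + 342 * M)
  | mul e f => forceNat (e.pack K) fun N => forceNat (f.pack K) fun M => packedMul K N M
  | pow e n => forceNat (e.pack K) fun N => packedPow K N n

lemma isPacked_const (K c : ℕ) : IsPacked K 344 (c % 343) (c : ℤ⟦X⟧) := by
  have hle : c % 343 * 1 ≤ 344 := by omega
  refine (mul_one (c % 343) ▸ ((IsPacked.one K).nat_smul (c % 343)).mono hle).congr fun i _ => ?_
  rw [map_nsmul, nsmul_eq_mul, ← nsmul_one c, map_nsmul, nsmul_eq_mul, Int.natCast_mod]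
  exact (Int.mod_modEq _ _).mul_right _

lemma isPacked_pack {K : ℕ} (hK : K ≤ 12) (e : SeriesExpr) :
    IsPacked K 344 (e.pack K) e.toSeries := by
  induction e with
  | const c => exact isPacked_const K c
  | X => simpa [toSeries, pack] using (IsPacked.X_pow K 1).mono (by norm_num : 1 ≤ 344)
  | J b hb => exact isPacked_packedJ hK hb fun i => by simp [toSeries]
  | invJ b hb =>
    rw [pack, forceNat_eq]
    exact (isPacked_packedJ hK hb fun i => by simp).inv hK (constantCoeff_J hb) (J_mul_invJ hb)
  | thetaJ b hb =>
    refine isPacked_packedJ hK hb fun i => ?_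
    rcases i with _ | i
    · simp [toSeries]
    · rw [toSeries, coeff_succ_X_mul, coeff_derivative]
      push_cast
      ring
  | add e f ihe ihf =>
    simp only [pack, forceNat_eq]; exact (ihe.add ihf).reduce (by norm_num)
  | sub e f ihe ihf =>
    simp only [pack, forceNat_eq]
    refine ((ihe.add (ihf.nat_smul 342)).reduce (by norm_num)).congr fun i _ => ?_
    rw [toSeries, map_add, map_nsmul, map_sub, Int.modEq_iff_dvd]
    exact ⟨-coeff i f.toSeries, by rw [nsmul_eq_mul]; push_cast; ring⟩
  | mul e f ihe ihf => simp only [pack, forceNat_eq]; exact ihe.mul hK ihf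
  | pow e n ih => simp only [pack, forceNat_eq]; exact ih.pow hK n

/-- Checks that the coefficients of `q ^ (7 * i + s)` in `e` and of `q ^ i` in `f` agree modulo
`m` for `i < n`, working with `2 ^ K` coefficients of `e` and `2 ^ L` coefficients of `f`. -/
def checkDissect (K L m s n : ℕ) (e f : SeriesExpr) : Bool :=
  K.ble 12 && L.ble 12 && (343 % m).beq 0 && (7 * n + s).ble (2 ^ K + 6) && n.ble (2 ^ L) &&
    forceNat (e.pack K) fun N => forceNat (f.pack L) fun M =>
      (List.range n).all fun i => (digit N (7 * i + s) % m).beq (digit M i % m)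

lemma coeff_dissect_modEq_of_checkDissect {K L m s n : ℕ} {e f : SeriesExpr}
    (h : checkDissect K L m s n e f = true) {i : ℕ} (hi : i < n) :
    coeff i (dissect 7 s e.toSeries) ≡ coeff i f.toSeries [ZMOD m] := by
  simp only [checkDissect, forceNat_eq, Bool.and_eq_true, Nat.ble_eq,
    List.all_eq_true, List.mem_range] at h
  obtain ⟨⟨⟨⟨⟨hK, hL⟩, hm⟩, hs⟩, hn⟩, hdigits⟩ := h
  have hm' : (m : ℤ) ∣ 343 := mod_cast Nat.dvd_of_mod_eq_zero (Nat.eq_of_beq_eq_true hm)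
  have he := ((isPacked_pack hK e).digit_modEq (by norm_num) (i := 7 * i + s) (by omega)).of_dvd hm'
  have hf := ((isPacked_pack hL f).digit_modEq (by norm_num) (i := i) (by omega)).of_dvd hm'
  rw [coeff_dissect]
  exact he.symm.trans
    ((Int.natCast_modEq_iff.2 (Nat.eq_of_beq_eq_true (hdigits i hi))).trans hf)

/-- The expression denoting `J 1`. -/
def exprJ₁ : SeriesExpr := J 1 one_ne_zero

/-- The expression denoting `J 2`. -/
def exprJ₂ : SeriesExpr := J 2 two_ne_zero

/-- The expression denoting `formE`. -/
def exprE : SeriesExpr :=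
  1 + 24 * (thetaJ 2 two_ne_zero * invJ 2 two_ne_zero - thetaJ 1 one_ne_zero * invJ 1 one_ne_zero)

/-- The expression denoting `formD`. -/
def exprD : SeriesExpr := X * ((exprJ₂ ^ 4) ^ 4 * invJ 1 one_ne_zero ^ 8)

/-- The expression denoting `formF`. -/
def exprF : SeriesExpr := exprE ^ 2 - 576 * exprD

@[simp] lemma toSeries_exprJ₁ : exprJ₁.toSeries = _root_.J 1 := rfl

@[simp] lemma toSeries_exprJ₂ : exprJ₂.toSeries = _root_.J 2 := rfl

@[simp] lemma toSeries_exprE : exprE.toSeries = formE := by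
  simp only [exprE, formE, toSeries_add, toSeries_sub, toSeries_mul, toSeries_thetaJ,
    toSeries_invJ, toSeries_ofNat]
  push_cast
  ring

@[simp] lemma toSeries_exprD : exprD.toSeries = formD := by
  simp [exprD, formD, ← pow_mul]

@[simp] lemma toSeries_exprF : exprF.toSeries = formF := by
  simp [exprF, formF]

end SeriesExpr

end SeriesExpr

/-! ### Dissections modulo 7, 49 and 343 -/

section ReducedForms

open PowerSeries Submodule

lemma exists_smodEq_of_mem_span {T : ℤ⟦X⟧ →ₗ[ℤ] ℤ⟦X⟧} {S : Set ℤ⟦X⟧} {N : Submodule ℤ ℤ⟦X⟧}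
    {I : Ideal ℤ⟦X⟧} {x : ℤ⟦X⟧} (h : ∀ z ∈ S, ∃ y ∈ N, T z ≡ y [SMOD I]) (hx : x ∈ span ℤ S) :
    ∃ y ∈ N, T x ≡ y [SMOD I] := by
  induction hx using span_induction with
  | mem z hz => exact h z hz
  | zero => exact ⟨0, N.zero_mem, by rw [map_zero]⟩
  | add z w _ _ hz hw =>
    obtain ⟨z', hz', hzz'⟩ := hz
    obtain ⟨w', hw', hww'⟩ := hw
    exact ⟨z' + w', N.add_mem hz' hw', by rw [map_add]; exact hzz'.add hww'⟩
  | smul c z _ hz =>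
    obtain ⟨z', hz', hzz'⟩ := hz
    exact ⟨c • z', N.smul_mem c hz', by rw [map_smul]; exact hzz'.zsmul c⟩

/-- Modulo 7 the form `formE * formF` is `1`, and `reducedForms w` consists of the combinations of
monomials in `formE` and `formF` of weight at most `w / 7` and congruent to `w` modulo 3, the shape
of the image under dissection of forms of weight `w`. -/
def reducedForms (w : ℕ) : Submodule ℤ ℤ⟦X⟧ :=
  span ℤ {x | ∃ a b, 7 * (a + 2 * b) ≤ w ∧ a + 2 * b ≡ w [MOD 3] ∧ formE ^ a * formF ^ b = x}

lemma formF_mem_integralForms : formF ∈ integralForms 2 := by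
  have hE := formE_pow_mem_integralForms 2
  have hD := zsmul_mem formD_mem_integralForms 576
  rw [zsmul_eq_mul] at hD
  exact sub_mem hE (by exact_mod_cast hD)

lemma formE_pow_mul_formF_pow_mem_integralForms (a b : ℕ) :
    formE ^ a * formF ^ b ∈ integralForms (a + 2 * b) := by
  rw [mul_comm 2 b]
  exact mul_mem_integralForms (formE_pow_mem_integralForms a)
    (pow_mem_integralForms formF_mem_integralForms b)

lemma mul_eisensteinSix_pow_mem_integralForms {G : ℤ⟦X⟧} {m m' : ℕ} (hG : G ∈ integralForms m)
    (j : ℕ) (hm : m' = m + 3 * j) : G * eisensteinSix ^ j ∈ integralForms m' := by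
  rw [hm, mul_comm 3 j]
  exact mul_mem_integralForms hG (pow_mem_integralForms eisensteinSix_mem_integralForms j)

lemma mul_eisensteinSix_pow_smodEq (G : ℤ⟦X⟧) (j : ℕ) :
    G * eisensteinSix ^ j ≡ G [SMOD sevenIdeal] := by
  simpa only [one_pow, mul_one] using (SModEq.refl G).mul (eisensteinSix_smodEq_one.pow j)

lemma exists_smodEq_of_mem_reducedForms {w m : ℕ} (hw : w < 7 * (m + 3)) (hm : m ≡ w [MOD 3])
    {x : ℤ⟦X⟧} (hx : x ∈ reducedForms w) : ∃ G ∈ integralForms m, x ≡ G [SMOD sevenIdeal] := by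
  refine exists_smodEq_of_mem_span (T := LinearMap.id) ?_ hx
  rintro _ ⟨a, b, hle, hmod, rfl⟩
  obtain ⟨j, hj⟩ : ∃ j, m = a + 2 * b + 3 * j := by
    unfold Nat.ModEq at hm hmod
    exact ⟨(m - (a + 2 * b)) / 3, by omega⟩
  exact ⟨_, mul_eisensteinSix_pow_mem_integralForms
    (formE_pow_mul_formF_pow_mem_integralForms a b) j hj, (mul_eisensteinSix_pow_smodEq _ j).symm⟩

lemma formE_pow_mul_formF_pow_mem_reducedForms {a b w : ℕ} (hle : 7 * (a + 2 * b) ≤ w)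
    (hmod : a + 2 * b ≡ w [MOD 3]) : formE ^ a * formF ^ b ∈ reducedForms w :=
  subset_span ⟨a, b, hle, hmod, rfl⟩

lemma mul_formE_pow_mul_formF_pow_mem_reducedForms {w w' a b : ℕ} {x : ℤ⟦X⟧}
    (hx : x ∈ reducedForms w) (hw : w' = w + 7 * (a + 2 * b)) :
    x * (formE ^ a * formF ^ b) ∈ reducedForms w' := by
  have hle : (reducedForms w).map (LinearMap.mulRight ℤ (formE ^ a * formF ^ b)) ≤
      reducedForms w' := by
    rw [reducedForms, map_span_le]
    rintro _ ⟨c, d, hle, hmod, rfl⟩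
    rw [LinearMap.mulRight_apply, mul_mul_mul_comm, ← pow_add, ← pow_add]
    refine formE_pow_mul_formF_pow_mem_reducedForms (by omega) ?_
    unfold Nat.ModEq at hmod ⊢
    omega
  exact hle ⟨x, hx, rfl⟩

lemma reducedForms_le {w w' k : ℕ} (h : w' = w + 3 * k) : reducedForms w ≤ reducedForms w' := by
  refine span_mono ?_
  rintro _ ⟨a, b, hle, hmod, rfl⟩
  refine ⟨a, b, by omega, ?_, rfl⟩
  unfold Nat.ModEq at hmod ⊢
  omega

lemma formD_smodEq : formD ≡ 4 * (formE ^ 2 - formF) [SMOD sevenIdeal] := by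
  rw [← pow_one sevenIdeal, smodEq_sevenIdeal_pow_iff_dvd, formF]
  exact ⟨-329 * formD, by ring⟩

lemma formE_pow_mul_formD_pow_smodEq (a b : ℕ) :
    formE ^ a * formD ^ b ≡
      ∑ i ∈ Finset.range (b + 1),
        (4 ^ b * (-1) ^ (b - i) * b.choose i : ℤ) • (formE ^ (a + 2 * i) * formF ^ (b - i))
      [SMOD sevenIdeal] := by
  calc formE ^ a * formD ^ b
      ≡ formE ^ a * (4 * (formE ^ 2 + -formF)) ^ b [SMOD sevenIdeal] := by
        rw [← sub_eq_add_neg]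
        exact SModEq.rfl.mul (formD_smodEq.pow b)
    _ = _ := by
        rw [mul_pow, add_pow, Finset.mul_sum, Finset.mul_sum]
        refine Finset.sum_congr rfl fun i _ => ?_
        rw [neg_pow formF, zsmul_eq_mul]
        push_cast
        ring

lemma exists_smodEq_mem_span_formE_formF {m : ℕ} {x : ℤ⟦X⟧} (hx : x ∈ integralForms m) :
    ∃ y ∈ span ℤ {z | ∃ a b, a + 2 * b = m ∧ formE ^ a * formF ^ b = z},
      x ≡ y [SMOD sevenIdeal] := by
  refine exists_smodEq_of_mem_span (T := LinearMap.id) ?_ hx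
  rintro _ ⟨a, b, hab, rfl⟩
  refine ⟨_, sum_mem fun i hi => smul_mem _ _ (subset_span ⟨a + 2 * i, b - i, ?_, rfl⟩),
    formE_pow_mul_formD_pow_smodEq a b⟩
  have := Finset.mem_range.1 hi
  omega

section Linearity

variable {P P' z : ℤ⟦X⟧} {s M₀ : ℕ}

lemma dissect_mul_pow_seven_smodEq (hs : s < 7) (x z : ℤ⟦X⟧) :
    dissect 7 s (x * z ^ 7) ≡ dissect 7 s x * z [SMOD sevenIdeal] := by
  rw [← dissect_mul_expand hs (by norm_num), ← pow_one sevenIdeal]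
  refine dissect_smodEq ?_ 7 s
  rw [pow_one]
  exact SModEq.rfl.mul (pow_seven_smodEq_expand z)

lemma exists_dissect_mul_pow_smodEq {c : ℕ} (hs : s < 7)
    (hz : ∀ {w x} q, x ∈ reducedForms w → x * z ^ q ∈ reducedForms (w + 7 * (c * q)))
    (h : ∀ r < 7, ∃ G ∈ reducedForms (c * r + M₀),
      dissect 7 s (P * z ^ r) ≡ P' * G [SMOD sevenIdeal]) (n : ℕ) :
    ∃ G ∈ reducedForms (c * n + M₀), dissect 7 s (P * z ^ n) ≡ P' * G [SMOD sevenIdeal] := by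
  obtain ⟨G, hG, hdissect⟩ := h (n % 7) (Nat.mod_lt _ (by norm_num))
  have hn : c * n + M₀ = c * (n % 7) + M₀ + 7 * (c * (n / 7)) := by
    conv_lhs => rw [← Nat.mod_add_div n 7]
    ring
  refine ⟨G * z ^ (n / 7), hn ▸ hz (n / 7) hG, ?_⟩
  calc dissect 7 s (P * z ^ n)
      = dissect 7 s (P * z ^ (n % 7) * (z ^ (n / 7)) ^ 7) := by
        conv_lhs => rw [← Nat.mod_add_div n 7]
        ring_nf
    _ ≡ dissect 7 s (P * z ^ (n % 7)) * z ^ (n / 7) [SMOD sevenIdeal] :=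
        dissect_mul_pow_seven_smodEq hs _ _
    _ ≡ P' * G * z ^ (n / 7) [SMOD sevenIdeal] := hdissect.mul SModEq.rfl
    _ = P' * (G * z ^ (n / 7)) := mul_assoc _ _ _

lemma dissect_mul_eisensteinSix_pow_smodEq (x : ℤ⟦X⟧) (j : ℕ) :
    dissect 7 s (x * eisensteinSix ^ j) ≡ dissect 7 s x [SMOD sevenIdeal] := by
  rw [← pow_one sevenIdeal]
  refine dissect_smodEq ?_ 7 s
  rw [pow_one]
  exact mul_eisensteinSix_pow_smodEq x j

lemma exists_dissect_mul_formE_pow_mul_formF_pow_smodEq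
    (hE : ∀ n, ∃ G ∈ reducedForms (n + M₀),
      dissect 7 s (P * formE ^ n) ≡ P' * G [SMOD sevenIdeal])
    (hF : ∀ n, ∃ G ∈ reducedForms (2 * n + M₀),
      dissect 7 s (P * formF ^ n) ≡ P' * G [SMOD sevenIdeal]) (a b : ℕ) :
    ∃ G ∈ reducedForms (a + 2 * b + M₀),
      dissect 7 s (P * (formE ^ a * formF ^ b)) ≡ P' * G [SMOD sevenIdeal] := by
  rcases le_total b a with hab | hab <;> obtain ⟨n, rfl⟩ := Nat.exists_eq_add_of_le hab
  · obtain ⟨G, hG, hdissect⟩ := hE n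
    have hmono : P * (formE ^ (b + n) * formF ^ b) = P * formE ^ n * eisensteinSix ^ b := by
      rw [← formE_mul_formF]
      ring
    refine ⟨G, reducedForms_le (k := b) (by ring) hG, ?_⟩
    rw [hmono]
    exact (dissect_mul_eisensteinSix_pow_smodEq _ b).trans hdissect
  · obtain ⟨G, hG, hdissect⟩ := hF n
    have hmono : P * (formE ^ a * formF ^ (a + n)) = P * formF ^ n * eisensteinSix ^ a := by
      rw [← formE_mul_formF]
      ring
    refine ⟨G, reducedForms_le (k := a) (by ring) hG, ?_⟩
    rw [hmono]
    exact (dissect_mul_eisensteinSix_pow_smodEq _ a).trans hdissect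

-- Modulo 7 a monomial in `formE` and `formF` is a power of one of them, and seventh powers pass
-- through the dissection, so only the powers with exponent below 7 have to be inspected.
theorem exists_dissect_mul_mem_reducedForms (hs : s < 7)
    (hE : ∀ r < 7, ∃ G ∈ reducedForms (r + M₀),
      dissect 7 s (P * formE ^ r) ≡ P' * G [SMOD sevenIdeal])
    (hF : ∀ r < 7, ∃ G ∈ reducedForms (2 * r + M₀),
      dissect 7 s (P * formF ^ r) ≡ P' * G [SMOD sevenIdeal])
    {m : ℕ} {G : ℤ⟦X⟧} (hG : G ∈ integralForms m) :
    ∃ G' ∈ reducedForms (m + M₀), dissect 7 s (P * G) ≡ P' * G' [SMOD sevenIdeal] := by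
  have hE' := exists_dissect_mul_pow_smodEq (z := formE) (c := 1) hs (fun {w x} q hx => by
    simpa using mul_formE_pow_mul_formF_pow_mem_reducedForms (a := q) (b := 0) hx rfl)
    (by simpa only [one_mul] using hE)
  have hF' := exists_dissect_mul_pow_smodEq (z := formF) (c := 2) hs (fun {w x} q hx => by
    simpa using mul_formE_pow_mul_formF_pow_mem_reducedForms (a := 0) (b := q) hx rfl) hF
  simp only [one_mul] at hE'
  have hEF := exists_dissect_mul_formE_pow_mul_formF_pow_smodEq hE' hF'
  obtain ⟨x, hx, hGx⟩ := exists_smodEq_mem_span_formE_formF hG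
  obtain ⟨_, ⟨G', hG', rfl⟩, h⟩ := exists_smodEq_of_mem_span
    (T := dissect 7 s ∘ₗ LinearMap.mulLeft ℤ P) (I := sevenIdeal)
    (N := (reducedForms (m + M₀)).map (LinearMap.mulLeft ℤ P')) (by
      rintro _ ⟨a, b, rfl, rfl⟩
      obtain ⟨G', hG', h⟩ := hEF a b
      exact ⟨_, ⟨G', hG', rfl⟩, h⟩) hx
  rw [← pow_one sevenIdeal] at hGx h ⊢
  exact ⟨G', hG', (dissect_smodEq (SModEq.rfl.mul hGx) 7 s).trans h⟩

end Linearity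

lemma smodEq_mul_of_forall_dvd_coeff {Y P Q G G₀ G₁ : ℤ⟦X⟧} {k m : ℕ} (hPQ : P * Q = 1)
    (hY : Y ≡ P * G₀ [SMOD sevenIdeal ^ k]) (hG₀ : G₀ ∈ integralForms m)
    (hG : G ≡ G₁ [SMOD sevenIdeal ^ k]) (hG₁ : G₁ ∈ integralForms m)
    (hcoeff : ∀ i ≤ m / 2, (7 : ℤ) ^ k ∣ coeff i Y - coeff i (P * G)) :
    Y ≡ P * G [SMOD sevenIdeal ^ k] := by
  suffices G₀ ≡ G₁ [SMOD sevenIdeal ^ k] from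
    hY.trans (SModEq.rfl.mul (this.trans hG.symm))
  refine smodEq_of_forall_dvd_coeff_sub hG₀ hG₁ fun i hi => ?_
  have hG₀_sub : G₀ - G₁ = (P * G₀ - P * G₁) * Q := by linear_combination (G₁ - G₀) * hPQ
  rw [← map_sub, hG₀_sub]
  refine dvd_coeff_mul_of_forall_le (fun j hj => ?_) Q i hi
  have hYj := smodEq_sevenIdeal_pow_iff.1 hY j
  have hGj := smodEq_sevenIdeal_pow_iff.1 ((SModEq.refl P).mul hG) j
  rw [map_sub]
  simpa only [sub_sub_sub_cancel_left, sub_add_sub_cancel] using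
    dvd_add (dvd_sub (hcoeff j hj) hYj) hGj

end ReducedForms

section FiniteChecks

open PowerSeries Submodule
open SeriesExpr (const exprJ₁ exprJ₂ exprE exprD exprF checkDissect)

lemma J_two_pow_mul_invJ_pow (n : ℕ) : J 2 ^ n * invJ 2 ^ n = 1 := by
  rw [← mul_pow, J_mul_invJ two_ne_zero, one_pow]

lemma J_one_pow_mul_invJ_pow (n : ℕ) : J 1 ^ n * invJ 1 ^ n = 1 := by
  rw [← mul_pow, J_mul_invJ one_ne_zero, one_pow]

lemma J_one_pow_mul_J_two_pow_mul_invJ (m n : ℕ) :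
    J 1 ^ m * J 2 ^ n * (invJ 1 ^ m * invJ 2 ^ n) = 1 := by
  rw [mul_mul_mul_comm, J_one_pow_mul_invJ_pow, J_two_pow_mul_invJ_pow, one_mul]

/-- The sum of the terms `c * formE ^ a * formF ^ b` over the listed triples `(c, a, b)`. -/
def monomialSum : List (ℕ × ℕ × ℕ) → SeriesExpr
  | [] => 0
  | (c, a, b) :: l => const c * (exprE ^ a * exprF ^ b) + monomialSum l

lemma toSeries_monomialSum_mem_reducedForms {w : ℕ} {l : List (ℕ × ℕ × ℕ)}
    (hl : ∀ t ∈ l, 7 * (t.2.1 + 2 * t.2.2) ≤ w ∧ t.2.1 + 2 * t.2.2 ≡ w [MOD 3]) :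
    (monomialSum l).toSeries ∈ reducedForms w := by
  induction l with
  | nil => simp [monomialSum]
  | cons t l ih =>
    obtain ⟨⟨hle, hmod⟩, hl⟩ := List.forall_mem_cons.1 hl
    have hterm := smul_mem _ (t.1 : ℤ) (formE_pow_mul_formF_pow_mem_reducedForms hle hmod)
    rw [zsmul_eq_mul, Int.cast_natCast] at hterm
    simpa [monomialSum] using add_mem hterm (ih hl)

lemma exists_mem_reducedForms_of_checkDissect {e P : SeriesExpr} {Q G₀ : ℤ⟦X⟧} {s w : ℕ}
    {l : List (ℕ × ℕ × ℕ)} (hPQ : P.toSeries * Q = 1) (hG₀ : G₀ ∈ integralForms w)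
    (h : dissect 7 s e.toSeries ≡ P.toSeries * G₀ [SMOD sevenIdeal ^ (0 + 1)])
    (hl : ∀ t ∈ l, 7 * (t.2.1 + 2 * t.2.2) ≤ w ∧ t.2.1 + 2 * t.2.2 ≡ w [MOD 3])
    (hcheck : checkDissect 7 5 7 s (w / 2 + 1) e (P * monomialSum l) = true) :
    ∃ G ∈ reducedForms w, dissect 7 s e.toSeries ≡ P.toSeries * G [SMOD sevenIdeal] := by
  have hmem := toSeries_monomialSum_mem_reducedForms hl
  obtain ⟨G₁, hG₁, hsum⟩ := exists_smodEq_of_mem_reducedForms (by omega) rfl hmem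
  refine ⟨_, hmem, ?_⟩
  rw [← pow_one sevenIdeal] at hsum ⊢
  refine smodEq_mul_of_forall_dvd_coeff hPQ h hG₀ hsum hG₁ fun i hi => ?_
  have hi' := SeriesExpr.coeff_dissect_modEq_of_checkDissect hcheck (Nat.lt_succ_of_le hi)
  rw [pow_one, ← SeriesExpr.toSeries_mul]
  exact hi'.symm.dvd

/-- The dissections of `J₂³ Eʳ` divided by `J₁⁸ J₂⁵`, modulo 7. -/
def dissectFiveE : ℕ → List (ℕ × ℕ × ℕ)
  | 1 => [(3, 0, 0)]
  | 5 => [(4, 1, 0)]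
  | _ => []

/-- The dissections of `J₂³ Fʳ` divided by `J₁⁸ J₂⁵`, modulo 7. -/
def dissectFiveF : ℕ → List (ℕ × ℕ × ℕ)
  | 2 => [(4, 0, 0)]
  | 6 => [(3, 0, 1)]
  | _ => []

/-- The dissections of `J₁⁸ J₂⁵ Eʳ` divided by `J₂³`, modulo 7, for `r < 7`. -/
def dissectOneE : ℕ → List (ℕ × ℕ × ℕ)
  | 0 => [(6, 1, 0)]
  | 1 => [(4, 2, 0), (5, 0, 1)]
  | 2 => [(2, 3, 0), (3, 0, 0)]
  | 3 => [(1, 1, 0)]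
  | 4 => [(6, 2, 0), (5, 0, 1)]
  | 5 => [(4, 3, 0), (3, 0, 0)]
  | _ => [(2, 4, 0), (1, 1, 0)]

/-- The dissections of `J₁⁸ J₂⁵ Fʳ` divided by `J₂³`, modulo 7, for `r < 7`. -/
def dissectOneF : ℕ → List (ℕ × ℕ × ℕ)
  | 0 => [(6, 1, 0)]
  | 1 => [(2, 3, 0), (1, 0, 0)]
  | 2 => [(4, 2, 0), (3, 0, 1)]
  | 3 => [(6, 1, 0), (5, 0, 2)]
  | 4 => [(1, 0, 0)]
  | 5 => [(2, 2, 0), (3, 0, 1)]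
  | _ => [(4, 1, 0), (5, 0, 2)]

lemma exists_dissect_five_mem_reducedForms_of_checkDissect {e : SeriesExpr} {m : ℕ}
    {l : List (ℕ × ℕ × ℕ)} (he : e.toSeries ∈ integralForms m)
    (hl : ∀ t ∈ l, 7 * (t.2.1 + 2 * t.2.2) ≤ m + 2 ∧ t.2.1 + 2 * t.2.2 ≡ m + 2 [MOD 3])
    (hcheck : checkDissect 7 5 7 5 ((m + 2) / 2 + 1) (exprJ₂ ^ 3 * e)
      (exprJ₁ ^ 8 * exprJ₂ ^ 5 * monomialSum l) = true) :
    ∃ G ∈ reducedForms (m + 2),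
      dissect 7 5 (J 2 ^ 3 * e.toSeries) ≡ J 1 ^ 8 * J 2 ^ 5 * G [SMOD sevenIdeal] := by
  obtain ⟨G₀, hG₀, h⟩ := exists_dissect_five_smodEq (l := 0) (e₁ := 0) (e₂ := 3) (a := 2) (b := 1)
    (a' := 1) (b' := 1) (m' := m + 2) he (by norm_num) (by norm_num) (by norm_num) (by norm_num)
    (by norm_num) (by norm_num) (by omega) (by omega)
  exact exists_mem_reducedForms_of_checkDissect (P := exprJ₁ ^ 8 * exprJ₂ ^ 5)
    (J_one_pow_mul_J_two_pow_mul_invJ 8 5) hG₀ h hl hcheck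

lemma exists_dissect_one_mem_reducedForms_of_checkDissect {e : SeriesExpr} {m : ℕ}
    {l : List (ℕ × ℕ × ℕ)} (he : e.toSeries ∈ integralForms m)
    (hl : ∀ t ∈ l, 7 * (t.2.1 + 2 * t.2.2) ≤ m + 22 ∧ t.2.1 + 2 * t.2.2 ≡ m + 22 [MOD 3])
    (hcheck : checkDissect 7 5 7 1 ((m + 22) / 2 + 1) (exprJ₁ ^ 8 * exprJ₂ ^ 5 * e)
      (exprJ₂ ^ 3 * monomialSum l) = true) :
    ∃ G ∈ reducedForms (m + 22),
      dissect 7 1 (J 1 ^ 8 * J 2 ^ 5 * e.toSeries) ≡ J 2 ^ 3 * G [SMOD sevenIdeal] := by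
  obtain ⟨G₀, hG₀, h⟩ := exists_dissect_one_smodEq (l := 0) (e₁ := 8) (e₂ := 5) (a := 6) (b := 7)
    (a' := 1) (b' := 1) (m' := m + 22) he (by norm_num) (by norm_num) (by norm_num) (by norm_num)
    (by norm_num) (by norm_num) (by omega) (by omega)
  exact exists_mem_reducedForms_of_checkDissect (P := exprJ₂ ^ 3)
    (J_two_pow_mul_invJ_pow 3) hG₀ h hl hcheck

lemma toSeries_exprE_pow_mem_integralForms (r : ℕ) : (exprE ^ r).toSeries ∈ integralForms r := by
  simpa using formE_pow_mem_integralForms r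

lemma toSeries_exprF_pow_mem_integralForms (r : ℕ) :
    (exprF ^ r).toSeries ∈ integralForms (2 * r) := by
  simpa using formE_pow_mul_formF_pow_mem_integralForms 0 r

set_option maxRecDepth 100000 in
theorem exists_dissect_five_mem_reducedForms {m : ℕ} {G : ℤ⟦X⟧} (hG : G ∈ integralForms m) :
    ∃ G' ∈ reducedForms (m + 2),
      dissect 7 5 (J 2 ^ 3 * G) ≡ J 1 ^ 8 * J 2 ^ 5 * G' [SMOD sevenIdeal] := by
  have hlE : ∀ r < 7, ∀ t ∈ dissectFiveE r,
      7 * (t.2.1 + 2 * t.2.2) ≤ r + 2 ∧ t.2.1 + 2 * t.2.2 ≡ r + 2 [MOD 3] := by decide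
  have hlF : ∀ r < 7, ∀ t ∈ dissectFiveF r,
      7 * (t.2.1 + 2 * t.2.2) ≤ 2 * r + 2 ∧ t.2.1 + 2 * t.2.2 ≡ 2 * r + 2 [MOD 3] := by decide
  have hcheckE : ∀ r < 7, checkDissect 7 5 7 5 ((r + 2) / 2 + 1) (exprJ₂ ^ 3 * exprE ^ r)
      (exprJ₁ ^ 8 * exprJ₂ ^ 5 * monomialSum (dissectFiveE r)) = true := by decide +kernel
  have hcheckF : ∀ r < 7, checkDissect 7 5 7 5 ((2 * r + 2) / 2 + 1) (exprJ₂ ^ 3 * exprF ^ r)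
      (exprJ₁ ^ 8 * exprJ₂ ^ 5 * monomialSum (dissectFiveF r)) = true := by decide +kernel
  refine exists_dissect_mul_mem_reducedForms (by norm_num) (fun r hr => ?_) (fun r hr => ?_) hG
  · simpa using exists_dissect_five_mem_reducedForms_of_checkDissect
      (toSeries_exprE_pow_mem_integralForms r) (hlE r hr) (hcheckE r hr)
  · simpa using exists_dissect_five_mem_reducedForms_of_checkDissect
      (toSeries_exprF_pow_mem_integralForms r) (hlF r hr) (hcheckF r hr)

set_option maxRecDepth 100000 in
theorem exists_dissect_one_mem_reducedForms {m : ℕ} {G : ℤ⟦X⟧} (hG : G ∈ integralForms m) :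
    ∃ G' ∈ reducedForms (m + 22),
      dissect 7 1 (J 1 ^ 8 * J 2 ^ 5 * G) ≡ J 2 ^ 3 * G' [SMOD sevenIdeal] := by
  have hlE : ∀ r < 7, ∀ t ∈ dissectOneE r,
      7 * (t.2.1 + 2 * t.2.2) ≤ r + 22 ∧ t.2.1 + 2 * t.2.2 ≡ r + 22 [MOD 3] := by decide
  have hlF : ∀ r < 7, ∀ t ∈ dissectOneF r,
      7 * (t.2.1 + 2 * t.2.2) ≤ 2 * r + 22 ∧ t.2.1 + 2 * t.2.2 ≡ 2 * r + 22 [MOD 3] := by decide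
  have hcheckE : ∀ r < 7, checkDissect 7 5 7 1 ((r + 22) / 2 + 1)
      (exprJ₁ ^ 8 * exprJ₂ ^ 5 * exprE ^ r)
      (exprJ₂ ^ 3 * monomialSum (dissectOneE r)) = true := by decide +kernel
  have hcheckF : ∀ r < 7, checkDissect 7 5 7 1 ((2 * r + 22) / 2 + 1)
      (exprJ₁ ^ 8 * exprJ₂ ^ 5 * exprF ^ r)
      (exprJ₂ ^ 3 * monomialSum (dissectOneF r)) = true := by decide +kernel
  refine exists_dissect_mul_mem_reducedForms (by norm_num) (fun r hr => ?_) (fun r hr => ?_) hG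
  · simpa using exists_dissect_one_mem_reducedForms_of_checkDissect
      (toSeries_exprE_pow_mem_integralForms r) (hlE r hr) (hcheckE r hr)
  · simpa using exists_dissect_one_mem_reducedForms_of_checkDissect
      (toSeries_exprF_pow_mem_integralForms r) (hlF r hr) (hcheckF r hr)

end FiniteChecks

section HigherChecks

open PowerSeries Submodule
open SeriesExpr (const exprJ₁ exprJ₂ exprE exprD exprF checkDissect)

lemma mul_eisensteinSix_pow_smodEq_of_dvd {l j : ℕ} (G : ℤ⟦X⟧) (hj : 7 ^ l ∣ j) :
    G * eisensteinSix ^ j ≡ G [SMOD sevenIdeal ^ (l + 1)] := by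
  have hE := (SModEq.refl G).mul (pow_smodEq_of_seven_pow_dvd eisensteinSix_smodEq_one hj)
  rwa [one_pow, mul_one] at hE

/-- The coefficients of `E³` and `E D` in the dissection of `J₂³ E⁷⁻²ᵇ Dᵇ` divided by `J₁⁸ J₂⁵`
and by `E₆⁴`, modulo 49, for `b < 4`. -/
def dissectFiveMonomial : ℕ → ℕ × ℕ
  | 0 => (42, 35)
  | 1 => (28, 35)
  | 2 => (48, 30)
  | _ => (40, 11)

/-- The dissection of `J₂³ E⁷⁻²ᵇ Dᵇ` divided by `J₁⁸ J₂⁵`, modulo 49, for `b < 4`. -/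
def dissectFiveExpr (b : ℕ) : SeriesExpr :=
  (const (dissectFiveMonomial b).1 * exprE ^ 3 +
    const (dissectFiveMonomial b).2 * (exprE * exprD)) * (exprE * exprF) ^ 4

lemma toSeries_dissectFiveExpr_mem_integralForms (b : ℕ) :
    (dissectFiveExpr b).toSeries ∈ integralForms 15 := by
  have hE := zsmul_mem (formE_pow_mem_integralForms 3) (dissectFiveMonomial b).1
  have hED := zsmul_mem (monomial_mem_integralForms (a := 1) (b := 1) (m := 3) rfl)
    (dissectFiveMonomial b).2
  simpa [dissectFiveExpr, formE_mul_formF] using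
    mul_eisensteinSix_pow_mem_integralForms (add_mem hE hED) 4 (m' := 15) rfl

set_option maxRecDepth 100000 in
lemma checkDissect_dissectFiveExpr : ∀ b < 4,
    checkDissect 9 7 49 5 71 (exprJ₂ ^ 3 * (exprE ^ (7 - 2 * b) * exprD ^ b))
      (exprJ₁ ^ 8 * exprJ₂ ^ 5 * dissectFiveExpr b) = true := by
  decide +kernel

lemma dissect_five_monomial_smodEq {a b : ℕ} (hab : a + 2 * b = 7) :
    dissect 7 5 (J 2 ^ 3 * (formE ^ a * formD ^ b)) ≡
      J 1 ^ 8 * J 2 ^ 5 * (dissectFiveExpr b).toSeries [SMOD sevenIdeal ^ 2] := by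
  obtain ⟨G₀, hG₀, h⟩ := exists_dissect_five_smodEq (l := 1) (e₁ := 56) (e₂ := 35) (a := 37)
    (b := 43) (a' := 6) (b' := 7) (m' := 141) (monomial_mem_integralForms hab) (by norm_num)
    (by norm_num) (by norm_num) (by norm_num) (by norm_num) (by norm_num) (by norm_num)
    (by norm_num)
  refine smodEq_mul_of_forall_dvd_coeff (J_one_pow_mul_J_two_pow_mul_invJ 8 5) h hG₀
    (mul_eisensteinSix_pow_smodEq_of_dvd (l := 1) _ (by norm_num : 7 ^ 1 ∣ 42)).symm
    (mul_eisensteinSix_pow_mem_integralForms (toSeries_dissectFiveExpr_mem_integralForms b) 42 rfl)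
    fun i hi => ?_
  have hcheck := SeriesExpr.coeff_dissect_modEq_of_checkDissect
    (checkDissect_dissectFiveExpr b (by omega)) (Nat.lt_succ_of_le hi)
  have ha : 7 - 2 * b = a := by omega
  simpa [ha] using hcheck.symm.dvd

theorem exists_dissect_five_smodEq_sq {G : ℤ⟦X⟧} (hG : G ∈ integralForms 7) :
    ∃ G' ∈ integralForms 15,
      dissect 7 5 (J 2 ^ 3 * G) ≡ J 1 ^ 8 * J 2 ^ 5 * G' [SMOD sevenIdeal ^ 2] := by
  obtain ⟨_, ⟨G', hG', rfl⟩, h⟩ := exists_smodEq_of_mem_span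
    (T := dissect 7 5 ∘ₗ LinearMap.mulLeft ℤ (J 2 ^ 3)) (I := sevenIdeal ^ 2)
    (N := (integralForms 15).map (LinearMap.mulLeft ℤ (J 1 ^ 8 * J 2 ^ 5))) (by
      rintro _ ⟨a, b, hab, rfl⟩
      exact ⟨_, ⟨_, toSeries_dissectFiveExpr_mem_integralForms b, rfl⟩,
        dissect_five_monomial_smodEq hab⟩) hG
  exact ⟨G', hG', h⟩

/-- The form `G` of weight 14 for which the first dissection of the generating function is
`7 J₂³ G` modulo `7³`. -/
def initialForm : ℤ⟦X⟧ :=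
  21 * formE ^ 7 + 42 * (formE ^ 5 * formD) + 3 * (formE ^ 3 * formD ^ 2) +
    15 * (formE * formD ^ 3)

lemma initialForm_mem_integralForms : initialForm ∈ integralForms 7 := by
  have h₀ := zsmul_mem (formE_pow_mem_integralForms 7) 21
  have h₁ := zsmul_mem (monomial_mem_integralForms (a := 5) (b := 1) (m := 7) rfl) 42
  have h₂ := zsmul_mem (monomial_mem_integralForms (a := 3) (b := 2) (m := 7) rfl) 3
  have h₃ := zsmul_mem (monomial_mem_integralForms (a := 1) (b := 3) (m := 7) rfl) 15
  simpa [initialForm] using add_mem (add_mem (add_mem h₀ h₁) h₂) h₃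

lemma dissect_two_smodEq_invJ_pow_mul :
    dissect 7 2 (invJ 1 ^ 16 * J 2 ^ 5) ≡
      dissect 7 2 (J 1 ^ 327 * J 2 ^ 5) * invJ 1 ^ 49 [SMOD sevenIdeal ^ 3] := by
  have hfrob := pow_smodEq_of_seven_pow_dvd (l := 2) (pow_seven_smodEq_expand (invJ 1)) dvd_rfl
  rw [← pow_mul, ← map_pow] at hfrob
  have h := dissect_smodEq ((SModEq.refl (J 1 ^ 327 * J 2 ^ 5)).mul hfrob) 7 2
  rw [dissect_mul_expand (by norm_num) (by norm_num)] at h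
  rwa [show J 1 ^ 327 * J 2 ^ 5 * invJ 1 ^ (7 * 7 ^ 2) = invJ 1 ^ 16 * J 2 ^ 5 by
    linear_combination (invJ 1 ^ 16 * J 2 ^ 5) * J_one_pow_mul_invJ_pow 327] at h

set_option maxRecDepth 100000 in
lemma coeff_dissect_two_modEq {i : ℕ} (hi : i < 477) :
    coeff i (dissect 7 2 (J 1 ^ 327 * J 2 ^ 5)) ≡
      coeff i (J 1 ^ 49 * (J 2 ^ 3 * (7 * initialForm))) [ZMOD 343] := by
  have hcheck : checkDissect 12 9 343 2 477
      ((((exprJ₁ ^ 5) ^ 4) ^ 4) ^ 4 * exprJ₁ ^ 7 * exprJ₂ ^ 5)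
      (exprJ₁ ^ 7 * (exprJ₁ ^ 6) ^ 7 * exprJ₂ ^ 3 * (7 * (21 * exprE ^ 7 +
        42 * (exprE ^ 5 * exprD) + 3 * (exprE ^ 3 * exprD ^ 2) + 15 * (exprE * exprD ^ 3)))) =
      true := by decide +kernel
  simpa [initialForm, ← pow_mul, ← pow_add, mul_assoc] using
    SeriesExpr.coeff_dissect_modEq_of_checkDissect hcheck hi

theorem dissect_two_smodEq_initialForm :
    dissect 7 2 (invJ 1 ^ 16 * J 2 ^ 5) ≡ J 2 ^ 3 * (7 * initialForm) [SMOD sevenIdeal ^ 3] := by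
  obtain ⟨G₀, hG₀, h⟩ := exists_dissect_two_smodEq (l := 2) (e₁ := 8 * 49) (e₂ := 5 * 49)
    (a := 257) (b := 299) (a' := 37) (b' := 43) (m' := 952) (by norm_num) (by norm_num)
    (by norm_num) (by norm_num) (by norm_num) (by norm_num) (by norm_num) (by norm_num)
    (by norm_num)
  have hmem : 7 * initialForm ∈ integralForms 7 := by
    simpa using zsmul_mem initialForm_mem_integralForms 7
  have hpow : 7 * initialForm * eisensteinSix ^ 315 ≡ 7 * initialForm [SMOD sevenIdeal ^ 3] := by
    simpa [mul_assoc] using seven_pow_smul_smodEq_iff (i := 1).2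
      (mul_eisensteinSix_pow_smodEq_of_dvd (l := 1) initialForm (by norm_num : 7 ^ 1 ∣ 315))
  refine smodEq_mul_of_forall_dvd_coeff (J_two_pow_mul_invJ_pow 3) h hG₀ hpow.symm
    (mul_eisensteinSix_pow_mem_integralForms hmem 315 rfl) fun i hi => ?_
  have hcancel : J 1 ^ 49 * (J 2 ^ 3 * (7 * initialForm)) * invJ 1 ^ 49 =
      J 2 ^ 3 * (7 * initialForm) := by
    linear_combination J 2 ^ 3 * (7 * initialForm) * J_one_pow_mul_invJ_pow 49
  have hcheck := dvd_coeff_mul_of_forall_le (n := 476) (fun j hj => by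
    rw [map_sub]
    exact (coeff_dissect_two_modEq (Nat.lt_succ_of_le hj)).symm.dvd) (invJ 1 ^ 49) i hi
  rw [sub_mul, hcancel, map_sub] at hcheck
  have hdissect := smodEq_sevenIdeal_pow_iff.1 dissect_two_smodEq_invJ_pow_mul i
  simpa using dvd_add hdissect hcheck

end HigherChecks

/-! ### Lattices stable under the dissections -/

section Filtrations

open PowerSeries Submodule

lemma isUnit_sqrtEisensteinSix : IsUnit sqrtEisensteinSix := by
  rw [← isUnit_pow_iff two_ne_zero, sqrtEisensteinSix_sq, isUnit_iff_constantCoeff,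
    constantCoeff_eisensteinSix]
  exact isUnit_one

/-- The quotients `P * G / E₆ ^ (n / 2)` of weight `2 * m - 3 * n` plus that of `P`, where `G` is an
integral form of weight `2 * m`. -/
def quotientForms (P : ℤ⟦X⟧) (n m : ℕ) : Submodule ℤ ℤ⟦X⟧ :=
  ((integralForms m).map (LinearMap.mulLeft ℤ P)).comap
    (LinearMap.mulRight ℤ (sqrtEisensteinSix ^ n))

lemma quotientForms_le_add (P : ℤ⟦X⟧) (n m j : ℕ) :
    quotientForms P n m ≤ quotientForms P (n + 2 * j) (m + 3 * j) := by
  rintro x ⟨G, hG, hx⟩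
  refine ⟨_, mul_eisensteinSix_pow_mem_integralForms hG j rfl, ?_⟩
  simp only [LinearMap.mulLeft_apply, LinearMap.mulRight_apply] at hx ⊢
  rw [← mul_assoc, hx, pow_add, pow_mul, sqrtEisensteinSix_sq, mul_assoc]

lemma mem_quotientForms_of_smul_mem {P Q : ℤ⟦X⟧} (hPQ : P * Q = 1) {n m k : ℕ} {z : ℤ⟦X⟧}
    (h : (7 : ℤ) ^ k • z ∈ quotientForms P n m) : z ∈ quotientForms P n m := by
  obtain ⟨G, hG, h⟩ := h
  simp only [LinearMap.mulLeft_apply, LinearMap.mulRight_apply] at h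
  have hG_eq : (7 : ℤ) ^ k • (Q * (z * sqrtEisensteinSix ^ n)) = G := by
    rw [← mul_smul_comm, ← smul_mul_assoc, ← h, ← mul_assoc, mul_comm Q, hPQ, one_mul]
  refine ⟨_, mem_integralForms_of_smul_mem (by positivity) (hG_eq ▸ hG), ?_⟩
  rw [LinearMap.mulLeft_apply, ← mul_assoc, hPQ, one_mul, LinearMap.mulRight_apply]

lemma sqrtEisensteinSix_pow_smodEq_one {l n : ℕ} (h : 7 ^ l ∣ n) :
    sqrtEisensteinSix ^ n ≡ 1 [SMOD sevenIdeal ^ (l + 1)] := by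
  simpa only [one_pow] using pow_smodEq_of_seven_pow_dvd sqrtEisensteinSix_smodEq_one h

lemma exists_mem_quotientForms_smodEq {P G : ℤ⟦X⟧} {l n m : ℕ} (hG : G ∈ integralForms m)
    (hn : 7 ^ l ∣ n) : ∃ y ∈ quotientForms P n m, P * G ≡ y [SMOD sevenIdeal ^ (l + 1)] := by
  obtain ⟨u, hu⟩ : ∃ u, u * sqrtEisensteinSix ^ n = 1 :=
    (isUnit_sqrtEisensteinSix.pow n).exists_left_inv
  refine ⟨P * G * u, ⟨G, hG, by simp [mul_assoc, hu]⟩, ?_⟩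
  have h := (SModEq.refl (P * G * u)).mul (sqrtEisensteinSix_pow_smodEq_one hn)
  rwa [mul_assoc _ u, hu, mul_one, mul_one] at h

lemma exists_smodEq_mul_of_mem_quotientForms {P x : ℤ⟦X⟧} {l n m r : ℕ}
    (hx : x ∈ quotientForms P n m) (hr : 7 ^ l ∣ n + 2 * r) :
    ∃ G ∈ integralForms (m + 3 * r), x ≡ P * G [SMOD sevenIdeal ^ (l + 1)] := by
  obtain ⟨G, hG, h⟩ := quotientForms_le_add P n m r hx
  refine ⟨G, hG, ?_⟩
  have hmod := (SModEq.refl x).mul (sqrtEisensteinSix_pow_smodEq_one hr)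
  simp only [LinearMap.mulLeft_apply, LinearMap.mulRight_apply] at h
  rw [mul_one, ← h] at hmod
  exact hmod.symm

-- A power of `√E₆` whose exponent is divisible by `7 ^ l` is `1` modulo `7 ^ (l + 1)`, hence may be
-- introduced or cancelled on either side.
theorem exists_mem_quotientForms_dissect_smodEq {P P' x : ℤ⟦X⟧} {s l n m n' m' : ℕ} (r : ℕ)
    (hx : x ∈ quotientForms P n m) (hn : 7 ^ l ∣ n + 2 * r) (hn' : 7 ^ l ∣ n')
    (H : ∀ G ∈ integralForms (m + 3 * r), ∃ G' ∈ integralForms m',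
      dissect 7 s (P * G) ≡ P' * G' [SMOD sevenIdeal ^ (l + 1)]) :
    ∃ y ∈ quotientForms P' n' m', dissect 7 s x ≡ y [SMOD sevenIdeal ^ (l + 1)] := by
  obtain ⟨G, hG, hxG⟩ := exists_smodEq_mul_of_mem_quotientForms hx hn
  obtain ⟨G', hG', hGG'⟩ := H G hG
  obtain ⟨y, hy, hG'y⟩ := exists_mem_quotientForms_smodEq (P := P') hG' hn'
  exact ⟨y, hy, ((dissect_smodEq hxG 7 s).trans hGG').trans hG'y⟩

/-- The spaces filtering the dissections with an odd number of steps. -/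
def oddFiltration (d : ℕ) : Submodule ℤ ℤ⟦X⟧ :=
  quotientForms (J 2 ^ 3) (2 * d + 3) (3 * d + 1)

/-- The spaces filtering the dissections with an even number of steps. -/
def evenFiltration (d : ℕ) : Submodule ℤ ℤ⟦X⟧ :=
  quotientForms (J 1 ^ 8 * J 2 ^ 5) (2 * d + 4) (3 * d)

lemma oddFiltration_mono : Monotone oddFiltration := fun d d' h => by
  obtain ⟨j, rfl⟩ := Nat.exists_eq_add_of_le h
  have hle := quotientForms_le_add (J 2 ^ 3) (2 * d + 3) (3 * d + 1) j
  rwa [show 2 * d + 3 + 2 * j = 2 * (d + j) + 3 by ring,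
    show 3 * d + 1 + 3 * j = 3 * (d + j) + 1 by ring] at hle

lemma evenFiltration_mono : Monotone evenFiltration := fun d d' h => by
  obtain ⟨j, rfl⟩ := Nat.exists_eq_add_of_le h
  have hle := quotientForms_le_add (J 1 ^ 8 * J 2 ^ 5) (2 * d + 4) (3 * d) j
  rwa [show 2 * d + 4 + 2 * j = 2 * (d + j) + 4 by ring, ← mul_add] at hle

lemma mem_oddFiltration_of_smul_mem {d k : ℕ} {z : ℤ⟦X⟧}
    (h : (7 : ℤ) ^ k • z ∈ oddFiltration d) : z ∈ oddFiltration d :=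
  mem_quotientForms_of_smul_mem (J_two_pow_mul_invJ_pow 3) h

lemma mem_evenFiltration_of_smul_mem {d k : ℕ} {z : ℤ⟦X⟧}
    (h : (7 : ℤ) ^ k • z ∈ evenFiltration d) : z ∈ evenFiltration d :=
  mem_quotientForms_of_smul_mem (J_one_pow_mul_J_two_pow_mul_invJ 8 5) h

theorem exists_mem_evenFiltration_smodEq_seven {d d' : ℕ} (hd : (d + 1) / 7 ≤ d') {x : ℤ⟦X⟧}
    (hx : x ∈ oddFiltration d) : ∃ y ∈ evenFiltration d', dissect 7 5 x ≡ y [SMOD sevenIdeal] := by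
  suffices H : ∀ G ∈ integralForms (3 * d + 1), ∃ G' ∈ integralForms (3 * d'),
      dissect 7 5 (J 2 ^ 3 * G) ≡ J 1 ^ 8 * J 2 ^ 5 * G' [SMOD sevenIdeal ^ (0 + 1)] by
    simpa only [zero_add, pow_one, evenFiltration] using
      exists_mem_quotientForms_dissect_smodEq 0 hx (one_dvd _) (one_dvd _) H
  intro G hG
  obtain ⟨R, hR, hGR⟩ := exists_dissect_five_mem_reducedForms hG
  obtain ⟨G', hG', hRG'⟩ := exists_smodEq_of_mem_reducedForms (m := 3 * d') (by omega)
    (by unfold Nat.ModEq; omega) hR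
  rw [zero_add, pow_one]
  exact ⟨G', hG', hGR.trans (SModEq.rfl.mul hRG')⟩

theorem exists_mem_oddFiltration_smodEq_seven {d d' : ℕ} (hd : (d + 5) / 7 ≤ d') {x : ℤ⟦X⟧}
    (hx : x ∈ evenFiltration d) : ∃ y ∈ oddFiltration d', dissect 7 1 x ≡ y [SMOD sevenIdeal] := by
  suffices H : ∀ G ∈ integralForms (3 * d), ∃ G' ∈ integralForms (3 * d' + 1),
      dissect 7 1 (J 1 ^ 8 * J 2 ^ 5 * G) ≡ J 2 ^ 3 * G' [SMOD sevenIdeal ^ (0 + 1)] by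
    simpa only [zero_add, pow_one, oddFiltration] using
      exists_mem_quotientForms_dissect_smodEq 0 hx (one_dvd _) (one_dvd _) H
  intro G hG
  obtain ⟨R, hR, hGR⟩ := exists_dissect_one_mem_reducedForms hG
  obtain ⟨G', hG', hRG'⟩ := exists_smodEq_of_mem_reducedForms (m := 3 * d' + 1) (by omega)
    (by unfold Nat.ModEq; omega) hR
  rw [zero_add, pow_one]
  exact ⟨G', hG', hGR.trans (SModEq.rfl.mul hRG')⟩

theorem exists_mem_evenFiltration_smodEq_sq {x : ℤ⟦X⟧} (hx : x ∈ oddFiltration 2) :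
    ∃ y ∈ evenFiltration 5, dissect 7 5 x ≡ y [SMOD sevenIdeal ^ 2] :=
  exists_mem_quotientForms_dissect_smodEq (l := 1) 0 hx (by norm_num) (by norm_num)
    fun _ hG => exists_dissect_five_smodEq_sq hG

lemma seven_pow_mod_twentyFour (l : ℕ) : 7 ^ l % 24 = 1 ∨ 7 ^ l % 24 = 7 := by
  induction l with
  | zero => simp
  | succ l ih => omega

lemma exists_exponent_odd (l : ℕ) : ∃ e a b, 7 ^ l ∣ e ∧ e ≤ 11 * 7 ^ l ∧
    24 * a = 8 * 7 ^ l + 2 * e + 18 ∧ 24 * b = 2 * (8 * 7 ^ l) + e + 21 := by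
  rcases seven_pow_mod_twentyFour l with h | h
  · exact ⟨11 * 7 ^ l, (30 * 7 ^ l + 18) / 24, (27 * 7 ^ l + 21) / 24, dvd_mul_left _ _, le_rfl,
      by omega, by omega⟩
  · exact ⟨5 * 7 ^ l, (18 * 7 ^ l + 18) / 24, (21 * 7 ^ l + 21) / 24, dvd_mul_left _ _, by omega,
      by omega, by omega⟩

lemma exists_exponent_even (l : ℕ) : ∃ e a b, 7 ^ l ∣ e ∧ e ≤ 11 * 7 ^ l ∧
    24 * a = 8 * 7 ^ l + 2 * e + 6 ∧ 24 * b = 2 * (8 * 7 ^ l) + e + 3 := by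
  rcases seven_pow_mod_twentyFour l with h | h
  · exact ⟨5 * 7 ^ l, (18 * 7 ^ l + 6) / 24, (21 * 7 ^ l + 3) / 24, dvd_mul_left _ _, by omega,
      by omega, by omega⟩
  · exact ⟨11 * 7 ^ l, (30 * 7 ^ l + 6) / 24, (27 * 7 ^ l + 3) / 24, dvd_mul_left _ _, le_rfl,
      by omega, by omega⟩

lemma exists_lt_dvd_add_two_mul {q : ℕ} (hq : Odd q) (n : ℕ) : ∃ r < q, q ∣ n + 2 * r := by
  obtain ⟨p, rfl⟩ := hq
  refine ⟨n * p % (2 * p + 1), Nat.mod_lt _ (Nat.succ_pos _), ?_⟩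
  have h : n + 2 * (n * p % (2 * p + 1)) ≡ n + 2 * (n * p) [MOD 2 * p + 1] :=
    ((Nat.mod_modEq _ _).mul_left 2).add_left n
  exact (h.dvd_iff dvd_rfl).2 ⟨n, by ring⟩

theorem exists_mem_evenFiltration_smodEq {d d' l : ℕ} (hd : 2 * d + 21 * 7 ^ l ≤ 2 * d')
    {x : ℤ⟦X⟧} (hx : x ∈ oddFiltration d) :
    ∃ y ∈ evenFiltration d', dissect 7 5 x ≡ y [SMOD sevenIdeal ^ (l + 1)] := by
  have hodd : Odd (7 ^ l) := Odd.pow (by decide)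
  have hl : l < 7 ^ l := Nat.lt_pow_self (by norm_num)
  obtain ⟨r, hr, hdvd⟩ := exists_lt_dvd_add_two_mul hodd (2 * d + 3)
  obtain ⟨e, a, b, he, hle, ha, hb⟩ := exists_exponent_odd l
  obtain ⟨d'', hd''⟩ : ∃ d'', 2 * d'' + 4 = 2 * d + 3 + 2 * r + (8 * 7 ^ l + e) :=
    ⟨(2 * d + 3 + 2 * r + (8 * 7 ^ l + e)) / 2 - 2, by omega⟩
  have hdvd' : 7 ^ l ∣ 2 * d'' + 4 := hd'' ▸ hdvd.add ((dvd_mul_left _ _).add he)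
  obtain ⟨y, hy, h⟩ := exists_mem_quotientForms_dissect_smodEq r hx hdvd hdvd' fun G hG =>
    exists_dissect_five_smodEq (a := 7 * a - 5) (b := 7 * b - 6) (m' := 3 * d'') hG
      (dvd_mul_left (7 ^ l) 8) he (by omega) (by omega) (a' := a) (b' := b) (by omega) (by omega)
      (by omega) (by omega)
  exact ⟨y, evenFiltration_mono (by omega) hy, h⟩

theorem exists_mem_oddFiltration_smodEq {d d' l : ℕ} (hd : 2 * d + 21 * 7 ^ l ≤ 2 * d')
    {x : ℤ⟦X⟧} (hx : x ∈ evenFiltration d) :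
    ∃ y ∈ oddFiltration d', dissect 7 1 x ≡ y [SMOD sevenIdeal ^ (l + 1)] := by
  have hodd : Odd (7 ^ l) := Odd.pow (by decide)
  have hl : l < 7 ^ l := Nat.lt_pow_self (by norm_num)
  obtain ⟨r, hr, hdvd⟩ := exists_lt_dvd_add_two_mul hodd (2 * d + 4)
  obtain ⟨e, a, b, he, hle, ha, hb⟩ := exists_exponent_even l
  obtain ⟨d'', hd''⟩ : ∃ d'', 2 * d'' + 3 = 2 * d + 4 + 2 * r + (8 * 7 ^ l + e) :=
    ⟨(2 * d + 4 + 2 * r + (8 * 7 ^ l + e) - 3) / 2, by omega⟩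
  have hdvd' : 7 ^ l ∣ 2 * d'' + 3 := hd'' ▸ hdvd.add ((dvd_mul_left _ _).add he)
  obtain ⟨y, hy, h⟩ := exists_mem_quotientForms_dissect_smodEq r hx hdvd hdvd' fun G hG =>
    exists_dissect_one_smodEq (a := 7 * a - 1) (b := 7 * b) (m' := 3 * d'' + 1) hG
      (dvd_mul_left (7 ^ l) 8) he (by omega) (by omega) (a' := a) (b' := b) (by omega) rfl
      (by omega) (by omega)
  exact ⟨y, oddFiltration_mono (by omega) hy, h⟩

theorem exists_mem_oddFiltration_dissect_two_smodEq {d l : ℕ} (hd : 19 * 7 ^ l ≤ 2 * d) :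
    ∃ y ∈ oddFiltration d,
      dissect 7 2 (invJ 1 ^ 16 * J 2 ^ 5) ≡ y [SMOD sevenIdeal ^ (l + 1)] := by
  have hl : l < 7 ^ l := Nat.lt_pow_self (by norm_num)
  obtain ⟨e, a, b, he, hle, ha, hb⟩ := exists_exponent_even l
  obtain ⟨d', hd'⟩ : ∃ d', 2 * d' + 3 = 8 * 7 ^ l + e := ⟨(8 * 7 ^ l + e - 3) / 2, by omega⟩
  obtain ⟨G, hG, h⟩ := exists_dissect_two_smodEq (a := 7 * a - 2) (b := 7 * b - 2)
    (m' := 3 * d' + 1) (by omega) (dvd_mul_left (7 ^ l) 8) he (by omega) (by omega) (a' := a)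
    (b' := b) (by omega) (by omega) (by omega) (by omega)
  obtain ⟨y, hy, hGy⟩ := exists_mem_quotientForms_smodEq (P := J 2 ^ 3) hG
    (hd' ▸ (dvd_mul_left _ _).add he : 7 ^ l ∣ 2 * d' + 3)
  exact ⟨y, oddFiltration_mono (by omega) hy, h.trans hGy⟩

end Filtrations

section AdicLattices

open PowerSeries Submodule

variable {L : ℕ → Submodule ℤ ℤ⟦X⟧} {N : Submodule ℤ ℤ⟦X⟧} {x y z w : ℤ⟦X⟧} {k l : ℕ}

lemma smodEq_sevenIdeal_pow_iff_exists :
    x ≡ y [SMOD sevenIdeal ^ k] ↔ ∃ w, x = y + (7 : ℤ) ^ k • w := by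
  rw [smodEq_sevenIdeal_pow_iff_dvd]
  refine exists_congr fun w => ?_
  rw [sub_eq_iff_eq_add', zsmul_eq_mul]
  norm_cast

/-- The series that are approximated modulo `7 ^ (l + 1)` by elements of `L l`, for every `l`. -/
def adicLattice (L : ℕ → Submodule ℤ ℤ⟦X⟧) : Submodule ℤ ℤ⟦X⟧ where
  carrier := {x | ∀ l, ∃ y ∈ L l, x ≡ y [SMOD sevenIdeal ^ (l + 1)]}
  zero_mem' _ := ⟨0, zero_mem _, SModEq.rfl⟩
  add_mem' hx hx' l :=
    let ⟨y, hy, hxy⟩ := hx l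
    let ⟨y', hy', hxy'⟩ := hx' l
    ⟨y + y', add_mem hy hy', hxy.add hxy'⟩
  smul_mem' c _ hx l :=
    let ⟨y, hy, hxy⟩ := hx l
    ⟨c • y, smul_mem _ c hy, hxy.zsmul c⟩

lemma le_adicLattice (hN : ∀ l, N ≤ L l) : N ≤ adicLattice L :=
  fun x hx l => ⟨x, hN l hx, SModEq.rfl⟩

lemma exists_mem_smodEq_of_seven_smul_smodEq (hsat : ∀ z, (7 : ℤ) ^ 1 • z ∈ N → z ∈ N)
    (hw : w ∈ N) (h : (7 : ℤ) • z ≡ w [SMOD sevenIdeal ^ (l + 1)]) :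
    ∃ v ∈ N, z ≡ v [SMOD sevenIdeal ^ l] := by
  obtain ⟨u, rfl⟩ := smodEq_sevenIdeal_pow_iff_exists.1 h.symm
  refine ⟨z + (7 : ℤ) ^ l • u, hsat _ ?_, (smodEq_sevenIdeal_pow_iff_exists.2 ⟨u, rfl⟩).symm⟩
  rwa [smul_add, smul_smul, ← pow_add, pow_one, add_comm 1 l]

-- Successive approximations of `x` differ by `7 ^ k` times an element of `L k`, whose dissection is
-- only needed modulo the complementary power of `7`.
theorem exists_mem_dissect_smodEq_of_mem_adicLattice (hmono : Monotone L)
    (hsat : ∀ l k z, (7 : ℤ) ^ k • z ∈ L l → z ∈ L l) {s : ℕ}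
    (H : ∀ i ≤ l, ∀ y ∈ L i, ∃ z ∈ N, dissect 7 s y ≡ z [SMOD sevenIdeal ^ (l + 1 - i)])
    (hx : x ∈ adicLattice L) : ∃ z ∈ N, dissect 7 s x ≡ z [SMOD sevenIdeal ^ (l + 1)] := by
  have approximation (k : ℕ) (hk : k ≤ l) : ∀ y ∈ L k, x ≡ y [SMOD sevenIdeal ^ (k + 1)] →
      ∃ z ∈ N, dissect 7 s y ≡ z [SMOD sevenIdeal ^ (l + 1)] := by
    induction k with
    | zero => exact fun y hy _ => H 0 hk y hy
    | succ k ih =>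
      intro y hy hxy
      obtain ⟨y', hy', hxy'⟩ := hx k
      obtain ⟨w, rfl⟩ := smodEq_sevenIdeal_pow_iff_exists.1
        ((smodEq_sevenIdeal_mono (by omega) hxy).symm.trans hxy')
      have hw : w ∈ L (k + 1) :=
        hsat _ _ _ ((add_mem_cancel_left (hmono k.le_succ hy')).1 hy)
      obtain ⟨z, hz, hyz⟩ := ih (by omega) y' hy' hxy'
      obtain ⟨v, hv, hwv⟩ := H (k + 1) hk w hw
      refine ⟨z + (7 : ℤ) ^ (k + 1) • v, add_mem hz (smul_mem _ _ hv), ?_⟩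
      rw [map_add, map_smul]
      have hwv' := seven_pow_smul_smodEq_iff (i := k + 1).2 hwv
      rw [Nat.sub_add_cancel (by omega)] at hwv'
      exact hyz.add hwv'
  obtain ⟨y, hy, hxy⟩ := hx l
  obtain ⟨z, hz, hyz⟩ := approximation l le_rfl y hy hxy
  exact ⟨z, hz, (dissect_smodEq hxy 7 s).trans hyz⟩

/-- The filtration degree allowed modulo `7 ^ (l + 1)` after an odd number of dissections. From
`l = 2` on there is room for the loss `21 / 2 * 7 ^ l` of a dissection; for `l ≤ 1` the bounds come
from the sharper estimates modulo `7` and `49`. -/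
def oddBound : ℕ → ℕ
  | 0 => 2
  | 1 => 100
  | l + 2 => 68 * 7 ^ (l + 2)

/-- The filtration degree allowed modulo `7 ^ (l + 1)` after an even number of dissections, chosen
like `oddBound`. -/
def evenBound : ℕ → ℕ
  | 0 => 15
  | l + 1 => 76 * 7 ^ (l + 1)

lemma oddBound_mono : Monotone oddBound := by
  refine monotone_nat_of_le_succ fun l => ?_
  match l with
  | 0 | 1 => decide
  | l + 2 => simp only [oddBound, pow_succ]; omega

lemma evenBound_mono : Monotone evenBound := by
  refine monotone_nat_of_le_succ fun l => ?_
  match l with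
  | 0 => decide
  | l + 1 => simp only [evenBound, pow_succ]; omega

lemma evenBound_add_five_div_le (l : ℕ) : (evenBound l + 5) / 7 ≤ oddBound l := by
  match l with
  | 0 | 1 => decide
  | l + 2 => simp only [evenBound, oddBound, pow_succ]; omega

lemma oddBound_succ_add_one_div_le (l : ℕ) : (oddBound (l + 1) + 1) / 7 ≤ evenBound l := by
  match l with
  | 0 => decide
  | l + 1 => simp only [evenBound, oddBound, pow_succ]; omega

lemma two_mul_evenBound_add_le {i : ℕ} (h : i < l) :
    2 * evenBound i + 21 * 7 ^ (l - i) ≤ 2 * oddBound l := by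
  match i, l, h with
  | 0, 1, _ => decide
  | 0, l + 2, _ =>
    have : 0 < 7 ^ l := by positivity
    simp only [evenBound, oddBound, Nat.sub_zero, pow_succ]
    omega
  | i + 1, l + 2, h =>
    have hi : 7 ^ (i + 1) ≤ 7 ^ (l + 1) := Nat.pow_le_pow_right (by norm_num) (by omega)
    have hli : 7 ^ (l + 2 - (i + 1)) ≤ 7 ^ (l + 1) := Nat.pow_le_pow_right (by norm_num) (by omega)
    simp only [evenBound, oddBound, pow_succ] at hi hli ⊢
    omega

lemma two_mul_oddBound_add_le {i : ℕ} (h : i ≤ l + 1) :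
    2 * oddBound i + 21 * 7 ^ (l + 2 - i) ≤ 2 * evenBound (l + 1) := by
  have hl : 0 < 7 ^ l := by positivity
  match i, h with
  | 0, _ | 1, _ =>
    simp only [evenBound, oddBound, Nat.sub_zero, Nat.add_one_sub_one, pow_succ]
    omega
  | i + 2, h =>
    have hi : 7 ^ (i + 2) ≤ 7 ^ (l + 1) := Nat.pow_le_pow_right (by norm_num) h
    have hli : 7 ^ (l + 2 - (i + 2)) ≤ 7 ^ l := Nat.pow_le_pow_right (by norm_num) (by omega)
    simp only [evenBound, oddBound, pow_succ] at hi hli ⊢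
    omega

/-- The lattice containing the dissections with an odd number of steps, up to a factor `7`. -/
def oddLattice : Submodule ℤ ℤ⟦X⟧ := adicLattice (oddFiltration ∘ oddBound)

/-- The lattice containing the dissections with an even number of steps, up to a factor `7`. -/
def evenLattice : Submodule ℤ ℤ⟦X⟧ := adicLattice (evenFiltration ∘ evenBound)

lemma evenFiltration_zero_le_evenLattice : evenFiltration 0 ≤ evenLattice :=
  le_adicLattice fun _ => evenFiltration_mono (Nat.zero_le _)

lemma exists_evenFiltration_zero_le_span : ∃ x, evenFiltration 0 ≤ ℤ ∙ x := by
  obtain ⟨u, hu⟩ := (isUnit_sqrtEisensteinSix.pow 4).exists_right_inv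
  refine ⟨J 1 ^ 8 * J 2 ^ 5 * u, ?_⟩
  rintro x ⟨G, hG, hx⟩
  obtain ⟨c, rfl⟩ := exists_eq_smul_formE_pow_of_lt_two (by norm_num) hG
  refine mem_span_singleton.2 ⟨c, ?_⟩
  simp only [LinearMap.mulLeft_apply, LinearMap.mulRight_apply, mul_zero, pow_zero, zero_add,
    mul_smul_comm, mul_one] at hx
  rw [← smul_mul_assoc, hx, mul_assoc, hu, mul_one]

theorem dissect_one_mem_oddLattice (hx : x ∈ evenLattice) : dissect 7 1 x ∈ oddLattice := by
  intro l
  refine exists_mem_dissect_smodEq_of_mem_adicLattice (evenFiltration_mono.comp evenBound_mono)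
    (fun _ _ _ => mem_evenFiltration_of_smul_mem) (fun i hi y hy => ?_) hx
  obtain rfl | hlt := hi.eq_or_lt
  · rw [Nat.add_sub_cancel_left, pow_one]
    exact exists_mem_oddFiltration_smodEq_seven (evenBound_add_five_div_le i) hy
  · rw [Nat.sub_add_comm hi]
    exact exists_mem_oddFiltration_smodEq (two_mul_evenBound_add_le hlt) hy

lemma exists_mem_evenFiltration_dissect_five_smodEq (hx : x ∈ oddLattice) (l : ℕ) :
    ∃ z ∈ evenFiltration (evenBound l), dissect 7 5 x ≡ z [SMOD sevenIdeal ^ (l + 1 + 1)] := by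
  refine exists_mem_dissect_smodEq_of_mem_adicLattice (oddFiltration_mono.comp oddBound_mono)
    (fun _ _ _ => mem_oddFiltration_of_smul_mem) (fun i hi y hy => ?_) hx
  obtain rfl | hlt := hi.eq_or_lt
  · rw [Nat.add_sub_cancel_left, pow_one]
    exact exists_mem_evenFiltration_smodEq_seven (oddBound_succ_add_one_div_le l) hy
  match l with
  | 0 =>
    obtain rfl : i = 0 := by omega
    obtain ⟨z, hz, hyz⟩ := exists_mem_evenFiltration_smodEq_sq hy
    exact ⟨z, evenFiltration_mono (by decide) hz, hyz⟩
  | l + 1 =>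
    rw [Nat.sub_add_comm hi]
    exact exists_mem_evenFiltration_smodEq (two_mul_oddBound_add_le (by omega)) hy

lemma exists_mem_evenFiltration_zero_dissect_five_smodEq (hx : x ∈ oddLattice) :
    ∃ y ∈ evenFiltration 0, dissect 7 5 x ≡ y [SMOD sevenIdeal] := by
  obtain ⟨w, hw, hxw⟩ := hx 0
  obtain ⟨y, hy, hwy⟩ := exists_mem_evenFiltration_smodEq_seven (d' := 0) (by decide) hw
  have h := dissect_smodEq hxw 7 5
  rw [zero_add, pow_one] at h
  exact ⟨y, hy, h.trans hwy⟩

theorem exists_dissect_five_eq_add_seven_smul (hx : x ∈ oddLattice) :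
    ∃ y ∈ evenFiltration 0, ∃ z ∈ evenLattice, dissect 7 5 x = y + (7 : ℤ) • z := by
  obtain ⟨y, hy, hxy⟩ := exists_mem_evenFiltration_zero_dissect_five_smodEq hx
  rw [← pow_one sevenIdeal] at hxy
  obtain ⟨z, hz⟩ := smodEq_sevenIdeal_pow_iff_exists.1 hxy
  rw [pow_one] at hz
  refine ⟨y, hy, z, fun l => ?_, hz⟩
  obtain ⟨w, hw, hxw⟩ := exists_mem_evenFiltration_dissect_five_smodEq hx l
  refine exists_mem_smodEq_of_seven_smul_smodEq (fun _ => mem_evenFiltration_of_smul_mem)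
    (sub_mem hw (evenFiltration_mono (Nat.zero_le _) hy)) ?_
  rw [eq_sub_of_add_eq' hz.symm]
  exact hxw.sub SModEq.rfl

lemma exists_mem_oddFiltration_two_smodEq_initialForm :
    ∃ w ∈ oddFiltration 2, J 2 ^ 3 * initialForm ≡ w [SMOD sevenIdeal ^ 2] :=
  exists_mem_quotientForms_smodEq (l := 1) initialForm_mem_integralForms (by norm_num)

theorem exists_dissect_two_eq_seven_smul :
    ∃ y ∈ oddLattice, dissect 7 2 (invJ 1 ^ 16 * J 2 ^ 5) = (7 : ℤ) • y := by
  obtain ⟨u, hu⟩ := smodEq_sevenIdeal_pow_iff_exists.1 dissect_two_smodEq_initialForm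
  set y := J 2 ^ 3 * initialForm + (7 : ℤ) ^ 2 • u with hy_def
  have hy : dissect 7 2 (invJ 1 ^ 16 * J 2 ^ 5) = (7 : ℤ) • y := by
    rw [hu, hy_def, smul_add, smul_smul, ← pow_succ', ← mul_smul_comm, zsmul_eq_mul initialForm]
    norm_cast
  refine ⟨y, fun l => ?_, hy⟩
  match l with
  | 0 | 1 =>
    obtain ⟨w, hw, hGw⟩ := exists_mem_oddFiltration_two_smodEq_initialForm
    have hyG := smodEq_sevenIdeal_pow_iff_exists.2 ⟨u, hy_def⟩
    exact ⟨w, oddFiltration_mono (by decide) hw,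
      smodEq_sevenIdeal_mono (by norm_num) (hyG.trans hGw)⟩
  | l + 2 =>
    obtain ⟨w, hw, hyw⟩ := exists_mem_oddFiltration_dissect_two_smodEq
      (d := oddBound (l + 2)) (l := l + 3) (by simp only [oddBound, pow_succ]; omega)
    rw [hy] at hyw
    exact exists_mem_smodEq_of_seven_smul_smodEq (fun _ => mem_oddFiltration_of_smul_mem) hw hyw

end AdicLattices

section Wedges

open PowerSeries Submodule
open scoped Pointwise

/-- The `2 × 2` minors of the coefficient sequences of two power series. -/
def wedge : ℤ⟦X⟧ →ₗ[ℤ] ℤ⟦X⟧ →ₗ[ℤ] ℕ × ℕ → ℤ :=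
  LinearMap.mk₂ ℤ (fun y z ij => coeff ij.1 y * coeff ij.2 z - coeff ij.2 y * coeff ij.1 z)
    (fun _ _ _ => by ext; simp only [map_add, Pi.add_apply]; ring)
    (fun _ _ _ => by ext; simp only [map_zsmul, Pi.smul_apply, smul_eq_mul]; ring)
    (fun _ _ _ => by ext; simp only [map_add, Pi.add_apply]; ring)
    (fun _ _ _ => by ext; simp only [map_zsmul, Pi.smul_apply, smul_eq_mul]; ring)

lemma wedge_apply (y z : ℤ⟦X⟧) (i j : ℕ) :
    wedge y z (i, j) = coeff i y * coeff j z - coeff j y * coeff i z := rfl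

lemma wedge_self (x : ℤ⟦X⟧) : wedge x x = 0 := by
  ext ⟨i, j⟩
  rw [wedge_apply, Pi.zero_apply]
  ring

lemma wedge_eq_zero_of_mem_span_singleton {x y z : ℤ⟦X⟧} (hy : y ∈ ℤ ∙ x) (hz : z ∈ ℤ ∙ x) :
    wedge y z = 0 := by
  obtain ⟨a, rfl⟩ := mem_span_singleton.1 hy
  obtain ⟨b, rfl⟩ := mem_span_singleton.1 hz
  rw [map_smul, map_smul, LinearMap.smul_apply, wedge_self, smul_zero, smul_zero]

/-- The `ℤ`-span of the `2 × 2` minors of pairs of elements of `M`. -/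
def wedgeSpan (M : Submodule ℤ ℤ⟦X⟧) : Submodule ℤ (ℕ × ℕ → ℤ) := map₂ wedge M M

/-- The action of `dissect 7 s` on minors. -/
def dissectPair (s : ℕ) : (ℕ × ℕ → ℤ) →ₗ[ℤ] ℕ × ℕ → ℤ :=
  LinearMap.funLeft ℤ ℤ (Prod.map (7 * · + s) (7 * · + s))

lemma dissectPair_wedge (s : ℕ) (y z : ℤ⟦X⟧) :
    dissectPair s (wedge y z) = wedge (dissect 7 s y) (dissect 7 s z) := by
  ext ⟨i, j⟩
  simp only [dissectPair, LinearMap.funLeft_apply, Prod.map_apply, wedge_apply, coeff_dissect]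

theorem map_dissectPair_one_le :
    (wedgeSpan evenLattice).map (dissectPair 1) ≤ wedgeSpan oddLattice := by
  refine map_le_iff_le_comap.2 (map₂_le.2 fun y hy z hz => ?_)
  rw [mem_comap, dissectPair_wedge]
  exact apply_mem_map₂ _ (dissect_one_mem_oddLattice hy) (dissect_one_mem_oddLattice hz)

-- Modulo `7` all `dissect 7 5 x` with `x` in the odd lattice lie on one line, so that their minors
-- vanish modulo `7`.
theorem map_dissectPair_five_le :
    (wedgeSpan oddLattice).map (dissectPair 5) ≤ (7 : ℤ) • wedgeSpan evenLattice := by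
  refine map_le_iff_le_comap.2 (map₂_le.2 fun y hy z hz => ?_)
  obtain ⟨y₀, hy₀, y', hy', hy_eq⟩ := exists_dissect_five_eq_add_seven_smul hy
  obtain ⟨z₀, hz₀, z', hz', hz_eq⟩ := exists_dissect_five_eq_add_seven_smul hz
  obtain ⟨x, hx⟩ := exists_evenFiltration_zero_le_span
  have hzero : wedge y₀ z₀ = 0 := wedge_eq_zero_of_mem_span_singleton (hx hy₀) (hx hz₀)
  have hwedge : wedge (dissect 7 5 y) (dissect 7 5 z) =
      (7 : ℤ) • (wedge y₀ z' + wedge y' (z₀ + (7 : ℤ) • z')) := by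
    rw [hy_eq, hz_eq, wedge.map_add₂, map_add (wedge y₀), hzero, zero_add, map_smul,
      wedge.map_smul₂, smul_add]
  rw [mem_comap, dissectPair_wedge, hwedge]
  have hle := evenFiltration_zero_le_evenLattice
  exact smul_mem_pointwise_smul _ _ _ (add_mem (apply_mem_map₂ _ (hle hy₀) hz')
    (apply_mem_map₂ _ hy' (add_mem (hle hz₀) (smul_mem _ _ hz'))))

/-- Two consecutive dissection steps, from `7 ^ α * n + lam α` to `7 ^ (α + 2) * n + lam (α + 2)`
for odd `α`. -/
def dissectTwice : ℤ⟦X⟧ →+ ℤ⟦X⟧ :=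
  (dissect 7 1).toAddMonoidHom.comp (dissect 7 5).toAddMonoidHom

lemma dissectTwice_apply (x : ℤ⟦X⟧) : dissectTwice x = dissect 7 1 (dissect 7 5 x) := rfl

lemma dissectTwice_mem_oddLattice {x : ℤ⟦X⟧} (hx : x ∈ oddLattice) :
    dissectTwice x ∈ oddLattice := by
  obtain ⟨y, hy, z, hz, h⟩ := exists_dissect_five_eq_add_seven_smul hx
  rw [dissectTwice_apply, h]
  exact dissect_one_mem_oddLattice
    (add_mem (evenFiltration_zero_le_evenLattice hy) (smul_mem _ _ hz))

lemma dissectPair_five_mem {f : ℕ × ℕ → ℤ} {c : ℤ} (hf : f ∈ c • wedgeSpan oddLattice) :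
    dissectPair 5 f ∈ (c * 7) • wedgeSpan evenLattice := by
  obtain ⟨g, hg, rfl⟩ := hf
  rw [mul_smul]
  exact smul_mem_pointwise_smul _ c _ (map_dissectPair_five_le (mem_map_of_mem hg))

lemma dissectPair_one_mem {f : ℕ × ℕ → ℤ} {c : ℤ} (hf : f ∈ c • wedgeSpan evenLattice) :
    dissectPair 1 f ∈ c • wedgeSpan oddLattice := by
  obtain ⟨g, hg, rfl⟩ := hf
  exact smul_mem_pointwise_smul _ c _ (map_dissectPair_one_le (mem_map_of_mem hg))

theorem wedge_iterate_dissectTwice_mem {y : ℤ⟦X⟧} (hy : y ∈ oddLattice) (k : ℕ) :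
    wedge (dissectTwice^[k + 1] y) (dissectTwice^[k] y) ∈ (7 : ℤ) ^ k • wedgeSpan oddLattice := by
  induction k with
  | zero =>
    rw [pow_zero, one_smul]
    exact apply_mem_map₂ _ (dissectTwice_mem_oddLattice hy) hy
  | succ k ih =>
    have h := dissectPair_one_mem (dissectPair_five_mem ih)
    rw [← pow_succ, dissectPair_wedge, dissectPair_wedge] at h
    simpa only [Function.iterate_succ_apply', dissectTwice_apply] using h

lemma coeff_mul_coeff_modEq_of_wedge_mem {x₁ x₂ y₁ y₂ : ℤ⟦X⟧} {M : Submodule ℤ ℤ⟦X⟧} {k : ℕ}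
    (h : wedge y₁ y₂ ∈ (7 : ℤ) ^ k • wedgeSpan M) (h₁ : x₁ = (7 : ℤ) • y₁)
    (h₂ : x₂ = (7 : ℤ) • y₂) (i j : ℕ) :
    coeff i x₁ * coeff j x₂ ≡ coeff i x₂ * coeff j x₁ [ZMOD 7 ^ (k + 2)] := by
  obtain ⟨f, -, hf⟩ := h
  have hij : (7 : ℤ) ^ k * f (i, j) = coeff i y₁ * coeff j y₂ - coeff j y₁ * coeff i y₂ :=
    congrFun hf (i, j)
  refine (Int.modEq_iff_dvd.2 ⟨f (i, j), ?_⟩).symm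
  simp only [h₁, h₂, map_zsmul, smul_eq_mul]
  linear_combination -49 * hij

end Wedges

section Coefficients

open PowerSeries

lemma seven_pow_mod_four (k : ℕ) : 7 ^ (2 * k + 1) % 4 = 3 ∧ 7 ^ (2 * k + 2) % 4 = 1 := by
  induction k with
  | zero => decide
  | succ k ih => grind

variable (d : ℕ → ℤ) (k n : ℕ)

lemma lam_two_mul_add_two : lam (2 * k + 2) = 5 * 7 ^ (2 * k + 1) + lam (2 * k + 1) := by
  obtain ⟨h, -⟩ := seven_pow_mod_four k
  rw [lam, lam, if_neg (by omega), if_pos (by omega), pow_succ 7 (2 * k + 1)]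
  omega

lemma lam_two_mul_add_three : lam (2 * k + 3) = 7 ^ (2 * k + 2) + lam (2 * k + 2) := by
  obtain ⟨-, h⟩ := seven_pow_mod_four k
  rw [lam, lam, if_pos (by omega), if_neg (by omega), pow_succ 7 (2 * k + 2)]
  omega

lemma seven_pow_mul_add_lam_even :
    7 ^ (2 * k + 1) * (7 * n + 5) + lam (2 * k + 1) = 7 ^ (2 * k + 2) * n + lam (2 * k + 2) := by
  rw [lam_two_mul_add_two]
  ring

lemma seven_pow_mul_add_lam_odd :
    7 ^ (2 * k + 2) * (7 * n + 1) + lam (2 * k + 2) = 7 ^ (2 * k + 3) * n + lam (2 * k + 3) := by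
  rw [lam_two_mul_add_three]
  ring

lemma coeff_iterate_dissectTwice : coeff n (dissectTwice^[k] (dissect 7 2 (mk d))) =
    d (7 ^ (2 * k + 1) * n + lam (2 * k + 1)) := by
  induction k generalizing n with
  | zero => rw [Function.iterate_zero_apply, coeff_dissect, coeff_mk]; rfl
  | succ k ih =>
    rw [Function.iterate_succ_apply', dissectTwice_apply, coeff_dissect, coeff_dissect, ih,
      seven_pow_mul_add_lam_even, seven_pow_mul_add_lam_odd]
    rfl

lemma coeff_dissect_five_iterate_dissectTwice :
    coeff n (dissect 7 5 (dissectTwice^[k] (dissect 7 2 (mk d)))) =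
      d (7 ^ (2 * k + 2) * n + lam (2 * k + 2)) := by
  rw [coeff_dissect, coeff_iterate_dissectTwice, seven_pow_mul_add_lam_even]

variable {d} in
lemma mk_eq_invJ_pow_mul_J_pow (hd : mk d * J 1 ^ 16 = J 2 ^ 5) : mk d = invJ 1 ^ 16 * J 2 ^ 5 := by
  rw [← hd, mul_comm, mul_assoc, J_one_pow_mul_invJ_pow, mul_one]

end Coefficients

/-- for all α ≥ 1 and n ≥ 0,
`d_5(7^{α+2}·n + λ_{α+2})·d_5(λ_α) ≡ d_5(7^α·n + λ_α)·d_5(λ_{α+2}) (mod 7^{⌊α/2⌋+2})`,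
where `d_5` is defined by `∑ d_5(n) qⁿ = J_2^5 / J_1^{16}`. -/
theorem stmt1 (d5 : ℕ → ℤ)
    (hd : PowerSeries.mk d5 * (J 1) ^ 16 = (J 2) ^ 5)
    (α : ℕ) (hα : 1 ≤ α) (n : ℕ) :
    Int.ModEq ((7 : ℤ) ^ (α / 2 + 2))
      (d5 (7 ^ (α + 2) * n + lam (α + 2)) * d5 (lam α))
      (d5 (7 ^ α * n + lam α) * d5 (lam (α + 2))) := by
  obtain ⟨y, hy, hinit⟩ := exists_dissect_two_eq_seven_smul
  rw [← mk_eq_invJ_pow_mul_J_pow hd] at hinit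
  have iterate_eq (k : ℕ) : dissectTwice^[k] (dissect 7 2 (PowerSeries.mk d5)) =
      (7 : ℤ) • dissectTwice^[k] y := by
    rw [hinit, iterate_map_zsmul]
  have dissect_eq (k : ℕ) : dissect 7 5 (dissectTwice^[k] (dissect 7 2 (PowerSeries.mk d5))) =
      (7 : ℤ) • dissect 7 5 (dissectTwice^[k] y) := by
    rw [iterate_eq, map_zsmul]
  obtain ⟨k, rfl | rfl⟩ : ∃ k, α = 2 * k + 1 ∨ α = 2 * k + 2 := ⟨(α - 1) / 2, by omega⟩
  · have h := coeff_mul_coeff_modEq_of_wedge_mem (wedge_iterate_dissectTwice_mem hy k)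
      (iterate_eq (k + 1)) (iterate_eq k) n 0
    simp only [coeff_iterate_dissectTwice, mul_zero, zero_add] at h
    rwa [show (2 * k + 1) / 2 = k by omega]
  · have hwedge := dissectPair_five_mem (wedge_iterate_dissectTwice_mem hy k)
    rw [dissectPair_wedge, ← pow_succ] at hwedge
    have h := coeff_mul_coeff_modEq_of_wedge_mem hwedge (dissect_eq (k + 1)) (dissect_eq k) n 0
    simp only [coeff_dissect_five_iterate_dissectTwice, mul_zero, zero_add] at h
    rwa [show (2 * k + 2) / 2 = k + 1 by omega]
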